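/- arXiv:1804.09419 — 5 statements merged into one kernel-verified Lean document; each statement's English description precedes it below -/
import Mathlib

section
/- Let α,β,q1,q2>0 with α>β, 1<p<N/α, q1+q2>p−1, q2<N(p−1)/(N−βp), and (αpq1+βpq2)/(q1+q2)<N. Set γ=(αq1+βq2)/(q1+q2). Then there exist constants, depending only on N,α,β,p,q1,q2 (and not on R), such that for every R>0 and every nonnegative Radon measure ω on ℝ^N whose support has diameter at most R, the three quantities ∫_{ℝ^N} (M^{2R}_{γp}[ω](x))^{(q1+q2)/(p−1)} dx, ∫_{ℝ^N} (W^{2R}_{γ,p}[ω](x))^{q1+q2} dx, and ∫_{ℝ^N} (W^{2R}_{α,p}[ω](x))^{q1}(W^{2R}_{β,p}[ω](x))^{q2} dx are pairwise comparable (each is bounded above by a constant times each other). -/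
open MeasureTheory Metric Set Filter Bornology
open scoped ENNReal NNReal Topology RealInnerProductSpace

noncomputable section

/-- Euclidean space `ℝ^N`. -/
abbrev Euc (N : ℕ) : Type := EuclideanSpace ℝ (Fin N)

/-- The `R`-truncated Wolff potential `W^R_{α,p}[μ](x)`; `R = ⊤` gives the full
Wolff potential `W_{α,p}[μ]`. -/
def wolff {N : ℕ} (α p : ℝ) (R : ℝ≥0∞) (μ : Measure (Euc N)) (x : Euc N) : ℝ≥0∞ :=
  ∫⁻ ρ in {ρ : ℝ | 0 < ρ ∧ ENNReal.ofReal ρ < R},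
    (μ (ball x ρ) / ENNReal.ofReal (ρ ^ ((N : ℝ) - α * p))) ^ (1 / (p - 1)) /
      ENNReal.ofReal ρ

/-- The `R`-truncated Riesz potential `I^R_β[μ](x)`; `R = ⊤` gives `I_β[μ]`. -/
def rieszPot {N : ℕ} (β : ℝ) (R : ℝ≥0∞) (μ : Measure (Euc N)) (x : Euc N) : ℝ≥0∞ :=
  ∫⁻ ρ in {ρ : ℝ | 0 < ρ ∧ ENNReal.ofReal ρ < R},
    μ (ball x ρ) / ENNReal.ofReal (ρ ^ ((N : ℝ) - β)) / ENNReal.ofReal ρ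

/-- The Riesz capacity `Cap_{I_α,p}`. -/
def rieszCap (N : ℕ) (α p : ℝ) (O : Set (Euc N)) : ℝ≥0∞ :=
  ⨅ (g : Euc N → ℝ≥0∞) (_ : Measurable g)
    (_ : ∀ x ∈ O, 1 ≤ rieszPot α ⊤ (volume.withDensity g) x),
    ∫⁻ x, g x ^ p

/-- The Bessel kernel of order `α` (up to the normalizing constant `c(N,α)`). -/
def besselKernel (N : ℕ) (α : ℝ) (x : Euc N) : ℝ :=
  ∫ t in Ioi (0 : ℝ),
    Real.exp (-(Real.pi * ‖x‖ ^ 2 / t) - t / (4 * Real.pi)) * t ^ ((α - (N : ℝ)) / 2) / t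

/-- The Bessel capacity `Cap_{G_α,p}`. -/
def besselCap (N : ℕ) (α p : ℝ) (O : Set (Euc N)) : ℝ≥0∞ :=
  ⨅ (g : Euc N → ℝ≥0∞) (_ : Measurable g)
    (_ : ∀ x ∈ O, 1 ≤ ∫⁻ y, ENNReal.ofReal (besselKernel N α (x - y)) * g y),
    ∫⁻ x, g x ^ p

/-- The `R`-truncated fractional maximal function `M^R_γ[μ]`. -/
def fracMax {N : ℕ} (γ : ℝ) (R : ℝ≥0∞) (μ : Measure (Euc N)) (x : Euc N) : ℝ≥0∞ :=
  ⨆ (t : ℝ) (_ : 0 < t) (_ : ENNReal.ofReal t < R),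
    μ (ball x t) / ENNReal.ofReal (t ^ ((N : ℝ) - γ))

/-- The potential `L^R_{α,s}[μ]`. -/
def Lpot {N : ℕ} (α s : ℝ) (R : ℝ≥0∞) (μ : Measure (Euc N)) (x : Euc N) : ℝ≥0∞ :=
  ∫⁻ t in {t : ℝ | 0 < t ∧ ENNReal.ofReal t < R},
    (μ (ball x t) / ENNReal.ofReal (t ^ ((N : ℝ) - α))) ^ s / ENNReal.ofReal t

/-- A mollifier: smooth, nonnegative, supported in the unit ball, of total mass one. -/
def IsMollifier {N : ℕ} (φ : Euc N → ℝ) : Prop :=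
  ContDiff ℝ (⊤ : ℕ∞) φ ∧ (∀ x, 0 ≤ φ x) ∧ tsupport φ ⊆ ball 0 1 ∧ (∫ x, φ x) = 1

/-- The measure with density `φ_n * μ`, where `φ_n(x) = n^N φ(n x)`. -/
def mollified {N : ℕ} (φ : Euc N → ℝ) (n : ℕ) (μ : Measure (Euc N)) : Measure (Euc N) :=
  volume.withDensity fun x =>
    ENNReal.ofReal (∫ y, (n : ℝ) ^ (N : ℕ) * φ ((n : ℝ) • (x - y)) ∂μ)

section BallAverages

variable {N : ℕ} {ω : Measure (Euc N)}

theorem measurable_measure_ball [SFinite ω] (ρ : ℝ) : Measurable fun x => ω (ball x ρ) := by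
  have h : MeasurableSet {z : Euc N × Euc N | dist z.2 z.1 < ρ} :=
    measurableSet_lt (by fun_prop) measurable_const
  exact measurable_measure_prodMk_left h

theorem volume_ball_eq {r : ℝ} (hr : 0 < r) (x : Euc N) :
    volume (ball x r) = ENNReal.ofReal (r ^ (N : ℝ)) * volume (ball (0 : Euc N) 1) := by
  rw [Measure.addHaar_ball_of_pos _ _ hr, finrank_euclideanSpace_fin, Real.rpow_natCast]

theorem volume_ball_ratio {ρ r : ℝ} (hρ : 0 < ρ) (hr : 0 < r) (x y : Euc N) :
    volume (ball x ρ) = ENNReal.ofReal ((ρ / r) ^ (N : ℝ)) * volume (ball y r) := by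
  rw [volume_ball_eq hρ, volume_ball_eq hr, ← mul_assoc, ← ENNReal.ofReal_mul (by positivity),
    ← Real.mul_rpow (by positivity) hr.le, div_mul_cancel₀ _ hr.ne']

/-- Double integration over pairs of points at distance less than `r`. -/
theorem lintegral_lintegral_ball_swap {μ ν : Measure (Euc N)} [SFinite μ] [SFinite ν] (r : ℝ)
    {F : Euc N → Euc N → ℝ≥0∞} (hF : Measurable (Function.uncurry F)) :
    ∫⁻ x, ∫⁻ y in ball x r, F x y ∂ν ∂μ = ∫⁻ y, ∫⁻ x in ball y r, F x y ∂μ ∂ν := by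
  have hs : MeasurableSet {z : Euc N × Euc N | dist z.2 z.1 < r} :=
    measurableSet_lt (by fun_prop) measurable_const
  have h1 (x : Euc N) : ∫⁻ y in ball x r, F x y ∂ν =
      ∫⁻ y, ({z : Euc N × Euc N | dist z.2 z.1 < r}.indicator (Function.uncurry F)) (x, y) ∂ν := by
    rw [← lintegral_indicator measurableSet_ball]
    rfl
  have h2 (y : Euc N) : ∫⁻ x in ball y r, F x y ∂μ =
      ∫⁻ x, ({z : Euc N × Euc N | dist z.2 z.1 < r}.indicator (Function.uncurry F)) (x, y) ∂μ := by
    rw [← lintegral_indicator measurableSet_ball]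
    refine lintegral_congr fun x => ?_
    simp only [indicator, mem_ball, mem_ofPred_eq, dist_comm x y, Function.uncurry]
  simp_rw [h1, h2]
  exact lintegral_lintegral_swap (hF.indicator hs).aemeasurable

theorem setLIntegral_measure_ball_le [SFinite ω] {ρ r : ℝ} (hρ : 0 < ρ) (hρr : ρ ≤ r)
    (y : Euc N) :
    ∫⁻ x in ball y r, ω (ball x ρ) ≤
      ENNReal.ofReal ((ρ / r) ^ (N : ℝ)) * volume (ball y r) * ω (ball y (2 * r)) := by
  have h1 : ∫⁻ x in ball y r, ω (ball x ρ) ≤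
      ∫⁻ x, ∫⁻ _ in ball x ρ, 1 ∂(ω.restrict (ball y (2 * r))) := by
    refine le_trans ?_ (setLIntegral_le_lintegral (ball y r) _)
    refine setLIntegral_mono' measurableSet_ball fun x hx => ?_
    rw [setLIntegral_one, Measure.restrict_apply measurableSet_ball,
      inter_eq_left.2 (ball_subset_ball' (by linarith [mem_ball.1 hx]))]
  rw [lintegral_lintegral_ball_swap ρ measurable_const] at h1
  refine h1.trans (le_of_eq ?_)
  simp_rw [setLIntegral_one, fun x : Euc N => volume_ball_ratio hρ (hρ.trans_le hρr) x y]
  rw [lintegral_const, Measure.restrict_apply_univ]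

theorem setLIntegral_measure_ball_rpow_le [SFinite ω] {ρ r v : ℝ} (hρ : 0 < ρ)
    (hρr : ρ ≤ r) (hv : 0 < v) (y : Euc N) :
    ∫⁻ x in ball y r, ω (ball x ρ) ^ v ≤
      ENNReal.ofReal ((ρ / r) ^ (N * min v 1)) * volume (ball y r) * ω (ball y (2 * r)) ^ v := by
  have hr : 0 < r := hρ.trans_le hρr
  have hm := measurable_measure_ball (ω := ω) ρ
  rcases le_total 1 v with h1 | h1
  · rw [min_eq_right h1, mul_one]
    calc ∫⁻ x in ball y r, ω (ball x ρ) ^ v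
        ≤ ∫⁻ x in ball y r, ω (ball x ρ) * ω (ball y (2 * r)) ^ (v - 1) := by
          refine setLIntegral_mono' measurableSet_ball fun x hx => ?_
          have : ω (ball x ρ) ^ v = ω (ball x ρ) * ω (ball x ρ) ^ (v - 1) := by
            conv_lhs => rw [show v = 1 + (v - 1) by ring,
              ENNReal.rpow_add_of_nonneg _ _ zero_le_one (by linarith), ENNReal.rpow_one]
          rw [this]
          gcongr
          exact ball_subset_ball' (by linarith [mem_ball.1 hx])
      _ = (∫⁻ x in ball y r, ω (ball x ρ)) * ω (ball y (2 * r)) ^ (v - 1) :=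
          lintegral_mul_const _ hm
      _ ≤ _ := by
          refine (mul_le_mul_left (setLIntegral_measure_ball_le hρ hρr y) _).trans (le_of_eq ?_)
          rw [mul_assoc]
          congr 1
          conv_rhs => rw [show v = 1 + (v - 1) by ring,
              ENNReal.rpow_add_of_nonneg _ _ zero_le_one (by linarith), ENNReal.rpow_one]
  · rw [min_eq_left h1]
    have hold := ENNReal.lintegral_mul_norm_pow_le (μ := volume.restrict (ball y r))
      (f := fun x => ω (ball x ρ)) (g := fun _ => 1) hm.aemeasurable aemeasurable_const
      hv.le (sub_nonneg.2 h1) (by ring)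
    simp only [ENNReal.one_rpow, mul_one, setLIntegral_one] at hold
    refine hold.trans ?_
    calc _ ≤ (ENNReal.ofReal ((ρ / r) ^ (N : ℝ)) * volume (ball y r) * ω (ball y (2 * r))) ^ v *
          volume (ball y r) ^ (1 - v) := by
          gcongr
          exact setLIntegral_measure_ball_le hρ hρr y
      _ = ENNReal.ofReal ((ρ / r) ^ (N : ℝ)) ^ v *
          (volume (ball y r) ^ v * volume (ball y r) ^ (1 - v)) * ω (ball y (2 * r)) ^ v := by
          rw [ENNReal.mul_rpow_of_nonneg _ _ hv.le, ENNReal.mul_rpow_of_nonneg _ _ hv.le]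
          ring
      _ = _ := by
          rw [← ENNReal.rpow_add_of_nonneg _ _ hv.le (sub_nonneg.2 h1), add_sub_cancel,
            ENNReal.rpow_one, ENNReal.ofReal_rpow_of_nonneg (by positivity) hv.le,
            ← Real.rpow_mul (by positivity)]

theorem lintegral_measure_ball_rpow_mul_le [SFinite ω] {ρ r u v : ℝ} (hρ : 0 < ρ)
    (hρr : ρ ≤ r) (hu : 0 ≤ u) (hv : 0 < v) :
    ∫⁻ x, ω (ball x r) ^ u * ω (ball x ρ) ^ v ≤
      ENNReal.ofReal ((ρ / r) ^ (N * min v 1)) * ∫⁻ x, ω (ball x (2 * r)) ^ (u + v) := by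
  have hr : 0 < r := hρ.trans_le hρr
  have hm := measurable_measure_ball (ω := ω)
  set V := volume (ball (0 : Euc N) r) with hV
  have hVx (x : Euc N) : volume (ball x r) = V := by
    rw [volume_ball_eq hr, hV, volume_ball_eq hr]
  have hV0 : V ≠ 0 := (measure_ball_pos _ _ hr).ne'
  have hVt : V ≠ ⊤ := measure_ball_lt_top.ne
  rw [← ENNReal.mul_le_mul_iff_right hV0 hVt]
  calc V * ∫⁻ x, ω (ball x r) ^ u * ω (ball x ρ) ^ v
      = ∫⁻ x, ∫⁻ _ in ball x r, ω (ball x r) ^ u * ω (ball x ρ) ^ v := by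
        simp_rw [setLIntegral_const, hVx, mul_comm _ V]
        rw [lintegral_const_mul' _ _ hVt]
    _ ≤ ∫⁻ x, ∫⁻ y in ball x r, ω (ball y (2 * r)) ^ u * ω (ball x ρ) ^ v := by
        refine lintegral_mono fun x => setLIntegral_mono' measurableSet_ball fun y hy => ?_
        have := mem_ball'.1 hy
        gcongr
        exact ball_subset_ball' (by linarith)
    _ = ∫⁻ y, ω (ball y (2 * r)) ^ u * ∫⁻ x in ball y r, ω (ball x ρ) ^ v := by
        rw [lintegral_lintegral_ball_swap r]
        · refine lintegral_congr fun y => lintegral_const_mul _ ((hm ρ).pow_const v)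
        · exact (((hm _).comp measurable_snd).pow_const u).mul
            (((hm _).comp measurable_fst).pow_const v)
    _ ≤ ∫⁻ y, (V * ENNReal.ofReal ((ρ / r) ^ (N * min v 1))) * ω (ball y (2 * r)) ^ (u + v) := by
        refine lintegral_mono fun y => ?_
        refine (mul_le_mul_right (setLIntegral_measure_ball_rpow_le hρ hρr hv y) _).trans
          (le_of_eq ?_)
        simp only [ENNReal.rpow_add_of_nonneg _ _ hu hv.le, hVx]
        ring
    _ = _ := by
        rw [lintegral_const_mul _ ((hm _).pow_const _), mul_assoc]

end BallAverages

section Sequences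

/-- The distance of two natural numbers. -/
def gap (i j : ℕ) : ℕ := (i - j) + (j - i)

theorem gap_comm (i j : ℕ) : gap i j = gap j i := by unfold gap; omega

theorem gap_of_le {i j : ℕ} (h : i ≤ j) : gap i j = j - i := by unfold gap; omega

theorem tsum_ite_le_eq (c : ℕ) (f : ℕ → ℝ≥0∞) :
    ∑' i, (if c ≤ i then f i else 0) = ∑' k, f (k + c) := by
  have h := Summable.sum_add_tsum_nat_add' (f := fun i => if c ≤ i then f i else 0) (k := c)
    ENNReal.summable
  rw [Finset.sum_eq_zero fun j hj => if_neg (not_le.2 (Finset.mem_range.1 hj)), zero_add] at h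
  rw [← h]
  exact tsum_congr fun k => if_pos (Nat.le_add_left c k)

theorem tsum_pow_gap_le (μ : ℝ≥0∞) (i : ℕ) : ∑' j, μ ^ gap i j ≤ 2 * (1 - μ)⁻¹ := by
  calc ∑' j, μ ^ gap i j
      ≤ ∑' j, ((if j ≤ i then μ ^ (i - j) else 0) + if i ≤ j then μ ^ (j - i) else 0) := by
        refine ENNReal.tsum_le_tsum fun j => ?_
        rcases le_total i j with h | h
        · rw [gap_of_le h, if_pos h]; exact le_add_self
        · rw [gap_comm, gap_of_le h, if_pos h]; exact le_self_add
    _ ≤ (1 - μ)⁻¹ + (1 - μ)⁻¹ := by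
        rw [ENNReal.tsum_add, ← ENNReal.tsum_geometric μ]
        refine add_le_add ?_ ?_
        · rw [tsum_eq_sum (s := Finset.range (i + 1))
            (fun j hj => if_neg (by simpa using hj))]
          calc _ ≤ ∑ j ∈ Finset.range (i + 1), μ ^ (i - j) :=
                Finset.sum_le_sum fun j _ => by split_ifs <;> simp
            _ = ∑ j ∈ Finset.range (i + 1), μ ^ j := by
                rw [← Finset.sum_range_reflect]
                refine Finset.sum_congr rfl fun j hj => ?_
                rw [Finset.mem_range] at hj
                congr 1; omega
            _ ≤ _ := ENNReal.sum_le_tsum _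
        · rw [tsum_ite_le_eq i fun j => μ ^ (j - i)]
          simp
    _ = _ := by ring

/-- A power of a sum is at most a weighted sum of powers, for weights growing geometrically
away from an arbitrary centre. -/
theorem tsum_rpow_le_weighted {q : ℝ} (hq : 0 < q) {μ : ℝ≥0∞} (hμ0 : μ ≠ 0) (hμt : μ ≠ ⊤)
    (A : ℕ → ℝ≥0∞) (c : ℕ) :
    (∑' i, A i) ^ q ≤ (2 * (1 - μ ^ (1 / q))⁻¹) ^ q * ∑' i, μ⁻¹ ^ gap i c * A i ^ q := by
  set Y := ∑' i, μ⁻¹ ^ gap i c * A i ^ q with hY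
  have hA (i : ℕ) : A i ≤ Y ^ (1 / q) * (μ ^ (1 / q)) ^ gap i c := by
    have h1 : A i ^ q ≤ Y * μ ^ gap i c := by
      calc A i ^ q = (μ⁻¹ ^ gap i c * A i ^ q) * μ ^ gap i c := by
            rw [mul_right_comm, ← mul_pow, ENNReal.inv_mul_cancel hμ0 hμt, one_pow, one_mul]
        _ ≤ Y * μ ^ gap i c := by gcongr; exact ENNReal.le_tsum i
    calc A i = (A i ^ q) ^ (1 / q) := by
          rw [← ENNReal.rpow_mul, mul_one_div_cancel hq.ne', ENNReal.rpow_one]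
      _ ≤ (Y * μ ^ gap i c) ^ (1 / q) := by gcongr
      _ = _ := by
          rw [ENNReal.mul_rpow_of_nonneg _ _ (by positivity), ← ENNReal.rpow_natCast,
            ← ENNReal.rpow_natCast, ← ENNReal.rpow_mul, ← ENNReal.rpow_mul,
            mul_comm (gap i c : ℝ)]
  calc (∑' i, A i) ^ q ≤ (Y ^ (1 / q) * (2 * (1 - μ ^ (1 / q))⁻¹)) ^ q := by
        gcongr
        refine (ENNReal.tsum_le_tsum hA).trans ?_
        rw [ENNReal.tsum_mul_left]
        gcongr
        simp_rw [fun i => gap_comm i c]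
        exact tsum_pow_gap_le _ c
    _ = _ := by
        rw [ENNReal.mul_rpow_of_nonneg _ _ hq.le, ← ENNReal.rpow_mul,
          one_div_mul_cancel hq.ne', ENNReal.rpow_one, mul_comm]

/-- A bilinear form with geometrically growing weights dominates the product of the weighted
sums taken about a common, suitably chosen centre. -/
theorem exists_balanced_center {l : ℝ≥0∞} (hl : 1 ≤ l) (X Y : ℕ → ℝ≥0∞) :
    ∃ c, (∑' i, l ^ gap i c * X i) * (∑' j, l ^ gap j c * Y j) ≤
      (1 + l ^ 2) * ∑' i, ∑' j, l ^ gap i j * (X i * Y j) := by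
  have hrhs : ∑' i, ∑' j, l ^ gap i j * (X i * Y j) =
      ∑' j, (∑' i, l ^ gap i j * X i) * Y j := by
    rw [ENNReal.tsum_comm]
    refine tsum_congr fun j => ?_
    rw [← ENNReal.tsum_mul_right]
    exact tsum_congr fun i => by ring
  by_cases hX : ∀ i, X i = 0
  · exact ⟨0, by simp [hX]⟩
  by_cases hY : ∀ i, Y i = 0
  · exact ⟨0, by simp [hY]⟩
  push Not at hX hY
  obtain ⟨i₀, hi₀⟩ := hX
  obtain ⟨j₀, hj₀⟩ := hY
  rw [hrhs]
  by_cases htop : ∑' i, l ^ gap i j₀ * X i = ⊤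
  · refine ⟨0, le_top.trans (le_of_eq ?_)⟩
    have h1 : ∑' j, (∑' i, l ^ gap i j * X i) * Y j = ⊤ := by
      refine top_unique ((le_of_eq ?_).trans (ENNReal.le_tsum j₀))
      rw [htop, ENNReal.top_mul hj₀]
    rw [h1, ENNReal.mul_top (by simp)]
  let L (c : ℕ) : ℝ≥0∞ := ∑' i, if i ≤ c then l ^ (c - i) * X i else 0
  let G (c : ℕ) : ℝ≥0∞ := ∑' i, if c < i then l ^ (i - c) * X i else 0
  have hLG (c : ℕ) : ∑' i, l ^ gap i c * X i = L c + G c := by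
    rw [← ENNReal.tsum_add]
    refine tsum_congr fun i => ?_
    rcases le_or_gt i c with h | h
    · rw [if_pos h, if_neg (by omega), gap_of_le h, add_zero]
    · rw [if_neg (by omega), if_pos h, gap_comm, gap_of_le h.le, zero_add]
  have hex : ∃ c, G c ≤ L c := by
    have htend := ENNReal.tendsto_sum_nat_add (fun i => l ^ gap i j₀ * X i) htop
    have hev := (htend.eventually (ge_mem_nhds (pos_iff_ne_zero.2 hi₀))).and
      ((eventually_ge_atTop i₀).and (eventually_ge_atTop j₀))
    obtain ⟨c, hc, hci, hcj⟩ := hev.exists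
    refine ⟨c, ?_⟩
    calc G c ≤ ∑' k, l ^ gap (k + c) j₀ * X (k + c) := by
          rw [← tsum_ite_le_eq c fun i => l ^ gap i j₀ * X i]
          refine ENNReal.tsum_le_tsum fun i => ?_
          split_ifs with h1 h2
          · gcongr
            unfold gap; omega
          · omega
          · simp
          · simp
      _ ≤ X i₀ := hc
      _ ≤ if i₀ ≤ c then l ^ (c - i₀) * X i₀ else 0 := by
          rw [if_pos hci]
          exact le_mul_of_one_le_left' (one_le_pow₀ hl)
      _ ≤ L c := ENNReal.le_tsum (f := fun i => if i ≤ c then l ^ (c - i) * X i else 0) i₀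
  classical
  obtain ⟨c, hc, hmin⟩ : ∃ c, G c ≤ L c ∧ ∀ d < c, L d ≤ G d :=
    ⟨Nat.find hex, Nat.find_spec hex, fun d hd => (not_le.1 (Nat.find_min hex hd)).le⟩
  have hl2 : 1 ≤ l ^ 2 := one_le_pow₀ hl
  have key (j : ℕ) : (∑' i, l ^ gap i c * X i) * l ^ gap j c ≤
      (1 + l ^ 2) * ∑' i, l ^ gap i j * X i := by
    rcases le_or_gt c j with hj | hj
    · have h1 : L c * l ^ gap j c ≤ ∑' i, l ^ gap i j * X i := by
        rw [← ENNReal.tsum_mul_right]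
        refine ENNReal.tsum_le_tsum fun i => ?_
        split_ifs with h
        · rw [mul_right_comm, ← pow_add]
          refine le_of_eq ?_
          congr 2
          unfold gap; omega
        · simp
      calc _ = (L c + G c) * l ^ gap j c := by rw [hLG]
        _ ≤ (L c + l ^ 2 * L c) * l ^ gap j c := by
            gcongr
            exact hc.trans (le_mul_of_one_le_left' hl2)
        _ = (1 + l ^ 2) * (L c * l ^ gap j c) := by ring
        _ ≤ _ := by gcongr
    · obtain ⟨d, rfl⟩ : ∃ d, c = d + 1 := ⟨c - 1, by omega⟩
      let H : ℝ≥0∞ := ∑' i, if d < i then l ^ (i - (d + 1)) * X i else 0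
      have hGH : G d = l * H := by
        rw [← ENNReal.tsum_mul_left]
        refine tsum_congr fun i => ?_
        split_ifs with h
        · rw [← mul_assoc, ← pow_succ']
          congr 2; omega
        · simp
      have hsplit : ∑' i, l ^ gap i (d + 1) * X i = l * L d + H := by
        rw [← ENNReal.tsum_mul_left, ← ENNReal.tsum_add]
        refine tsum_congr fun i => ?_
        rcases le_or_gt i d with h | h
        · rw [if_pos h, if_neg (by omega), add_zero, ← mul_assoc, ← pow_succ']
          congr 2
          unfold gap; omega
        · rw [if_neg (by omega), if_pos h, mul_zero, zero_add]
          congr 2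
          unfold gap; omega
      have h1 : H * l ^ gap j (d + 1) ≤ ∑' i, l ^ gap i j * X i := by
        rw [← ENNReal.tsum_mul_right]
        refine ENNReal.tsum_le_tsum fun i => ?_
        split_ifs with h
        · rw [mul_right_comm, ← pow_add]
          refine le_of_eq ?_
          congr 2
          unfold gap; omega
        · simp
      calc _ = (l * L d + H) * l ^ gap j (d + 1) := by rw [hsplit]
        _ ≤ (l * (l * H) + H) * l ^ gap j (d + 1) := by
            gcongr
            exact hGH ▸ hmin d (Nat.lt_succ_self d)
        _ = (1 + l ^ 2) * (H * l ^ gap j (d + 1)) := by ring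
        _ ≤ _ := by gcongr
  refine ⟨c, ?_⟩
  rw [← ENNReal.tsum_mul_left, ← ENNReal.tsum_mul_left]
  refine ENNReal.tsum_le_tsum fun j => ?_
  rw [← mul_assoc, ← mul_assoc]
  exact mul_le_mul_left (key j) _

/-- Off-diagonal domination of a product of powers of sums. -/
theorem tsum_rpow_mul_tsum_rpow_le {q₁ q₂ : ℝ} (hq₁ : 0 < q₁) (hq₂ : 0 < q₂) {μ : ℝ≥0∞}
    (hμ0 : μ ≠ 0) (hμ1 : μ < 1) :
    ∃ C : ℝ≥0∞, C ≠ ⊤ ∧ ∀ A B : ℕ → ℝ≥0∞, (∑' i, A i) ^ q₁ * (∑' j, B j) ^ q₂ ≤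
      C * ∑' i, ∑' j, μ⁻¹ ^ gap i j * (A i ^ q₁ * B j ^ q₂) := by
  have hμt : μ ≠ ⊤ := hμ1.ne_top
  have hfin {q : ℝ} (hq : 0 < q) : (2 * (1 - μ ^ (1 / q))⁻¹) ^ q ≠ ⊤ := by
    refine ENNReal.rpow_ne_top_of_nonneg hq.le (ENNReal.mul_ne_top (by simp) ?_)
    exact ENNReal.inv_ne_top.2 (tsub_pos_of_lt (ENNReal.rpow_lt_one hμ1 (by positivity))).ne'
  refine ⟨(2 * (1 - μ ^ (1 / q₁))⁻¹) ^ q₁ * (2 * (1 - μ ^ (1 / q₂))⁻¹) ^ q₂ * (1 + μ⁻¹ ^ 2),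
    ENNReal.mul_ne_top (ENNReal.mul_ne_top (hfin hq₁) (hfin hq₂)) ?_, fun A B => ?_⟩
  · exact ENNReal.add_ne_top.2 ⟨by simp, ENNReal.pow_ne_top (ENNReal.inv_ne_top.2 hμ0)⟩
  obtain ⟨c, hc⟩ := exists_balanced_center (ENNReal.one_le_inv.2 hμ1.le)
    (fun i => A i ^ q₁) (fun j => B j ^ q₂)
  calc _ ≤ _ := mul_le_mul' (tsum_rpow_le_weighted hq₁ hμ0 hμt A c)
        (tsum_rpow_le_weighted hq₂ hμ0 hμt B c)
    _ = (2 * (1 - μ ^ (1 / q₁))⁻¹) ^ q₁ * (2 * (1 - μ ^ (1 / q₂))⁻¹) ^ q₂ *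
        ((∑' i, μ⁻¹ ^ gap i c * A i ^ q₁) * ∑' j, μ⁻¹ ^ gap j c * B j ^ q₂) := by ring
    _ ≤ _ := by
        rw [mul_assoc _ (1 + μ⁻¹ ^ 2)]
        gcongr

/-- A finite sum is controlled by its supremum and by interactions of distant terms. -/
theorem sum_le_sup_add_distant (K n : ℕ) (hn : 0 < n) {θ : ℝ} (hθ0 : 0 ≤ θ) (hθ1 : θ ≤ 1)
    (e : ℕ → ℝ≥0∞) (M : ℝ≥0∞) (he : ∀ k, e k ≤ M) :
    ∑ k ∈ Finset.range K, e k ≤ 4 * n * M + (n : ℝ≥0∞)⁻¹ *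
      ∑ i ∈ Finset.range K, ∑ j ∈ Finset.range K,
        if i + n ≤ j then e i ^ θ * e j ^ (1 - θ) else 0 := by
  have hn0 : (n : ℝ≥0∞) ≠ 0 := by exact_mod_cast hn.ne'
  by_cases hM : M = ⊤
  · rw [hM, ENNReal.mul_top (by simp [hn0]), top_add]
    exact le_top
  set S := ∑ k ∈ Finset.range K, e k with hS
  set P := ∑ i ∈ Finset.range K, ∑ j ∈ Finset.range K,
        if i + n ≤ j then e i ^ θ * e j ^ (1 - θ) else 0 with hP
  have hSt : S ≠ ⊤ := ENNReal.sum_ne_top.2 fun k _ => ne_top_of_le_ne_top hM (he k)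
  have hpair (i j : ℕ) : e i * e j ≤ M * (e i ^ θ * e j ^ (1 - θ)) := by
    have h1 : ∀ k, ∀ r : ℝ, 0 ≤ r → r ≤ 1 → e k ≤ M ^ (1 - r) * e k ^ r := fun k r h0 h1 => by
      conv_lhs => rw [← ENNReal.rpow_one (e k), show (1 : ℝ) = (1 - r) + r by ring,
        ENNReal.rpow_add_of_nonneg _ _ (by linarith) h0]
      gcongr
      exact he k
    calc e i * e j ≤ (M ^ (1 - θ) * e i ^ θ) * (M ^ (1 - (1 - θ)) * e j ^ (1 - θ)) :=
          mul_le_mul' (h1 i θ hθ0 hθ1) (h1 j (1 - θ) (by linarith) (by linarith))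
      _ = (M ^ (1 - θ) * M ^ θ) * (e i ^ θ * e j ^ (1 - θ)) := by
          rw [show 1 - (1 - θ) = θ by ring]; ring
      _ = _ := by
          rw [← ENNReal.rpow_add_of_nonneg _ _ (by linarith) hθ0,
            sub_add_cancel, ENNReal.rpow_one]
  have hnear (i : ℕ) : ∑ j ∈ Finset.range K, (if gap i j < n then e j else 0) ≤ 2 * n * M := by
    rw [← Finset.sum_filter]
    refine (Finset.sum_le_card_nsmul _ _ M fun j _ => he j).trans ?_
    rw [nsmul_eq_mul]
    gcongr
    have : (Finset.filter (fun j => gap i j < n) (Finset.range K)) ⊆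
        Finset.Ico (i + 1 - n) (i + n) := by
      intro j hj
      have := (Finset.mem_filter.1 hj).2
      unfold gap at this
      rw [Finset.mem_Ico]; omega
    have h2 := Finset.card_le_card this
    rw [Nat.card_Ico] at h2
    exact_mod_cast h2.trans (by omega)
  have hsq : S * S ≤ 2 * M * P + 2 * n * M * S := by
    calc S * S = ∑ i ∈ Finset.range K, ∑ j ∈ Finset.range K, e i * e j :=
          Finset.sum_mul_sum _ _ _ _
      _ ≤ ∑ i ∈ Finset.range K, ∑ j ∈ Finset.range K,
          (M * (if i + n ≤ j then e i ^ θ * e j ^ (1 - θ) else 0) +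
            M * (if j + n ≤ i then e j ^ θ * e i ^ (1 - θ) else 0) +
            e i * (if gap i j < n then e j else 0)) := by
          refine Finset.sum_le_sum fun i _ => Finset.sum_le_sum fun j _ => ?_
          by_cases h1 : i + n ≤ j
          · rw [if_pos h1, add_assoc]
            exact (hpair i j).trans le_self_add
          by_cases h2 : j + n ≤ i
          · rw [if_pos h2, add_right_comm]
            exact (mul_comm (e i) (e j) ▸ hpair j i).trans le_add_self
          · rw [if_pos (show gap i j < n by unfold gap; omega)]
            exact le_add_self
      _ = M * P + M * P + ∑ i ∈ Finset.range K,
            e i * ∑ j ∈ Finset.range K, (if gap i j < n then e j else 0) := by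
          simp_rw [Finset.sum_add_distrib, ← Finset.mul_sum]
          congr 2
          rw [Finset.sum_comm]
      _ ≤ M * P + M * P + ∑ i ∈ Finset.range K, e i * (2 * n * M) := by
          gcongr with i
          exact hnear i
      _ = _ := by rw [← Finset.sum_mul]; ring
  by_cases hcase : S ≤ 4 * n * M
  · exact hcase.trans le_self_add
  refine le_trans ?_ le_add_self
  push Not at hcase
  by_cases hPt : P = ⊤
  · rw [hPt, ENNReal.mul_top (by simp)]; exact le_top
  lift S to ℝ≥0 using hSt with s
  lift M to ℝ≥0 using hM with m
  lift P to ℝ≥0 using hPt with t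
  rw [← ENNReal.coe_natCast, ← ENNReal.coe_inv (by exact_mod_cast hn.ne')]
  norm_cast at hsq hcase ⊢
  rw [← NNReal.coe_le_coe] at hsq ⊢
  rw [← NNReal.coe_lt_coe] at hcase
  push_cast at hsq hcase ⊢
  have hnr : (0 : ℝ) < n := by exact_mod_cast hn
  rw [← div_eq_inv_mul, le_div_iff₀ hnr]
  have hs0 : (0 : ℝ) < s := lt_of_le_of_lt (by positivity) hcase
  have ht0 : (0 : ℝ) ≤ t := t.2
  have hm0 : (0 : ℝ) ≤ m := m.2
  have h3 : (s : ℝ) * s ≤ 4 * m * t := by nlinarith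
  have h4 : (s : ℝ) * (s * n) ≤ s * t := by nlinarith
  exact le_of_mul_le_mul_left h4 hs0

end Sequences

section DyadicTerms

variable {N : ℕ} {ω : Measure (Euc N)}

/-- The scaled mass `r_k ^ (-θ) * ω (B_{r_k} x) ^ u` at the dyadic radius `r_k = r / 2 ^ k`. -/
def ballTerm (ω : Measure (Euc N)) (r θ u : ℝ) (k : ℕ) (x : Euc N) : ℝ≥0∞ :=
  ENNReal.ofReal ((r / 2 ^ k) ^ (-θ)) * ω (ball x (r / 2 ^ k)) ^ u

theorem measurable_ballTerm [SFinite ω] (r θ u : ℝ) (k : ℕ) :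
    Measurable (ballTerm ω r θ u k) :=
  ((measurable_measure_ball _).pow_const u).const_mul _

theorem ballTerm_rpow {r θ u a : ℝ} (hr : 0 < r) (ha : 0 ≤ a) (k : ℕ) (x : Euc N) :
    ballTerm ω r θ u k x ^ a = ballTerm ω r (θ * a) (u * a) k x := by
  unfold ballTerm
  rw [ENNReal.mul_rpow_of_nonneg _ _ ha, ENNReal.ofReal_rpow_of_nonneg (by positivity) ha,
    ← Real.rpow_mul (by positivity), ← ENNReal.rpow_mul, neg_mul]

theorem div_ofReal_rpow_rpow {ρ σ s : ℝ} (hρ : 0 < ρ) (hs : 0 ≤ s) (a : ℝ≥0∞) :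
    (a / ENNReal.ofReal (ρ ^ σ)) ^ s = ENNReal.ofReal (ρ ^ (-(σ * s))) * a ^ s := by
  rw [ENNReal.div_rpow_of_nonneg _ _ hs, ENNReal.ofReal_rpow_of_nonneg (by positivity) hs,
    ← Real.rpow_mul hρ.le, Real.rpow_neg hρ.le, ENNReal.ofReal_inv_of_pos (by positivity),
    ENNReal.div_eq_inv_mul]

theorem ballTerm_eq {r σ s : ℝ} (hr : 0 < r) (hs : 0 ≤ s) (k : ℕ) (x : Euc N) :
    ballTerm ω r (σ * s) s k x =
      (ω (ball x (r / 2 ^ k)) / ENNReal.ofReal ((r / 2 ^ k) ^ σ)) ^ s :=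
  (div_ofReal_rpow_rpow (by positivity) hs _).symm

theorem div_two_pow_add (r : ℝ) (i n : ℕ) :
    r / 2 ^ (i + n) = r / 2 ^ i * (2 : ℝ) ^ (-(n : ℝ)) := by
  rw [pow_add, Real.rpow_neg zero_le_two, Real.rpow_natCast]
  field_simp

theorem mul_two_rpow_rpow {a : ℝ} (ha : 0 < a) (b c : ℝ) :
    (a * (2 : ℝ) ^ b) ^ c = a ^ c * (2 : ℝ) ^ (b * c) := by
  rw [Real.mul_rpow ha.le (by positivity), ← Real.rpow_mul zero_le_two]

/-- Interaction of a ball with a smaller one: integration gains a geometric factor. -/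
theorem lintegral_ballTerm_mul_le [SFinite ω] {r θ₁ θ₂ u v : ℝ} (hr : 0 < r) (hu : 0 ≤ u)
    (hv : 0 < v) {i j : ℕ} (hij : i ≤ j) :
    ∫⁻ x, ballTerm ω r θ₁ u (i + 1) x * ballTerm ω r θ₂ v (j + 1) x ≤
      ENNReal.ofReal (2 ^ (θ₁ + θ₂)) *
        ENNReal.ofReal (2 ^ (-(N * min v 1 - θ₂))) ^ (j - i) *
          ∫⁻ x, ballTerm ω r (θ₁ + θ₂) (u + v) i x := by
  obtain ⟨n, rfl⟩ := Nat.exists_eq_add_of_le hij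
  have hm := measurable_measure_ball (ω := ω)
  have hi : 0 < r / 2 ^ i := by positivity
  have hle : r / 2 ^ (i + n + 1) ≤ r / 2 ^ (i + 1) := by
    gcongr
    · exact one_le_two
  have hB := lintegral_measure_ball_rpow_mul_le (ω := ω) (u := u) (v := v)
    (show 0 < r / 2 ^ (i + n + 1) by positivity) hle hu hv
  rw [show 2 * (r / 2 ^ (i + 1)) = r / 2 ^ i by rw [pow_succ]; field_simp] at hB
  unfold ballTerm
  rw [lintegral_const_mul _ ((hm _).pow_const _)]
  simp_rw [mul_mul_mul_comm (ENNReal.ofReal ((r / 2 ^ (i + 1)) ^ (-θ₁)))]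
  rw [lintegral_const_mul' _ _ (ENNReal.mul_ne_top ENNReal.ofReal_ne_top ENNReal.ofReal_ne_top)]
  refine (mul_le_mul_right hB _).trans (le_of_eq ?_)
  rw [← mul_assoc, ← mul_assoc]
  congr 1
  rw [← ENNReal.ofReal_pow (by positivity), ← ENNReal.ofReal_mul (by positivity),
    ← ENNReal.ofReal_mul (by positivity), ← ENNReal.ofReal_mul (by positivity),
    ← ENNReal.ofReal_mul (by positivity)]
  congr 1
  have h1 : r / 2 ^ (i + n + 1) / (r / 2 ^ (i + 1)) = (2 : ℝ) ^ (-(n : ℝ)) := by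
    rw [show i + n + 1 = i + 1 + n by ring, div_two_pow_add r (i + 1) n]
    field_simp
  rw [h1, div_two_pow_add r i 1, add_assoc, div_two_pow_add r i (n + 1)]
  generalize r / 2 ^ i = ρ at hi ⊢
  rw [mul_two_rpow_rpow hi, mul_two_rpow_rpow hi, ← Real.rpow_mul zero_le_two,
    ← Real.rpow_natCast, ← Real.rpow_mul zero_le_two, Nat.add_sub_cancel_left,
    neg_add θ₁, Real.rpow_add hi]
  have h2 : (2 : ℝ) ^ (-((1 : ℕ) : ℝ) * -θ₁) * (2 : ℝ) ^ (-((n + 1 : ℕ) : ℝ) * -θ₂) *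
      (2 : ℝ) ^ (-(n : ℝ) * (N * min v 1)) =
      (2 : ℝ) ^ (θ₁ + θ₂) * (2 : ℝ) ^ (-(N * min v 1 - θ₂) * n) := by
    rw [← Real.rpow_add two_pos, ← Real.rpow_add two_pos, ← Real.rpow_add two_pos]
    congr 1
    push_cast
    ring
  linear_combination (ρ ^ (-θ₁) * ρ ^ (-θ₂)) * h2

theorem rpow_mul_rpow_le_add {a b : ℝ} (ha : 0 ≤ a) (hb : 0 ≤ b) (hab : a + b = 1)
    (X Y : ℝ≥0∞) : X ^ a * Y ^ b ≤ X + Y := by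
  calc X ^ a * Y ^ b ≤ (X + Y) ^ a * (X + Y) ^ b := by
        gcongr
        · exact le_self_add
        · exact le_add_self
    _ = X + Y := by
        rw [← ENNReal.rpow_add_of_nonneg _ _ ha hb, hab, ENNReal.rpow_one]

/-- Pointwise interaction of a ball with a larger one, when the exponents favour it. -/
theorem ballTerm_mul_le {r θ₁ θ₂ u v : ℝ} (hr : 0 < r) (hu : 0 < u) (hv : 0 < v) {i j : ℕ}
    (hji : j ≤ i) (x : Euc N) :
    ballTerm ω r θ₁ u i x * ballTerm ω r θ₂ v j x ≤
      ENNReal.ofReal (2 ^ (-((θ₁ + θ₂) * (u / (u + v)) - θ₁))) ^ (i - j) *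
        (ballTerm ω r (θ₁ + θ₂) (u + v) i x + ballTerm ω r (θ₁ + θ₂) (u + v) j x) := by
  obtain ⟨n, rfl⟩ := Nat.exists_eq_add_of_le hji
  have huv : 0 < u + v := by positivity
  have hj : 0 < r / 2 ^ j := by positivity
  have hsum : u / (u + v) + v / (u + v) = 1 := by field_simp
  refine le_trans (le_of_eq ?_) (mul_le_mul_right (rpow_mul_rpow_le_add (a := u / (u + v))
    (b := v / (u + v)) (by positivity) (by positivity) hsum _ _) _)
  rw [ballTerm_rpow hr (by positivity), ballTerm_rpow hr (by positivity),
    mul_div_cancel₀ _ huv.ne', mul_div_cancel₀ _ huv.ne']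
  unfold ballTerm
  rw [mul_mul_mul_comm (ENNReal.ofReal _) (ω (ball _ _) ^ u),
    mul_mul_mul_comm (ENNReal.ofReal _) (ω (ball _ _) ^ u),
    ← mul_assoc (_ ^ (j + n - j))]
  congr 1
  rw [← ENNReal.ofReal_pow (by positivity), ← ENNReal.ofReal_mul (by positivity),
    ← ENNReal.ofReal_mul (by positivity), ← ENNReal.ofReal_mul (by positivity)]
  congr 1
  rw [div_two_pow_add r j n]
  generalize r / 2 ^ j = ρ at hj ⊢
  rw [mul_two_rpow_rpow hj, mul_two_rpow_rpow hj,
    ← Real.rpow_natCast, ← Real.rpow_mul zero_le_two, Nat.add_sub_cancel_left]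
  have h1 : ρ ^ (-θ₁) * ρ ^ (-θ₂) =
      ρ ^ (-((θ₁ + θ₂) * (u / (u + v)))) *
        ρ ^ (-((θ₁ + θ₂) * (v / (u + v)))) := by
    rw [← Real.rpow_add hj, ← Real.rpow_add hj]
    congr 1
    linear_combination (θ₁ + θ₂) * hsum
  have h2 : (2 : ℝ) ^ (-(n : ℝ) * -θ₁) = (2 : ℝ) ^ (-((θ₁ + θ₂) * (u / (u + v)) - θ₁) * n) *
      (2 : ℝ) ^ (-(n : ℝ) * -((θ₁ + θ₂) * (u / (u + v)))) := by
    rw [← Real.rpow_add two_pos]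
    congr 1
    ring
  rw [mul_right_comm, h1, h2]
  ring

theorem ofReal_two_rpow_neg_lt_one {δ : ℝ} (hδ : 0 < δ) : ENNReal.ofReal (2 ^ (-δ)) < 1 := by
  rw [ENNReal.ofReal_lt_one]
  exact Real.rpow_lt_one_of_one_lt_of_neg one_lt_two (by linarith)

/-- The integrated sum of the dyadic terms is dominated by the integral of their supremum. -/
theorem tsum_lintegral_ballTerm_le (N : ℕ) {σ t : ℝ} (hσN : σ < N) (ht : 1 < t) :
    ∃ C : ℝ≥0∞, C ≠ ⊤ ∧ ∀ (ω : Measure (Euc N)) [SFinite ω] (r : ℝ), 0 < r →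
      (∀ k, ∫⁻ x, ballTerm ω r (σ * t) t k x ≠ ⊤) →
      ∑' k, ∫⁻ x, ballTerm ω r (σ * t) t k x ≤
        C * ∫⁻ x, ⨆ k, ballTerm ω r (σ * t) t k x := by
  have ht0 : 0 < t := by linarith
  set A := ENNReal.ofReal (2 ^ (σ * t)) with hA
  set μ := ENNReal.ofReal (2 ^ (-(N - σ))) with hμ
  have hμ1 : μ < 1 := ofReal_two_rpow_neg_lt_one (by linarith)
  have hfin : 2 * (A * (1 - μ)⁻¹) ≠ ⊤ := ENNReal.mul_ne_top (by simp) (ENNReal.mul_ne_top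
    ENNReal.ofReal_ne_top (ENNReal.inv_ne_top.2 (tsub_pos_of_lt hμ1).ne'))
  obtain ⟨n', hn'⟩ := ENNReal.exists_nat_gt hfin
  obtain ⟨n, hn0, hn⟩ : ∃ n : ℕ, 0 < n ∧ 2 * (A * (1 - μ)⁻¹) ≤ n :=
    ⟨n' + 1, by omega, hn'.le.trans (by push_cast; exact le_self_add)⟩
  refine ⟨8 * n + 2, by finiteness, fun ω _ r hr hE => ?_⟩
  set e := ballTerm ω r (σ * t) t with he
  set I := ∫⁻ x, ⨆ k, e k x with hI
  have hem (k : ℕ) : Measurable (e k) := measurable_ballTerm _ _ _ _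
  have heI (k : ℕ) : ∫⁻ x, e k x ≤ I := lintegral_mono fun x => le_iSup (fun k => e k x) k
  have hpair {i j : ℕ} (hij : i ≤ j) :
      ∫⁻ x, e (i + 1) x ^ ((t - 1) / t) * e (j + 1) x ^ (1 - (t - 1) / t) ≤
        A * μ ^ (j - i) * ∫⁻ x, e i x := by
    have h := lintegral_ballTerm_mul_le (ω := ω) (θ₁ := σ * (t - 1)) (θ₂ := σ) (u := t - 1)
      (v := 1) hr (by linarith) one_pos hij
    rw [show σ * (t - 1) + σ = σ * t by ring, sub_add_cancel, min_self, mul_one] at h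
    refine le_trans (le_of_eq (lintegral_congr fun x => ?_)) h
    rw [he, ballTerm_rpow hr (div_nonneg (by linarith) ht0.le),
      ballTerm_rpow hr (by rw [sub_nonneg, div_le_one ht0]; linarith)]
    congr 2 <;> field_simp <;> ring
  have hpart (K : ℕ) : ∑ k ∈ Finset.range K, ∫⁻ x, e (k + 1) x ≤ (8 * n + 1) * I := by
    set T := ∑ k ∈ Finset.range K, ∫⁻ x, e (k + 1) x with hT
    have hTt : T ≠ ⊤ := ENNReal.sum_ne_top.2 fun k _ => hE _
    have hpm (i j : ℕ) : Measurable fun x =>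
        if i + n ≤ j then e (i + 1) x ^ ((t - 1) / t) * e (j + 1) x ^ (1 - (t - 1) / t)
        else 0 := by
      split_ifs
      · exact ((hem _).pow_const _).mul ((hem _).pow_const _)
      · exact measurable_const
    have hD : ∑ i ∈ Finset.range K, ∑ j ∈ Finset.range K, ∫⁻ x,
        (if i + n ≤ j then e (i + 1) x ^ ((t - 1) / t) * e (j + 1) x ^ (1 - (t - 1) / t)
          else 0) ≤ A * (1 - μ)⁻¹ * ((∫⁻ x, e 0 x) + T) := by
      calc _ ≤ ∑ i ∈ Finset.range K, A * (1 - μ)⁻¹ * ∫⁻ x, e i x := by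
            refine Finset.sum_le_sum fun i _ => ?_
            calc _ ≤ ∑ j ∈ Finset.range K,
                  A * (∫⁻ x, e i x) * (if i ≤ j then μ ^ (j - i) else 0) := by
                  refine Finset.sum_le_sum fun j _ => ?_
                  by_cases h : i + n ≤ j
                  · simp only [if_pos h, if_pos (show i ≤ j by omega)]
                    exact (hpair (by omega)).trans (le_of_eq (by ring))
                  · simp [if_neg h]
              _ ≤ A * (∫⁻ x, e i x) * ∑' j, (if i ≤ j then μ ^ (j - i) else 0) := by
                  rw [← Finset.mul_sum]
                  gcongr
                  exact ENNReal.sum_le_tsum _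
              _ = _ := by
                  rw [tsum_ite_le_eq i fun j => μ ^ (j - i)]
                  simp only [Nat.add_sub_cancel, ENNReal.tsum_geometric]
                  ring
        _ = A * (1 - μ)⁻¹ * ∑ i ∈ Finset.range K, ∫⁻ x, e i x := by rw [Finset.mul_sum]
        _ ≤ _ := by
            gcongr
            rw [hT, add_comm, ← Finset.sum_range_succ' fun k => ∫⁻ x, e k x]
            exact Finset.sum_le_sum_of_subset (Finset.range_mono (Nat.le_succ K))
    have hmain : T ≤ 4 * n * I + (n : ℝ≥0∞)⁻¹ * (A * (1 - μ)⁻¹ * ((∫⁻ x, e 0 x) + T)) := by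
      calc T = ∫⁻ x, ∑ k ∈ Finset.range K, e (k + 1) x :=
            (lintegral_finsetSum _ fun k _ => hem _).symm
        _ ≤ ∫⁻ x, (4 * n * (⨆ k, e k x) + (n : ℝ≥0∞)⁻¹ *
            ∑ i ∈ Finset.range K, ∑ j ∈ Finset.range K, if i + n ≤ j then
              e (i + 1) x ^ ((t - 1) / t) * e (j + 1) x ^ (1 - (t - 1) / t) else 0) :=
            lintegral_mono fun x => sum_le_sup_add_distant K n hn0
              (div_nonneg (by linarith) ht0.le) (by rw [div_le_one ht0]; linarith)
              (fun k => e (k + 1) x) _ fun k => le_iSup (fun k => e k x) (k + 1)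
        _ = 4 * n * I + (n : ℝ≥0∞)⁻¹ * ∑ i ∈ Finset.range K, ∑ j ∈ Finset.range K, ∫⁻ x,
            (if i + n ≤ j then e (i + 1) x ^ ((t - 1) / t) * e (j + 1) x ^ (1 - (t - 1) / t)
              else 0) := by
            rw [lintegral_add_left ((Measurable.iSup hem).const_mul _),
              lintegral_const_mul _ (Measurable.iSup hem), lintegral_const_mul,
              lintegral_finsetSum]
            · congr 3
              funext i
              exact lintegral_finsetSum _ fun j _ => hpm i j
            · exact fun i _ => Finset.measurable_fun_sum _ fun j _ => hpm i j
            · exact Finset.measurable_fun_sum _ fun i _ =>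
                Finset.measurable_fun_sum _ fun j _ => hpm i j
        _ ≤ _ := by gcongr
    have hn0' : (n : ℝ≥0∞) ≠ 0 := by exact_mod_cast hn0.ne'
    have h2 : T + T ≤ (8 * n * I + ∫⁻ x, e 0 x) + T := by
      calc T + T = 2 * T := by ring
        _ ≤ 2 * (4 * n * I + (n : ℝ≥0∞)⁻¹ * (A * (1 - μ)⁻¹ * ((∫⁻ x, e 0 x) + T))) := by gcongr
        _ = 8 * n * I + (n : ℝ≥0∞)⁻¹ * (2 * (A * (1 - μ)⁻¹)) * ((∫⁻ x, e 0 x) + T) := by ring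
        _ ≤ 8 * n * I + (n : ℝ≥0∞)⁻¹ * n * ((∫⁻ x, e 0 x) + T) := by gcongr
        _ = _ := by
            rw [ENNReal.inv_mul_cancel hn0' (by simp), one_mul, add_assoc]
    refine ((ENNReal.add_le_add_iff_right hTt).1 h2).trans ?_
    rw [add_mul, one_mul]
    gcongr
    exact heI 0
  have htail : ∑' k, ∫⁻ x, e (k + 1) x ≤ (8 * n + 1) * I := by
    rw [ENNReal.tsum_eq_iSup_nat]
    exact iSup_le hpart
  calc ∑' k, ∫⁻ x, e k x = (∫⁻ x, e 0 x) + ∑' k, ∫⁻ x, e (k + 1) x :=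
        tsum_eq_zero_add' ENNReal.summable
    _ ≤ I + (8 * n + 1) * I := add_le_add (heI 0) htail
    _ = (8 * n + 2) * I := by ring

end DyadicTerms

section PotentialProducts

/-- The integrated product of powers of dyadic sums is controlled by the diagonal terms. -/
theorem lintegral_tsum_ballTerm_product_le (N : ℕ) {σ₁ σ₂ s q₁ q₂ : ℝ} (hs : 0 < s)
    (hq₁ : 0 < q₁) (hq₂ : 0 < q₂) (hσ : σ₁ < σ₂) (hδ : σ₂ * (s * q₂) < N * min (s * q₂) 1) :
    ∃ C : ℝ≥0∞, C ≠ ⊤ ∧ ∀ (ω : Measure (Euc N)) [SFinite ω] (r : ℝ), 0 < r →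
      ∫⁻ x, (∑' k, ballTerm ω r (σ₁ * s) s (k + 1) x) ^ q₁ *
          (∑' k, ballTerm ω r (σ₂ * s) s (k + 1) x) ^ q₂ ≤
        C * ∑' k, ∫⁻ x, ballTerm ω r (σ₁ * (s * q₁) + σ₂ * (s * q₂)) (s * q₁ + s * q₂) k x := by
  set u := s * q₁ with hu
  set v := s * q₂ with hv
  have hu0 : 0 < u := by positivity
  have hv0 : 0 < v := by positivity
  set δ := N * min v 1 - σ₂ * v with hδdef
  set κ := (σ₁ * u + σ₂ * v) * (u / (u + v)) - σ₁ * u with hκdef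
  have hκ : 0 < κ := by
    have : κ = (σ₂ - σ₁) * u * v / (u + v) := by
      rw [hκdef]; field_simp; ring
    rw [this]
    have := sub_pos.2 hσ
    positivity
  have hδ0 : 0 < δ := sub_pos.2 hδ
  set m := min δ κ / 2 with hm
  have hm0 : 0 < m := by positivity
  set μ := ENNReal.ofReal (2 ^ (-m)) with hμ
  have hμ1 : μ < 1 := ofReal_two_rpow_neg_lt_one hm0
  have hμ0 : μ ≠ 0 := (ENNReal.ofReal_pos.2 (by positivity)).ne'
  have hμt : μ ≠ ⊤ := hμ1.ne_top
  have hdecay {ε : ℝ} (hε : 2 * m ≤ ε) (n : ℕ) :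
      μ⁻¹ ^ n * ENNReal.ofReal (2 ^ (-ε)) ^ n ≤ μ ^ n := by
    rw [← mul_pow]
    gcongr
    calc μ⁻¹ * ENNReal.ofReal (2 ^ (-ε)) ≤ μ⁻¹ * (μ * μ) := by
          gcongr
          rw [hμ, ← ENNReal.ofReal_mul (by positivity), ← Real.rpow_add two_pos]
          gcongr
          · exact one_le_two
          · linarith
      _ = μ := by rw [← mul_assoc, ENNReal.inv_mul_cancel hμ0 hμt, one_mul]
  obtain ⟨C₀, hC₀, hprod⟩ := tsum_rpow_mul_tsum_rpow_le hq₁ hq₂ hμ0 hμ1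
  set Θ := σ₁ * u + σ₂ * v with hΘ
  set A := ENNReal.ofReal (2 ^ Θ) + 1 with hA
  refine ⟨C₀ * (A * (3 * (2 * (1 - μ)⁻¹))), ?_, fun ω _ r hr => ?_⟩
  · refine ENNReal.mul_ne_top hC₀ (ENNReal.mul_ne_top (by finiteness)
      (ENNReal.mul_ne_top (by simp) (ENNReal.mul_ne_top (by simp) ?_)))
    exact ENNReal.inv_ne_top.2 (tsub_pos_of_lt hμ1).ne'
  set E := fun k => ∫⁻ x, ballTerm ω r Θ (u + v) k x with hE
  have hmeas := measurable_ballTerm (ω := ω)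
  have hterm (i j : ℕ) : ∫⁻ x, μ⁻¹ ^ gap i j *
      (ballTerm ω r (σ₁ * u) u (i + 1) x * ballTerm ω r (σ₂ * v) v (j + 1) x) ≤
      A * (μ ^ gap i j * (E i + E (i + 1) + E (j + 1))) := by
    rw [lintegral_const_mul' _ _ (ENNReal.pow_ne_top (ENNReal.inv_ne_top.2 hμ0))]
    rcases le_total i j with h | h
    · rw [gap_of_le h]
      calc _ ≤ μ⁻¹ ^ (j - i) * (ENNReal.ofReal (2 ^ Θ) *
            ENNReal.ofReal (2 ^ (-δ)) ^ (j - i) * E i) := by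
            gcongr
            exact lintegral_ballTerm_mul_le hr hu0.le hv0 h
        _ = ENNReal.ofReal (2 ^ Θ) *
            ((μ⁻¹ ^ (j - i) * ENNReal.ofReal (2 ^ (-δ)) ^ (j - i)) * E i) := by ring
        _ ≤ A * (μ ^ (j - i) * (E i + E (i + 1) + E (j + 1))) := by
            gcongr
            · exact le_self_add
            · exact hdecay (by rw [hm]; linarith [min_le_left δ κ]) _
            · rw [add_assoc]; exact le_self_add
    · rw [gap_comm, gap_of_le h]
      calc _ ≤ μ⁻¹ ^ (i - j) * (ENNReal.ofReal (2 ^ (-κ)) ^ (i - j) * (E (i + 1) + E (j + 1))) := by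
            gcongr
            rw [hE, ← lintegral_add_left (hmeas _ _ _ _),
              ← lintegral_const_mul' _ _ (by finiteness)]
            refine lintegral_mono fun x => ?_
            have := ballTerm_mul_le (ω := ω) (θ₁ := σ₁ * u) (θ₂ := σ₂ * v) hr hu0 hv0
              (Nat.succ_le_succ h) x
            rwa [Nat.succ_sub_succ] at this
        _ = 1 * ((μ⁻¹ ^ (i - j) * ENNReal.ofReal (2 ^ (-κ)) ^ (i - j)) *
            (E (i + 1) + E (j + 1))) := by ring
        _ ≤ A * (μ ^ (i - j) * (E i + E (i + 1) + E (j + 1))) := by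
            gcongr
            · exact le_add_self
            · exact hdecay (by rw [hm]; linarith [min_le_right δ κ]) _
            · exact le_add_self
  have hshift : ∑' k, E (k + 1) ≤ ∑' k, E k :=
    ENNReal.tsum_comp_le_tsum_of_injective (add_left_injective 1) E
  have hrow (F : ℕ → ℝ≥0∞) : ∑' i, ∑' j, μ ^ gap i j * F i ≤ 2 * (1 - μ)⁻¹ * ∑' i, F i := by
    rw [← ENNReal.tsum_mul_left]
    refine ENNReal.tsum_le_tsum fun i => ?_
    rw [ENNReal.tsum_mul_right]
    gcongr
    exact tsum_pow_gap_le μ i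
  calc _ ≤ ∫⁻ x, C₀ * ∑' i, ∑' j, μ⁻¹ ^ gap i j *
        (ballTerm ω r (σ₁ * u) u (i + 1) x * ballTerm ω r (σ₂ * v) v (j + 1) x) := by
        refine lintegral_mono fun x => (hprod _ _).trans (le_of_eq ?_)
        simp_rw [ballTerm_rpow hr hq₁.le, ballTerm_rpow hr hq₂.le, mul_assoc]
        rfl
    _ = C₀ * ∑' i, ∑' j, ∫⁻ x, μ⁻¹ ^ gap i j *
        (ballTerm ω r (σ₁ * u) u (i + 1) x * ballTerm ω r (σ₂ * v) v (j + 1) x) := by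
        have hmm (i j : ℕ) : Measurable fun x => μ⁻¹ ^ gap i j *
            (ballTerm ω r (σ₁ * u) u (i + 1) x * ballTerm ω r (σ₂ * v) v (j + 1) x) :=
          ((hmeas _ _ _ _).mul (hmeas _ _ _ _)).const_mul _
        rw [lintegral_const_mul' _ _ hC₀,
          lintegral_tsum fun i => (Measurable.tsum fun j => hmm i j).aemeasurable]
        simp_rw [lintegral_tsum fun j => (hmm _ j).aemeasurable]
    _ ≤ C₀ * ∑' i, ∑' j, A * (μ ^ gap i j * (E i + E (i + 1) + E (j + 1))) := by
        gcongr with i j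
        exact hterm i j
    _ = C₀ * (A * (∑' i, ∑' j, μ ^ gap i j * E i + ∑' i, ∑' j, μ ^ gap i j * E (i + 1) +
          ∑' i, ∑' j, μ ^ gap i j * E (j + 1))) := by
        simp_rw [ENNReal.tsum_mul_left (a := A)]
        congr 2
        simp_rw [mul_add, ENNReal.tsum_add]
    _ ≤ C₀ * (A * (2 * (1 - μ)⁻¹ * ∑' k, E k + 2 * (1 - μ)⁻¹ * ∑' k, E k +
          2 * (1 - μ)⁻¹ * ∑' k, E k)) := by
        have hrow' := (hrow fun i => E (i + 1)).trans (mul_le_mul_right hshift _)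
        refine mul_le_mul_right (mul_le_mul_right (add_le_add (add_le_add (hrow E) hrow') ?_) _) _
        rw [ENNReal.tsum_comm]
        refine (le_of_eq ?_).trans hrow'
        exact tsum_congr fun i => tsum_congr fun j => by rw [gap_comm]
    _ = _ := by ring

end PotentialProducts

section Potentials

variable {N : ℕ} {ω : Measure (Euc N)}

theorem wolff_ofReal {a p T : ℝ} (hT : 0 < T) (x : Euc N) :
    wolff a p (ENNReal.ofReal T) ω x = ∫⁻ ρ in Ioo 0 T,
      (ω (ball x ρ) / ENNReal.ofReal (ρ ^ ((N : ℝ) - a * p))) ^ (1 / (p - 1)) /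
        ENNReal.ofReal ρ := by
  have : {ρ : ℝ | 0 < ρ ∧ ENNReal.ofReal ρ < ENNReal.ofReal T} = Ioo 0 T := by
    ext ρ
    simp [ENNReal.ofReal_lt_ofReal_iff hT]
  rw [wolff, this]

theorem le_fracMax {γ T τ : ℝ} (hτ : 0 < τ) (hτT : τ < T) (x : Euc N) :
    ω (ball x τ) / ENNReal.ofReal (τ ^ ((N : ℝ) - γ)) ≤ fracMax γ (ENNReal.ofReal T) ω x :=
  le_iSup₂_of_le τ hτ (le_iSup_of_le
    ((ENNReal.ofReal_lt_ofReal_iff (hτ.trans hτT)).2 hτT) le_rfl)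

theorem wolff_le_tsum_ballTerm {a p T : ℝ} (hp : 1 < p) (ha : a * p ≤ N) (hT : 0 < T)
    (x : Euc N) :
    wolff a p (ENNReal.ofReal T) ω x ≤
      ENNReal.ofReal (2 ^ (((N : ℝ) - a * p) * (1 / (p - 1)))) *
        ∑' k, ballTerm ω (2 * T) (((N : ℝ) - a * p) * (1 / (p - 1))) (1 / (p - 1)) (k + 1) x := by
  have hs : 0 ≤ 1 / (p - 1) := by have := sub_pos.2 hp; positivity
  have hσ : 0 ≤ (N : ℝ) - a * p := sub_nonneg.2 ha
  set s := 1 / (p - 1)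
  set σ := (N : ℝ) - a * p
  have hcover : Ioo 0 T ⊆ ⋃ k : ℕ, Ico (T / 2 ^ (k + 1)) (T / 2 ^ k) := by
    intro ρ hρ
    obtain ⟨n, hn1, hn2⟩ := exists_nat_pow_near (one_le_div hρ.1 |>.2 hρ.2.le) one_lt_two
    rw [le_div_iff₀ hρ.1] at hn1
    rw [div_lt_iff₀ hρ.1] at hn2
    by_cases h : T = 2 ^ n * ρ
    · cases n with
      | zero => simp at h; exact absurd h hρ.2.ne'
      | succ n =>
        refine mem_iUnion.2 ⟨n, ?_, ?_⟩
        · rw [div_le_iff₀ (by positivity)]; linarith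
        · rw [lt_div_iff₀ (by positivity), h, pow_succ]
          have : 0 < 2 ^ n * ρ := by have := hρ.1; positivity
          linarith
    · refine mem_iUnion.2 ⟨n, ?_, ?_⟩
      · rw [div_le_iff₀ (by positivity)]; linarith
      · rw [lt_div_iff₀ (by positivity)]
        rw [mul_comm]
        exact lt_of_le_of_ne hn1 (Ne.symm h)
  rw [wolff_ofReal hT, ← ENNReal.tsum_mul_left]
  refine (lintegral_mono_set hcover).trans ((lintegral_iUnion_le _ _).trans ?_)
  refine ENNReal.tsum_le_tsum fun k => ?_
  have hr : 0 < T / 2 ^ (k + 1) := by positivity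
  have hrk : T / 2 ^ k = 2 * (T / 2 ^ (k + 1)) := by rw [pow_succ]; field_simp
  rw [ballTerm, show 2 * T / 2 ^ (k + 1) = T / 2 ^ k by rw [pow_succ]; field_simp, hrk]
  generalize T / 2 ^ (k + 1) = r at hr
  calc _ ≤ ∫⁻ ρ in Ico r (2 * r),
        (ω (ball x (2 * r)) / ENNReal.ofReal (r ^ σ)) ^ s / ENNReal.ofReal r := by
        refine setLIntegral_mono' measurableSet_Ico fun ρ hρ => ?_
        have h1 : ball x ρ ⊆ ball x (2 * r) := ball_subset_ball hρ.2.le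
        have h2 := hρ.1
        gcongr
    _ = _ := by
        rw [setLIntegral_const, Real.volume_Ico, show 2 * r - r = r by ring,
          ENNReal.div_mul_cancel (by simpa using hr) ENNReal.ofReal_ne_top,
          div_ofReal_rpow_rpow hr hs, ← mul_assoc, ← ENNReal.ofReal_mul (by positivity)]
        congr 2
        rw [Real.mul_rpow zero_le_two hr.le, ← mul_assoc, ← Real.rpow_add two_pos]
        simp

theorem rpow_mul_measure_ball_le_wolff_rpow {a p T q τ τ' : ℝ} (hp : 1 < p) (ha : a * p ≤ N)
    (hq : 0 ≤ q) (hτ : 0 < τ) (hττ' : τ < τ') (hT : τ' ≤ T) (x : Euc N) :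
    ENNReal.ofReal (τ' ^ (-(((N : ℝ) - a * p) * (q / (p - 1))))) * ω (ball x τ) ^ (q / (p - 1)) *
        ENNReal.ofReal ((τ' - τ) / τ') ^ q ≤
      wolff a p (ENNReal.ofReal T) ω x ^ q := by
  have hs : 0 ≤ 1 / (p - 1) := by have := sub_pos.2 hp; positivity
  have hσ : 0 ≤ (N : ℝ) - a * p := sub_nonneg.2 ha
  have hτ' := hτ.trans hττ'
  have key : (ω (ball x τ) / ENNReal.ofReal (τ' ^ ((N : ℝ) - a * p))) ^ (1 / (p - 1)) *
      ENNReal.ofReal ((τ' - τ) / τ') ≤ wolff a p (ENNReal.ofReal T) ω x := by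
    rw [wolff_ofReal (hτ'.trans_le hT)]
    calc _ = ∫⁻ ρ in Ioo τ τ', (ω (ball x τ) /
          ENNReal.ofReal (τ' ^ ((N : ℝ) - a * p))) ^ (1 / (p - 1)) / ENNReal.ofReal τ' := by
          rw [setLIntegral_const, Real.volume_Ioo, ENNReal.ofReal_div_of_pos hτ']
          simp only [div_eq_mul_inv]
          ring
      _ ≤ ∫⁻ ρ in Ioo τ τ', (ω (ball x ρ) /
          ENNReal.ofReal (ρ ^ ((N : ℝ) - a * p))) ^ (1 / (p - 1)) / ENNReal.ofReal ρ := by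
          refine setLIntegral_mono' measurableSet_Ioo fun ρ hρ => ?_
          have h1 : ball x τ ⊆ ball x ρ := ball_subset_ball hρ.1.le
          have h2 := hρ.2.le
          have h3 := hτ.trans hρ.1
          gcongr
      _ ≤ _ := lintegral_mono_set (Ioo_subset_Ioo hτ.le hT)
  refine le_trans (le_of_eq ?_) (ENNReal.rpow_le_rpow key hq)
  rw [ENNReal.mul_rpow_of_nonneg _ _ hq, ← ENNReal.rpow_mul, one_div_mul_eq_div,
    div_ofReal_rpow_rpow hτ' (div_nonneg hq (sub_pos.2 hp).le)]

/-- Interpolation between Wolff potentials by Hölder's inequality. -/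
theorem wolff_rpow_add_le {a₁ a₂ p T q₁ q₂ : ℝ} (hp : 1 < p) (hq₁ : 0 < q₁) (hq₂ : 0 < q₂)
    (hT : 0 < T) (x : Euc N) :
    wolff ((a₁ * q₁ + a₂ * q₂) / (q₁ + q₂)) p (ENNReal.ofReal T) ω x ^ (q₁ + q₂) ≤
      wolff a₁ p (ENNReal.ofReal T) ω x ^ q₁ * wolff a₂ p (ENNReal.ofReal T) ω x ^ q₂ := by
  have hs : 0 ≤ 1 / (p - 1) := by have := sub_pos.2 hp; positivity
  have hq : 0 < q₁ + q₂ := by positivity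
  simp_rw [wolff_ofReal hT]
  set s := 1 / (p - 1)
  set f : ℝ → ℝ → ℝ≥0∞ := fun a ρ =>
    (ω (ball x ρ) / ENNReal.ofReal (ρ ^ ((N : ℝ) - a * p))) ^ s / ENNReal.ofReal ρ with hf
  have hball : Measurable fun ρ => ω (ball x ρ) :=
    Monotone.measurable fun ρ ρ' h => measure_mono (ball_subset_ball h)
  have hmeas (a : ℝ) : AEMeasurable (f a) (volume.restrict (Ioo 0 T)) := by
    refine (((hball.div ?_).pow_const _).div ENNReal.measurable_ofReal).aemeasurable
    exact ENNReal.measurable_ofReal.comp (measurable_id.pow_const _)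
  have hsum : q₁ / (q₁ + q₂) + q₂ / (q₁ + q₂) = 1 := by field_simp
  have hform (a : ℝ) {ρ : ℝ} (hρ : 0 < ρ) :
      f a ρ = ENNReal.ofReal (ρ ^ (-(((N : ℝ) - a * p) * s) - 1)) * ω (ball x ρ) ^ s := by
    simp only [hf]
    rw [div_ofReal_rpow_rpow hρ hs, ENNReal.div_eq_inv_mul, ← ENNReal.ofReal_inv_of_pos hρ,
      ← mul_assoc, ← ENNReal.ofReal_mul (by positivity), ← Real.rpow_neg_one,
      ← Real.rpow_add hρ]
    congr 3
    ring
  have hpt : ∀ ρ ∈ Ioo 0 T, f ((a₁ * q₁ + a₂ * q₂) / (q₁ + q₂)) ρ ≤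
      f a₁ ρ ^ (q₁ / (q₁ + q₂)) * f a₂ ρ ^ (q₂ / (q₁ + q₂)) := by
    intro ρ hρ
    have hρ0 := hρ.1
    rw [hform _ hρ0, hform _ hρ0, hform _ hρ0, ENNReal.mul_rpow_of_nonneg _ _ (by positivity),
      ENNReal.mul_rpow_of_nonneg _ _ (by positivity), mul_mul_mul_comm,
      ENNReal.ofReal_rpow_of_nonneg (by positivity) (by positivity),
      ENNReal.ofReal_rpow_of_nonneg (by positivity) (by positivity),
      ← ENNReal.ofReal_mul (by positivity), ← ENNReal.rpow_add_of_nonneg _ _ (by positivity)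
      (by positivity), hsum, ENNReal.rpow_one, ← Real.rpow_mul hρ0.le, ← Real.rpow_mul hρ0.le,
      ← Real.rpow_add hρ0]
    refine le_of_eq ?_
    congr 3
    field_simp
    ring
  have hH := (setLIntegral_mono' measurableSet_Ioo hpt).trans
    (ENNReal.lintegral_mul_norm_pow_le (hmeas a₁) (hmeas a₂) (by positivity) (by positivity) hsum)
  refine (ENNReal.rpow_le_rpow hH hq.le).trans (le_of_eq ?_)
  rw [ENNReal.mul_rpow_of_nonneg _ _ hq.le, ← ENNReal.rpow_mul, ← ENNReal.rpow_mul,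
    div_mul_cancel₀ _ hq.ne', div_mul_cancel₀ _ hq.ne']

end Potentials

section ConcentratedMeasures

variable {N : ℕ} {ω : Measure (Euc N)} {z : Euc N} {R : ℝ}

theorem measure_ball_eq_zero_of_concentrated (hz : ω (closedBall z R)ᶜ = 0) {x : Euc N} {ρ : ℝ}
    (h : R + ρ ≤ dist x z) : ω (ball x ρ) = 0 := by
  refine measure_mono_null (fun y hy => ?_) hz
  rw [mem_ball] at hy
  rw [mem_compl_iff, mem_closedBall, not_le]
  have := dist_triangle_left x z y
  linarith

theorem measure_ball_eq_univ_of_concentrated (hz : ω (closedBall z R)ᶜ = 0) {x : Euc N} {ρ : ℝ}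
    (h : dist x z + R < ρ) : ω (ball x ρ) = ω univ := by
  refine measure_congr (eventuallyEq_univ.2 ?_)
  refine measure_mono_null (compl_subset_compl.2 fun y hy => ?_) hz
  rw [mem_closedBall] at hy
  have := dist_triangle_right y x z
  rw [mem_ball]
  linarith

theorem lintegral_measure_ball_rpow_le_of_concentrated (hz : ω (closedBall z R)ᶜ = 0) {t : ℝ}
    (ht : 0 < t) (ρ : ℝ) :
    ∫⁻ x, ω (ball x ρ) ^ t ≤ ω univ ^ t * volume (ball z (R + ρ)) := by
  rw [← lintegral_indicator_const measurableSet_ball]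
  refine lintegral_mono fun x => ?_
  by_cases hx : x ∈ ball z (R + ρ)
  · simp only [indicator_of_mem hx]
    gcongr
    exact subset_univ _
  · rw [measure_ball_eq_zero_of_concentrated hz (not_lt.1 hx), ENNReal.zero_rpow_of_pos ht]
    exact zero_le

theorem lintegral_ballTerm_ne_top_of_concentrated [IsFiniteMeasure ω]
    (hz : ω (closedBall z R)ᶜ = 0) {t : ℝ} (ht : 0 < t) (r θ : ℝ) (k : ℕ) :
    ∫⁻ x, ballTerm ω r θ t k x ≠ ⊤ := by
  unfold ballTerm
  rw [lintegral_const_mul' _ _ ENNReal.ofReal_ne_top]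
  refine ENNReal.mul_ne_top ENNReal.ofReal_ne_top (ne_top_of_le_ne_top ?_
    (lintegral_measure_ball_rpow_le_of_concentrated hz ht _))
  exact ENNReal.mul_ne_top (ENNReal.rpow_ne_top_of_nonneg ht.le (measure_ne_top _ _))
    measure_ball_lt_top.ne

theorem const_mul_volume_ball_le_lintegral {f : Euc N → ℝ≥0∞} {c : ℝ≥0∞} {ρ : ℝ}
    (h : ∀ x ∈ ball z ρ, c ≤ f x) : c * volume (ball z ρ) ≤ ∫⁻ x, f x := by
  rw [← setLIntegral_const]
  exact (setLIntegral_mono' measurableSet_ball h).trans (setLIntegral_le_lintegral _ _)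

/-- At the scales beyond the diameter of the support, the dyadic terms are dominated by the
fractional maximal function. -/
theorem lintegral_ballTerm_le_lintegral_fracMax (hz : ω (closedBall z R)ᶜ = 0) (hR : 0 < R)
    {γ t : ℝ} (hγ : γ ≤ N) (ht : 0 < t) {k : ℕ} (hk : k ≤ 1) :
    ∫⁻ x, ballTerm ω (4 * R) (((N : ℝ) - γ) * t) t k x ≤
      ENNReal.ofReal (10 ^ (N : ℝ)) * ∫⁻ x, fracMax γ (ENNReal.ofReal (2 * R)) ω x ^ t := by
  have hσ : 0 ≤ (N : ℝ) - γ := sub_nonneg.2 hγ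
  have hlow : 2 * R ≤ 4 * R / 2 ^ k := by
    interval_cases k
    · rw [pow_zero, div_one]; linarith
    · rw [pow_one]; linarith
  have hup : 4 * R / 2 ^ k ≤ 4 * R := by
    exact div_le_self (by positivity) (one_le_pow₀ one_le_two)
  have hc (x) (hx : x ∈ ball z (R / 2)) :
      ENNReal.ofReal ((3 / 2 * R) ^ (-(((N : ℝ) - γ) * t))) * ω univ ^ t ≤
        fracMax γ (ENNReal.ofReal (2 * R)) ω x ^ t := by
    rw [← div_ofReal_rpow_rpow (by positivity) ht.le,
      ← measure_ball_eq_univ_of_concentrated hz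
        (show dist x z + R < 3 / 2 * R by rw [mem_ball] at hx; linarith)]
    exact ENNReal.rpow_le_rpow (le_fracMax (by positivity) (by linarith) x) ht.le
  unfold ballTerm
  rw [lintegral_const_mul' _ _ ENNReal.ofReal_ne_top]
  calc _ ≤ ENNReal.ofReal ((3 / 2 * R) ^ (-(((N : ℝ) - γ) * t))) *
        (ω univ ^ t * volume (ball z (5 * R))) := by
        refine mul_le_mul' (ENNReal.ofReal_le_ofReal ?_)
          ((lintegral_measure_ball_rpow_le_of_concentrated hz ht _).trans ?_)
        · exact Real.rpow_le_rpow_of_nonpos (by positivity) (by linarith)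
            (neg_nonpos.2 (by positivity))
        · gcongr
          linarith
    _ = ENNReal.ofReal (10 ^ (N : ℝ)) * (ENNReal.ofReal ((3 / 2 * R) ^ (-(((N : ℝ) - γ) * t))) *
        ω univ ^ t * volume (ball z (R / 2))) := by
        rw [volume_ball_ratio (show 0 < 5 * R by positivity) (half_pos hR) z z,
          show 5 * R / (R / 2) = 10 by field_simp; norm_num]
        ring
    _ ≤ _ := mul_le_mul_right (const_mul_volume_ball_le_lintegral hc) _

theorem lintegral_iSup_ballTerm_le_lintegral_fracMax [SFinite ω] (hz : ω (closedBall z R)ᶜ = 0)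
    (hR : 0 < R) {γ t : ℝ} (hγ : γ ≤ N) (ht : 0 < t) :
    ∫⁻ x, ⨆ k, ballTerm ω (4 * R) (((N : ℝ) - γ) * t) t k x ≤
      (2 * ENNReal.ofReal (10 ^ (N : ℝ)) + 1) *
        ∫⁻ x, fracMax γ (ENNReal.ofReal (2 * R)) ω x ^ t := by
  have hm (k : ℕ) := measurable_ballTerm (ω := ω) (4 * R) (((N : ℝ) - γ) * t) t k
  calc _ ≤ ∫⁻ x, (ballTerm ω (4 * R) (((N : ℝ) - γ) * t) t 0 x +
        ballTerm ω (4 * R) (((N : ℝ) - γ) * t) t 1 x) +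
        fracMax γ (ENNReal.ofReal (2 * R)) ω x ^ t := by
        refine lintegral_mono fun x => iSup_le fun k => ?_
        match k with
        | 0 => rw [add_assoc]; exact le_self_add
        | 1 => exact le_add_self.trans le_self_add
        | k + 2 =>
          refine le_add_left ?_
          rw [ballTerm_eq (by positivity) ht.le]
          refine ENNReal.rpow_le_rpow (le_fracMax (by positivity) ?_ x) ht.le
          rw [div_lt_iff₀ (by positivity), pow_add]
          have : (1 : ℝ) ≤ 2 ^ k := one_le_pow₀ one_le_two
          nlinarith
    _ ≤ _ := by
        rw [lintegral_add_left (by exact (hm 0).add (hm 1)), lintegral_add_left (hm 0), add_mul, one_mul,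
          two_mul (ENNReal.ofReal _), add_mul]
        gcongr <;> exact lintegral_ballTerm_le_lintegral_fracMax hz hR hγ ht (by norm_num)

/-- The fractional maximal function is controlled by the Wolff potential of the same order. -/
theorem lintegral_fracMax_rpow_le_lintegral_wolff_rpow (N : ℕ) {a γ p q : ℝ} (hp : 1 < p)
    (hq : 0 < q) (haγ : a * p = γ) (hγ : γ ≤ N) :
    ∃ C : ℝ≥0∞, C ≠ ⊤ ∧ ∀ (ω : Measure (Euc N)) (z : Euc N) (R : ℝ), 0 < R →
      ω (closedBall z R)ᶜ = 0 →
      ∫⁻ x, fracMax γ (ENNReal.ofReal (2 * R)) ω x ^ (q / (p - 1)) ≤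
        C * ∫⁻ x, wolff a p (ENNReal.ofReal (2 * R)) ω x ^ q := by
  have ht : 0 < q / (p - 1) := div_pos hq (sub_pos.2 hp)
  have hσ : 0 ≤ (N : ℝ) - γ := sub_nonneg.2 hγ
  set t := q / (p - 1) with htdef
  set A := ENNReal.ofReal (2 ^ (((N : ℝ) - γ) * t)) with hA
  have hscale {ρ : ℝ} (hρ : 0 < ρ) : ENNReal.ofReal (ρ ^ (-(((N : ℝ) - γ) * t))) =
      A * ENNReal.ofReal ((2 * ρ) ^ (-(((N : ℝ) - γ) * t))) := by
    rw [hA, ← ENNReal.ofReal_mul (by positivity), Real.mul_rpow zero_le_two hρ.le, ← mul_assoc,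
      ← Real.rpow_add two_pos, add_neg_cancel, Real.rpow_zero, one_mul]
  have hcancel {b : ℝ} (hb : 0 < b) (y : ℝ≥0∞) :
      A * y = A * ENNReal.ofReal b ^ q * (y * ENNReal.ofReal b⁻¹ ^ q) := by
    have : ENNReal.ofReal b ^ q * ENNReal.ofReal b⁻¹ ^ q = 1 := by
      rw [← ENNReal.mul_rpow_of_nonneg _ _ hq.le, ← ENNReal.ofReal_mul hb.le,
        mul_inv_cancel₀ hb.ne', ENNReal.ofReal_one, ENNReal.one_rpow]
    rw [mul_mul_mul_comm, this, mul_one]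
  refine ⟨A * ENNReal.ofReal 2 ^ q +
    ENNReal.ofReal (6 ^ (N : ℝ)) * (A * ENNReal.ofReal 4 ^ q), ?_, fun ω z R hR hz => ?_⟩
  · have h (b : ℝ) : ENNReal.ofReal b ^ q ≠ ⊤ :=
      ENNReal.rpow_ne_top_of_nonneg hq.le ENNReal.ofReal_ne_top
    have hA' : A ≠ ⊤ := ENNReal.ofReal_ne_top
    exact ENNReal.add_ne_top.2 ⟨ENNReal.mul_ne_top hA' (h 2),
      ENNReal.mul_ne_top ENNReal.ofReal_ne_top (ENNReal.mul_ne_top hA' (h 4))⟩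
  set W := fun x => wolff a p (ENNReal.ofReal (2 * R)) ω x with hW
  set c := ENNReal.ofReal (R ^ (-(((N : ℝ) - γ) * t))) * ω univ ^ t with hc
  have hlower {τ τ' : ℝ} (hτ : 0 < τ) (hττ' : τ < τ') (hT : τ' ≤ 2 * R) (x : Euc N) :=
    rpow_mul_measure_ball_le_wolff_rpow (ω := ω) hp (haγ.trans_le hγ) hq.le hτ hττ' hT x
  simp only [haγ, ← htdef] at hlower
  have hpt (x : Euc N) : fracMax γ (ENNReal.ofReal (2 * R)) ω x ^ t ≤
      A * ENNReal.ofReal 2 ^ q * W x ^ q + (ball z (3 * R)).indicator (fun _ => c) x := by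
    rw [← ENNReal.le_rpow_inv_iff ht]
    refine iSup_le fun τ => iSup_le fun hτ => iSup_le fun hτR => ?_
    rw [ENNReal.ofReal_lt_ofReal_iff (by positivity)] at hτR
    rw [ENNReal.le_rpow_inv_iff ht, div_ofReal_rpow_rpow hτ ht.le]
    rcases le_or_gt τ R with h | h
    · refine le_add_right ?_
      have := hlower hτ (show τ < 2 * τ by linarith) (by linarith) x
      rw [show (2 * τ - τ) / (2 * τ) = 2⁻¹ by field_simp; norm_num] at this
      calc _ = A * ENNReal.ofReal 2 ^ q * (ENNReal.ofReal ((2 * τ) ^ (-(((N : ℝ) - γ) * t))) *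
            ω (ball x τ) ^ t * ENNReal.ofReal 2⁻¹ ^ q) := by
            rw [hscale hτ, mul_assoc, hcancel two_pos]
        _ ≤ _ := mul_le_mul_right this _
    · by_cases hx : x ∈ ball z (3 * R)
      · rw [indicator_of_mem hx]
        refine le_add_left (mul_le_mul' (ENNReal.ofReal_le_ofReal ?_)
          (ENNReal.rpow_le_rpow (measure_mono (subset_univ _)) ht.le))
        exact Real.rpow_le_rpow_of_nonpos hR h.le (neg_nonpos.2 (by positivity))
      · rw [mem_ball, not_lt] at hx
        rw [measure_ball_eq_zero_of_concentrated hz (by linarith), ENNReal.zero_rpow_of_pos ht,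
          mul_zero]
        exact zero_le
  have hind : c * volume (ball z (R / 2)) ≤ A * ENNReal.ofReal 4 ^ q * ∫⁻ x, W x ^ q := by
    rw [← lintegral_const_mul' _ _ (ENNReal.mul_ne_top ENNReal.ofReal_ne_top
      (ENNReal.rpow_ne_top_of_nonneg hq.le ENNReal.ofReal_ne_top))]
    refine const_mul_volume_ball_le_lintegral fun x hx => ?_
    have := hlower (show 0 < 3 / 2 * R by positivity) (show 3 / 2 * R < 2 * R by linarith) le_rfl x
    rw [measure_ball_eq_univ_of_concentrated hz
        (show dist x z + R < 3 / 2 * R by rw [mem_ball] at hx; linarith),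
      show (2 * R - 3 / 2 * R) / (2 * R) = 4⁻¹ by field_simp; norm_num] at this
    refine le_trans (le_of_eq ?_) (mul_le_mul_right this _)
    rw [hc, hscale hR, mul_assoc, hcancel four_pos]
  calc _ ≤ ∫⁻ x, A * ENNReal.ofReal 2 ^ q * W x ^ q +
        (ball z (3 * R)).indicator (fun _ => c) x := lintegral_mono hpt
    _ = A * ENNReal.ofReal 2 ^ q * (∫⁻ x, W x ^ q) +
        ENNReal.ofReal (6 ^ (N : ℝ)) * (c * volume (ball z (R / 2))) := by
        rw [lintegral_add_right _ (measurable_const.indicator measurableSet_ball),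
          lintegral_const_mul' _ _ (ENNReal.mul_ne_top ENNReal.ofReal_ne_top
          (ENNReal.rpow_ne_top_of_nonneg hq.le ENNReal.ofReal_ne_top)),
          lintegral_indicator_const measurableSet_ball,
          volume_ball_ratio (show 0 < 3 * R by positivity) (half_pos hR) z z,
          show 3 * R / (R / 2) = 6 by field_simp; norm_num]
        ring
    _ ≤ _ := by
        rw [add_mul, mul_assoc (ENNReal.ofReal (6 ^ (N : ℝ)))]
        gcongr

end ConcentratedMeasures

section Comparison

/-- Products of Wolff potentials are controlled by a fractional maximal function. -/
theorem lintegral_wolff_mul_wolff_le_lintegral_fracMax (N : ℕ) {α β p q₁ q₂ : ℝ}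
    (hβ : 0 < β) (hq₁ : 0 < q₁) (hq₂ : 0 < q₂) (hαβ : β < α) (hp : 1 < p) (hαN : α * p < N)
    (hq : p - 1 < q₁ + q₂) (hq₂' : q₂ < (N : ℝ) * (p - 1) / ((N : ℝ) - β * p)) :
    ∃ C : ℝ≥0∞, C ≠ ⊤ ∧ ∀ (ω : Measure (Euc N)) [IsFiniteMeasure ω] (z : Euc N) (R : ℝ), 0 < R →
      ω (closedBall z R)ᶜ = 0 →
      ∫⁻ x, wolff α p (ENNReal.ofReal (2 * R)) ω x ^ q₁ *
          wolff β p (ENNReal.ofReal (2 * R)) ω x ^ q₂ ≤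
        C * ∫⁻ x, fracMax ((α * p * q₁ + β * p * q₂) / (q₁ + q₂)) (ENNReal.ofReal (2 * R)) ω x ^
          ((q₁ + q₂) / (p - 1)) := by
  have hp0 : 0 < p - 1 := sub_pos.2 hp
  have hβN : β * p < N := (mul_lt_mul_of_pos_right hαβ (by linarith)).trans hαN
  have hσβ : 0 < (N : ℝ) - β * p := sub_pos.2 hβN
  have hs : 0 < 1 / (p - 1) := by positivity
  have hqq : 0 < q₁ + q₂ := by positivity
  have hγ0 : 0 < (α * p * q₁ + β * p * q₂) / (q₁ + q₂) := by
    have := hβ.trans hαβ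
    positivity
  have hγN : (α * p * q₁ + β * p * q₂) / (q₁ + q₂) < N := by
    rw [div_lt_iff₀ hqq]
    nlinarith
  have hδ : ((N : ℝ) - β * p) * (1 / (p - 1) * q₂) < N * min (1 / (p - 1) * q₂) 1 := by
    have hv : 0 < 1 / (p - 1) * q₂ := by positivity
    rcases min_choice (1 / (p - 1) * q₂) 1 with h | h <;> rw [h]
    · have hβp : 0 < β * p := by positivity
      gcongr
      linarith
    · rw [lt_div_iff₀ hσβ] at hq₂'
      rw [mul_one, one_div_mul_eq_div, mul_div_assoc', div_lt_iff₀ hp0]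
      linarith
  have ht : 1 < (q₁ + q₂) / (p - 1) := (one_lt_div hp0).2 hq
  set γ := (α * p * q₁ + β * p * q₂) / (q₁ + q₂) with hγdef
  obtain ⟨C₁, hC₁, h₁⟩ := lintegral_tsum_ballTerm_product_le N (σ₁ := N - α * p)
    (σ₂ := N - β * p) hs hq₁ hq₂ (by nlinarith) hδ
  obtain ⟨C₂, hC₂, h₂⟩ := tsum_lintegral_ballTerm_le N
    (show (N : ℝ) - γ < N by linarith) ht
  have hexp : 1 / (p - 1) * q₁ + 1 / (p - 1) * q₂ = (q₁ + q₂) / (p - 1) := by ring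
  have hscale : ((N : ℝ) - α * p) * (1 / (p - 1) * q₁) +
      ((N : ℝ) - β * p) * (1 / (p - 1) * q₂) = ((N : ℝ) - γ) * ((q₁ + q₂) / (p - 1)) := by
    rw [hγdef]
    field_simp
    ring
  rw [hexp, hscale] at h₁
  set A₁ := ENNReal.ofReal (2 ^ (((N : ℝ) - α * p) * (1 / (p - 1)))) ^ q₁ with hA₁
  set A₂ := ENNReal.ofReal (2 ^ (((N : ℝ) - β * p) * (1 / (p - 1)))) ^ q₂ with hA₂
  have hA₁t : A₁ ≠ ⊤ := ENNReal.rpow_ne_top_of_nonneg hq₁.le ENNReal.ofReal_ne_top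
  have hA₂t : A₂ ≠ ⊤ := ENNReal.rpow_ne_top_of_nonneg hq₂.le ENNReal.ofReal_ne_top
  refine ⟨A₁ * A₂ * (C₁ * (C₂ * (2 * ENNReal.ofReal (10 ^ (N : ℝ)) + 1))), by finiteness,
    fun ω _ z R hR hz => ?_⟩
  have hr : 0 < 4 * R := by positivity
  calc _ ≤ ∫⁻ x, A₁ * A₂ *
        ((∑' k, ballTerm ω (4 * R) (((N : ℝ) - α * p) * (1 / (p - 1)))
            (1 / (p - 1)) (k + 1) x) ^ q₁ *
          (∑' k, ballTerm ω (4 * R) (((N : ℝ) - β * p) * (1 / (p - 1)))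
            (1 / (p - 1)) (k + 1) x) ^ q₂) := by
        refine lintegral_mono fun x => ?_
        have h2 : 0 < 2 * R := by positivity
        rw [mul_mul_mul_comm, hA₁, hA₂, ← ENNReal.mul_rpow_of_nonneg _ _ hq₁.le,
          ← ENNReal.mul_rpow_of_nonneg _ _ hq₂.le, show 4 * R = 2 * (2 * R) by ring]
        exact mul_le_mul' (ENNReal.rpow_le_rpow (wolff_le_tsum_ballTerm hp hαN.le h2 x) hq₁.le)
          (ENNReal.rpow_le_rpow (wolff_le_tsum_ballTerm hp hβN.le h2 x) hq₂.le)
    _ ≤ _ := by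
        rw [lintegral_const_mul' _ _ (ENNReal.mul_ne_top hA₁t hA₂t), mul_assoc (A₁ * A₂),
          mul_assoc C₁, mul_assoc C₂]
        refine mul_le_mul_right ((h₁ ω _ hr).trans (mul_le_mul_right ((h₂ ω _ hr fun k => ?_).trans
          (mul_le_mul_right ?_ _)) _)) _
        · exact lintegral_ballTerm_ne_top_of_concentrated hz (by linarith) _ _ _
        · exact lintegral_iSup_ballTerm_le_lintegral_fracMax hz hR hγN.le (by linarith)

theorem exists_concentrated_closedBall {N : ℕ} {ω : Measure (Euc N)} [IsLocallyFiniteMeasure ω]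
    {S : Set (Euc N)} {R : ℝ} (hS : ω Sᶜ = 0) (hdiam : ediam S ≤ ENNReal.ofReal R) (hR : 0 < R) :
    IsFiniteMeasure ω ∧ ∃ z, ω (closedBall z R)ᶜ = 0 := by
  obtain ⟨z, hz⟩ : ∃ z, S ⊆ closedBall z R := by
    rcases S.eq_empty_or_nonempty with rfl | ⟨z, hz⟩
    · exact ⟨0, empty_subset _⟩
    · refine ⟨z, fun y hy => ?_⟩
      have := (edist_le_ediam_of_mem hy hz).trans hdiam
      rwa [edist_dist, ENNReal.ofReal_le_ofReal_iff hR.le] at this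
  have hz0 : ω (closedBall z R)ᶜ = 0 := measure_mono_null (compl_subset_compl.2 hz) hS
  refine ⟨⟨?_⟩, z, hz0⟩
  rw [← union_compl_self (closedBall z R)]
  refine (measure_union_le _ _).trans_lt ?_
  rw [hz0, add_zero]
  exact (isCompact_closedBall z R).measure_lt_top

end Comparison

/-- Truncated version of the comparability of the fractional
maximal function, the intermediate Wolff potential and the product of Wolff
potentials, with constants independent of `R`, for measures whose support has
diameter at most `R`. -/
theorem stmt10 (N : ℕ) (α β p q1 q2 : ℝ) (hα : 0 < α) (hβ : 0 < β)
    (hq1 : 0 < q1) (hq2 : 0 < q2) (hαβ : β < α) (hp : 1 < p) (hpN : p < (N : ℝ) / α)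
    (hq : p - 1 < q1 + q2) (hq2' : q2 < (N : ℝ) * (p - 1) / ((N : ℝ) - β * p))
    (hγ : (α * p * q1 + β * p * q2) / (q1 + q2) < (N : ℝ)) :
    ∃ C > 0, ∀ R : ℝ, 0 < R → ∀ ω : Measure (Euc N), IsLocallyFiniteMeasure ω →
      (∃ S : Set (Euc N), ω Sᶜ = 0 ∧ EMetric.diam S ≤ ENNReal.ofReal R) →
      ((∫⁻ x, (fracMax ((α * p * q1 + β * p * q2) / (q1 + q2)) (ENNReal.ofReal (2 * R)) ω x) ^
            ((q1 + q2) / (p - 1))) ≤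
          ENNReal.ofReal C *
            ∫⁻ x, (wolff ((α * q1 + β * q2) / (q1 + q2)) p (ENNReal.ofReal (2 * R)) ω x) ^
              (q1 + q2)) ∧
      ((∫⁻ x, (wolff ((α * q1 + β * q2) / (q1 + q2)) p (ENNReal.ofReal (2 * R)) ω x) ^
            (q1 + q2)) ≤
          ENNReal.ofReal C *
            ∫⁻ x, (fracMax ((α * p * q1 + β * p * q2) / (q1 + q2)) (ENNReal.ofReal (2 * R)) ω x) ^
              ((q1 + q2) / (p - 1))) ∧
      ((∫⁻ x, (wolff ((α * q1 + β * q2) / (q1 + q2)) p (ENNReal.ofReal (2 * R)) ω x) ^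
            (q1 + q2)) ≤
          ENNReal.ofReal C *
            ∫⁻ x, (wolff α p (ENNReal.ofReal (2 * R)) ω x) ^ q1 *
              (wolff β p (ENNReal.ofReal (2 * R)) ω x) ^ q2) ∧
      ((∫⁻ x, (wolff α p (ENNReal.ofReal (2 * R)) ω x) ^ q1 *
            (wolff β p (ENNReal.ofReal (2 * R)) ω x) ^ q2) ≤
          ENNReal.ofReal C *
            ∫⁻ x, (wolff ((α * q1 + β * q2) / (q1 + q2)) p (ENNReal.ofReal (2 * R)) ω x) ^
              (q1 + q2)) ∧
      ((∫⁻ x, (fracMax ((α * p * q1 + β * p * q2) / (q1 + q2)) (ENNReal.ofReal (2 * R)) ω x) ^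
            ((q1 + q2) / (p - 1))) ≤
          ENNReal.ofReal C *
            ∫⁻ x, (wolff α p (ENNReal.ofReal (2 * R)) ω x) ^ q1 *
              (wolff β p (ENNReal.ofReal (2 * R)) ω x) ^ q2) ∧
      ((∫⁻ x, (wolff α p (ENNReal.ofReal (2 * R)) ω x) ^ q1 *
            (wolff β p (ENNReal.ofReal (2 * R)) ω x) ^ q2) ≤
          ENNReal.ofReal C *
            ∫⁻ x, (fracMax ((α * p * q1 + β * p * q2) / (q1 + q2)) (ENNReal.ofReal (2 * R)) ω x) ^
              ((q1 + q2) / (p - 1))) := by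
  have hαN : α * p < N := by rwa [lt_div_iff₀ hα, mul_comm] at hpN
  have hqq : 0 < q1 + q2 := by positivity
  obtain ⟨C₁, hC₁, hMW⟩ := lintegral_fracMax_rpow_le_lintegral_wolff_rpow N
    (a := (α * q1 + β * q2) / (q1 + q2)) hp hqq (by ring) hγ.le
  obtain ⟨C₂, hC₂, hPM⟩ := lintegral_wolff_mul_wolff_le_lintegral_fracMax N hβ hq1 hq2 hαβ hp hαN
    hq hq2'
  set K := C₁ + C₂ + C₂ * C₁ + 1 with hK
  have hKt : K ≠ ⊤ := by finiteness
  have hK1 : 1 ≤ K := le_add_self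
  have hC₁K : C₁ ≤ K := by rw [hK, add_assoc, add_assoc]; exact le_self_add
  have hC₂K : C₂ ≤ K := by rw [hK, add_assoc, add_assoc]; exact le_add_left le_self_add
  have hC₁₂K : C₂ * C₁ ≤ K := le_add_right le_add_self
  refine ⟨K.toReal, ENNReal.toReal_pos (zero_lt_one.trans_le hK1).ne' hKt,
    fun R hR ω _ ⟨S, hS, hdiam⟩ => ?_⟩
  obtain ⟨_, z, hz⟩ := exists_concentrated_closedBall hS hdiam hR
  rw [ENNReal.ofReal_toReal hKt]
  have h1 := hMW ω z R hR hz
  have h2 := hPM ω z R hR hz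
  have h3 := lintegral_mono (μ := volume) fun x =>
    wolff_rpow_add_le (ω := ω) (a₁ := α) (a₂ := β) hp hq1 hq2
    (show 0 < 2 * R by positivity) x
  refine ⟨h1.trans (mul_le_mul_left hC₁K _), (h3.trans h2).trans (mul_le_mul_left hC₂K _),
    h3.trans (le_mul_of_one_le_left' hK1), ?_,
    (h1.trans (mul_le_mul_right h3 _)).trans (mul_le_mul_left hC₁K _),
    h2.trans (mul_le_mul_left hC₂K _)⟩
  refine (h2.trans (mul_le_mul_right h1 _)).trans ?_
  rw [← mul_assoc]
  exact mul_le_mul_left hC₁₂K _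
end
end

section
/- Let s1,s2>0 and 0<α2<α1<N. Set a = 1 + ((s1+s2)/(s1·s2·(α1−α2)))² + 2^{(N−α1)s1+(N−α2)s2+1}. There exist constants C=C(N,α1,α2,s1,s2)>0 and ε0=ε0(N,α1,α2,s1,s2)>0 such that for every nonnegative Radon measure μ on ℝ^N, every R∈(0,∞], every ε∈(0,ε0) and every λ>0: if the set {x : L^{2R}_{α1,s1}[μ](x)·L^{2R}_{α2,s2}[μ](x) > ε^{1/2}λ} has finite Lebesgue measure, then |{L^R_{α1,s1}[μ]·L^R_{α2,s2}[μ] > aλ} ∩ {(M^{2R}_{(α1s1+α2s2)/(s1+s2)}[μ])^{s1+s2} ≤ ελ}| ≤ C·ε^{N/(2s2(N−α2))}·|{L^{2R}_{α1,s1}[μ]·L^{2R}_{α2,s2}[μ] > ε^{1/2}λ}|. -/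
open MeasureTheory Metric Set Filter Bornology
open scoped ENNReal NNReal Topology RealInnerProductSpace

noncomputable section

/-- The integrand of `Lpot`. -/
def potKernel {N : ℕ} (α s : ℝ) (μ : Measure (Euc N)) (x : Euc N) (t : ℝ) : ℝ≥0∞ :=
  (μ (ball x t) / ENNReal.ofReal (t ^ ((N : ℝ) - α))) ^ s / ENNReal.ofReal t

/-- The range of integration of a potential truncated at `R`. -/
def truncRange (R : ℝ≥0∞) : Set ℝ := {t : ℝ | 0 < t ∧ ENNReal.ofReal t < R}

lemma Lpot_eq {N : ℕ} (α s : ℝ) (R : ℝ≥0∞) (μ : Measure (Euc N)) (x : Euc N) :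
    Lpot α s R μ x = ∫⁻ t in truncRange R, potKernel α s μ x t := rfl

lemma measurableSet_truncRange (R : ℝ≥0∞) : MeasurableSet (truncRange R) :=
  measurableSet_Ioi.inter (measurableSet_lt ENNReal.measurable_ofReal measurable_const)

lemma measurable_potKernel {N : ℕ} (α s : ℝ) (μ : Measure (Euc N)) (x : Euc N) :
    Measurable (potKernel α s μ x) := by
  have h : Measurable fun t : ℝ => μ (ball x t) :=
    Monotone.measurable fun _ _ h => measure_mono (ball_subset_ball h)
  exact ((h.div (by fun_prop)).pow_const s).div (by fun_prop)

lemma potKernel_le {N : ℕ} {α s : ℝ} (hs : 0 < s) {μ : Measure (Euc N)} {x : Euc N} {t A b : ℝ}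
    (ht : 0 < t) (hA : 0 ≤ A) (h : μ (ball x t) ≤ ENNReal.ofReal (A * t ^ b)) :
    potKernel α s μ x t ≤ ENNReal.ofReal (A ^ s * t ^ ((b - ((N : ℝ) - α)) * s - 1)) := by
  unfold potKernel
  calc
    _ ≤ (ENNReal.ofReal (A * t ^ b) / ENNReal.ofReal (t ^ ((N : ℝ) - α))) ^ s
          / ENNReal.ofReal t := by gcongr
    _ = _ := by
      rw [← ENNReal.ofReal_div_of_pos (by positivity),
        ENNReal.ofReal_rpow_of_nonneg (by positivity) hs.le, ← ENNReal.ofReal_div_of_pos ht]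
      congr 1
      rw [mul_div_assoc, ← Real.rpow_sub ht, Real.mul_rpow hA (by positivity),
        ← Real.rpow_mul ht.le, Real.rpow_sub ht _ 1, Real.rpow_one, mul_div_assoc]

lemma lintegral_Ioo_rpow {β r : ℝ} (hβ : 0 < β) (hr : 0 < r) :
    ∫⁻ t in Ioo 0 r, ENNReal.ofReal (t ^ (β - 1)) = ENNReal.ofReal (r ^ β / β) := by
  have hint : IntegrableOn (fun t : ℝ => t ^ (β - 1)) (Ioo 0 r) :=
    ((intervalIntegrable_iff_integrableOn_Ioc_of_le hr.le).1
      (intervalIntegral.intervalIntegrable_rpow' (by linarith))).mono_set Ioo_subset_Ioc_self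
  rw [← ofReal_integral_eq_lintegral_ofReal hint, ← integral_Ioc_eq_integral_Ioo,
    ← intervalIntegral.integral_of_le hr.le, integral_rpow (Or.inl (by linarith))]
  · simp [Real.zero_rpow hβ.ne']
  · exact (ae_restrict_mem measurableSet_Ioo).mono fun t ht => Real.rpow_nonneg ht.1.le _

lemma lintegral_Ioi_rpow {β r : ℝ} (hβ : 0 < β) (hr : 0 < r) :
    ∫⁻ t in Ioi r, ENNReal.ofReal (t ^ (-β - 1)) = ENNReal.ofReal (r ^ (-β) / β) := by
  rw [← ofReal_integral_eq_lintegral_ofReal (integrableOn_Ioi_rpow_of_lt (by linarith) hr),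
    integral_Ioi_rpow_of_lt (by linarith) hr]
  · congr 1
    rw [sub_add_cancel, neg_div_neg_eq]
  · exact (ae_restrict_mem measurableSet_Ioi).mono fun t ht =>
      Real.rpow_nonneg (hr.trans ht).le _

lemma lintegral_potKernel_near_le {N : ℕ} {α s : ℝ} (hs : 0 < s) {μ : Measure (Euc N)}
    {x : Euc N} {r A b β : ℝ} (hr : 0 < r) (hA : 0 ≤ A)
    (h : ∀ t ∈ Ioo 0 r, μ (ball x t) ≤ ENNReal.ofReal (A * t ^ b))
    (hb : (b - ((N : ℝ) - α)) * s = β) (hβ : 0 < β) :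
    ∫⁻ t in Ioo 0 r, potKernel α s μ x t ≤ ENNReal.ofReal (A ^ s * (r ^ β / β)) := by
  calc
    _ ≤ ∫⁻ t in Ioo 0 r, ENNReal.ofReal (A ^ s) * ENNReal.ofReal (t ^ (β - 1)) := by
      refine setLIntegral_mono' measurableSet_Ioo fun t ht => ?_
      rw [← ENNReal.ofReal_mul (by positivity), ← hb]
      exact potKernel_le hs ht.1 hA (h t ht)
    _ = _ := by
      rw [lintegral_const_mul' _ _ ENNReal.ofReal_ne_top, lintegral_Ioo_rpow hβ hr,
        ← ENNReal.ofReal_mul (by positivity)]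

lemma lintegral_potKernel_far_le {N : ℕ} {α s : ℝ} (hs : 0 < s) {μ : Measure (Euc N)}
    {x : Euc N} {r A b β : ℝ} {S : Set ℝ} (hS : MeasurableSet S) (hSr : S ⊆ Ici r)
    (hr : 0 < r) (hA : 0 ≤ A)
    (h : ∀ t ∈ S, μ (ball x t) ≤ ENNReal.ofReal (A * t ^ b))
    (hb : (b - ((N : ℝ) - α)) * s = -β) (hβ : 0 < β) :
    ∫⁻ t in S, potKernel α s μ x t ≤ ENNReal.ofReal (A ^ s * (r ^ (-β) / β)) := by
  calc
    _ ≤ ∫⁻ t in S, ENNReal.ofReal (A ^ s) * ENNReal.ofReal (t ^ (-β - 1)) := by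
      refine setLIntegral_mono' hS fun t ht => ?_
      rw [← ENNReal.ofReal_mul (by positivity), ← hb]
      exact potKernel_le hs (hr.trans_le (hSr ht)) hA (h t ht)
    _ ≤ ∫⁻ t in Ici r, ENNReal.ofReal (A ^ s) * ENNReal.ofReal (t ^ (-β - 1)) :=
      lintegral_mono_set hSr
    _ = _ := by
      rw [lintegral_const_mul' _ _ ENNReal.ofReal_ne_top, setLIntegral_congr Ioi_ae_eq_Ici.symm,
        lintegral_Ioi_rpow hβ hr, ← ENNReal.ofReal_mul (by positivity)]

lemma Lpot_le_near_add_far {N : ℕ} (α s : ℝ) (R : ℝ≥0∞) (μ : Measure (Euc N)) (x : Euc N)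
    (r : ℝ) :
    Lpot α s R μ x ≤ (∫⁻ t in Ioo 0 r, potKernel α s μ x t)
      + ∫⁻ t in truncRange R ∩ Ici r, potKernel α s μ x t := by
  rw [Lpot_eq]
  refine (lintegral_mono_set fun t ht => ?_).trans (lintegral_union_le _ _ _)
  rcases lt_or_ge t r with h | h
  · exact Or.inl ⟨ht.1, h⟩
  · exact Or.inr ⟨ht, h⟩

lemma lintegral_comp_two_mul {f : ℝ → ℝ≥0∞} (hf : Measurable f) :
    ∫⁻ t, f (2 * t) = ENNReal.ofReal (1 / 2) * ∫⁻ t, f t := by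
  have h := lintegral_map (μ := (volume : Measure ℝ)) hf (measurable_const_mul (2 : ℝ))
  rw [← h, Real.map_volume_mul_left two_ne_zero, lintegral_smul_measure]
  norm_num

/-- The far part of the potential at `x` is controlled by the potential at a nearby point. -/
lemma lintegral_potKernel_far_le_Lpot {N : ℕ} {α s : ℝ} (hs : 0 < s)
    {μ : Measure (Euc N)} {x x₀ : Euc N} {r : ℝ} {R : ℝ≥0∞} (hx : dist x x₀ ≤ r) :
    ∫⁻ t in truncRange R ∩ Ici r, potKernel α s μ x t ≤
      ENNReal.ofReal (2 ^ (((N : ℝ) - α) * s)) * Lpot α s (2 * R) μ x₀ := by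
  set P := ((N : ℝ) - α) * s with hP
  have key : ∀ t ∈ truncRange R ∩ Ici r, potKernel α s μ x t ≤
      ENNReal.ofReal (2 ^ P * 2) * potKernel α s μ x₀ (2 * t) := by
    rintro t ⟨⟨ht, -⟩, htr⟩
    have htr : r ≤ t := htr
    have hsub : ball x t ⊆ ball x₀ (2 * t) := ball_subset_ball' (by linarith)
    unfold potKernel
    calc
      _ ≤ (μ (ball x₀ (2 * t)) / ENNReal.ofReal (t ^ ((N : ℝ) - α))) ^ s
            / ENNReal.ofReal t := by gcongr
      _ = _ := by
        have h1 : ENNReal.ofReal ((2 : ℝ) ^ ((N : ℝ) - α)) ≠ 0 := by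
          simp only [ne_eq, ENNReal.ofReal_eq_zero, not_le]; positivity
        rw [Real.mul_rpow zero_le_two ht.le, ENNReal.ofReal_mul (by positivity),
          ENNReal.ofReal_mul zero_le_two, ENNReal.ofReal_mul (by positivity), hP,
          Real.rpow_mul zero_le_two,
          ← ENNReal.ofReal_rpow_of_pos (x := (2 : ℝ) ^ ((N : ℝ) - α)) (by positivity)]
        simp only [div_eq_mul_inv]
        rw [ENNReal.mul_inv (Or.inl h1) (Or.inl ENNReal.ofReal_ne_top),
          ENNReal.mul_inv (Or.inl (by simp)) (Or.inl ENNReal.ofReal_ne_top),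
          mul_left_comm (μ _) (ENNReal.ofReal _)⁻¹, ENNReal.mul_rpow_of_nonneg _⁻¹ _ hs.le,
          ENNReal.inv_rpow]
        have h2 : ENNReal.ofReal ((2 : ℝ) ^ ((N : ℝ) - α)) ^ s ≠ 0 := by
          simp [ENNReal.rpow_eq_zero_iff, h1]
        have h3 : ENNReal.ofReal ((2 : ℝ) ^ ((N : ℝ) - α)) ^ s ≠ ⊤ :=
          ENNReal.rpow_ne_top_of_nonneg hs.le ENNReal.ofReal_ne_top
        have h4 : ENNReal.ofReal (2 : ℝ) ≠ 0 := by simp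
        generalize ENNReal.ofReal ((2 : ℝ) ^ ((N : ℝ) - α)) ^ s = u at *
        generalize (μ (ball x₀ (2 * t)) * (ENNReal.ofReal (t ^ ((N : ℝ) - α)))⁻¹) ^ s = v
        generalize (ENNReal.ofReal t)⁻¹ = w
        have := ENNReal.mul_inv_cancel h2 h3
        have h5 := ENNReal.mul_inv_cancel h4 ENNReal.ofReal_ne_top
        calc v * w = (u * u⁻¹) * (ENNReal.ofReal 2 * (ENNReal.ofReal 2)⁻¹) * (v * w) := by
              rw [this, h5]; simp
          _ = _ := by ring
  have hmeas := measurableSet_truncRange (2 * R)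
  calc
    _ ≤ ∫⁻ t in truncRange R ∩ Ici r, ENNReal.ofReal (2 ^ P * 2) * potKernel α s μ x₀ (2 * t) :=
      setLIntegral_mono' ((measurableSet_truncRange R).inter measurableSet_Ici) key
    _ ≤ ∫⁻ t in truncRange R, ENNReal.ofReal (2 ^ P * 2) * potKernel α s μ x₀ (2 * t) :=
      lintegral_mono_set inter_subset_left
    _ ≤ ∫⁻ t, ENNReal.ofReal (2 ^ P * 2) *
          (truncRange (2 * R)).indicator (potKernel α s μ x₀) (2 * t) := by
      rw [← lintegral_indicator (measurableSet_truncRange R)]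
      refine lintegral_mono fun t => ?_
      by_cases ht : t ∈ truncRange R
      · have h2t : 2 * t ∈ truncRange (2 * R) := by
          refine ⟨by linarith [ht.1], ?_⟩
          rw [ENNReal.ofReal_mul zero_le_two, ENNReal.ofReal_ofNat]
          exact ENNReal.mul_lt_mul_right (by simp) (by simp) ht.2
        rw [indicator_of_mem ht, indicator_of_mem h2t]
      · simp [indicator_of_notMem ht]
    _ = _ := by
      rw [lintegral_const_mul' _ _ ENNReal.ofReal_ne_top,
        lintegral_comp_two_mul ((measurable_potKernel α s μ x₀).indicator hmeas),
        lintegral_indicator hmeas, ← mul_assoc, ← ENNReal.ofReal_mul (by positivity), Lpot_eq]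
      congr 2
      ring

/-- A lower bound of the potential by the mass of a ball. -/
lemma le_Lpot_of_le_measure_ball {N : ℕ} {α s : ℝ} (hα : α < (N : ℝ)) (hs : 0 < s)
    {μ : Measure (Euc N)} {x : Euc N} {r m : ℝ} {R : ℝ≥0∞} (hr : 0 < r) (hm : 0 ≤ m)
    (hrR : ENNReal.ofReal r ≤ R) (h : ENNReal.ofReal m ≤ μ (ball x (7 * r / 4))) :
    ENNReal.ofReal (m ^ s * r ^ (-(((N : ℝ) - α) * s)) / (8 * 2 ^ (((N : ℝ) - α) * s))) ≤
      Lpot α s (2 * R) μ x := by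
  have hk : ∀ t ∈ Ioo (7 * r / 4) (2 * r),
      ENNReal.ofReal ((m / (2 * r) ^ ((N : ℝ) - α)) ^ s / (2 * r)) ≤ potKernel α s μ x t := by
    intro t ht
    have ht0 : 0 < t := by linarith [ht.1]
    rw [ENNReal.ofReal_div_of_pos (by positivity),
      ← ENNReal.ofReal_rpow_of_nonneg (by positivity) hs.le,
      ENNReal.ofReal_div_of_pos (by positivity)]
    unfold potKernel
    gcongr
    · exact h.trans (measure_mono (ball_subset_ball ht.1.le))
    · exact ht.2.le
    · exact ht.2.le
  have hsub : Ioo (7 * r / 4) (2 * r) ⊆ truncRange (2 * R) := by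
    intro t ht
    refine ⟨by linarith [ht.1], ?_⟩
    calc ENNReal.ofReal t < ENNReal.ofReal (2 * r) :=
          (ENNReal.ofReal_lt_ofReal_iff (by positivity)).2 ht.2
      _ = 2 * ENNReal.ofReal r := by rw [ENNReal.ofReal_mul zero_le_two, ENNReal.ofReal_ofNat]
      _ ≤ 2 * R := by gcongr
  calc
    _ = ∫⁻ _ in Ioo (7 * r / 4) (2 * r),
          ENNReal.ofReal ((m / (2 * r) ^ ((N : ℝ) - α)) ^ s / (2 * r)) := by
      rw [setLIntegral_const, Real.volume_Ioo, ← ENNReal.ofReal_mul (by positivity)]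
      congr 1
      rw [Real.div_rpow hm (by positivity), ← Real.rpow_mul (by positivity),
        Real.mul_rpow zero_le_two hr.le, Real.rpow_neg hr.le]
      field_simp
      ring
    _ ≤ ∫⁻ t in Ioo (7 * r / 4) (2 * r), potKernel α s μ x t :=
      setLIntegral_mono' measurableSet_Ioo hk
    _ ≤ _ := lintegral_mono_set hsub

lemma lowerSemicontinuous_measure_ball {N : ℕ} (μ : Measure (Euc N)) (t : ℝ) :
    LowerSemicontinuous fun x : Euc N => μ (ball x t) := by
  intro x c hc
  have hU : ball x t = ⋃ n : ℕ, ball x (t - 1 / ((n : ℝ) + 1)) := by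
    ext y
    simp only [mem_iUnion, mem_ball]
    constructor
    · intro h
      obtain ⟨n, hn⟩ := exists_nat_one_div_lt (sub_pos.2 h)
      exact ⟨n, by linarith⟩
    · rintro ⟨n, hn⟩
      have : (0 : ℝ) < 1 / ((n : ℝ) + 1) := by positivity
      linarith
  have hmono : Monotone fun n : ℕ => ball x (t - 1 / ((n : ℝ) + 1)) := fun a b hab =>
    ball_subset_ball (by have := Nat.one_div_le_one_div (α := ℝ) hab; linarith)
  change c < μ (ball x t) at hc
  rw [hU, hmono.measure_iUnion] at hc
  obtain ⟨n, hn⟩ := lt_iSup_iff.1 hc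
  filter_upwards [ball_mem_nhds x (ε := 1 / ((n : ℝ) + 1)) (by positivity)] with y hy
  refine hn.trans_le (measure_mono (ball_subset_ball' ?_))
  rw [mem_ball'] at hy
  linarith

lemma Lpot_le_liminf {N : ℕ} (α : ℝ) {s : ℝ} (hs : 0 < s) (R : ℝ≥0∞) (μ : Measure (Euc N))
    (x : Euc N) : Lpot α s R μ x ≤ liminf (Lpot α s R μ) (𝓝 x) := by
  calc
    _ ≤ ∫⁻ t in truncRange R, liminf (fun y => potKernel α s μ y t) (𝓝 x) := by
      refine setLIntegral_mono' (measurableSet_truncRange R) fun t ht => ?_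
      have ht0 : 0 < t := ht.1
      have hc : Continuous fun u : ℝ≥0∞ =>
          (u / ENNReal.ofReal (t ^ ((N : ℝ) - α))) ^ s / ENNReal.ofReal t := by
        refine (ENNReal.continuous_div_const _ (by simpa using ht0)).comp
          (ENNReal.continuous_rpow_const.comp (ENNReal.continuous_div_const _ ?_))
        simp only [ne_eq, ENNReal.ofReal_eq_zero, not_le]
        positivity
      have hmono : Monotone fun u : ℝ≥0∞ =>
          (u / ENNReal.ofReal (t ^ ((N : ℝ) - α))) ^ s / ENNReal.ofReal t :=
        fun u v huv => by dsimp only; gcongr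
      exact lowerSemicontinuousAt_iff_le_liminf.1
        ((hc.comp_lowerSemicontinuous (lowerSemicontinuous_measure_ball μ t) hmono) x)
    _ ≤ liminf (fun y => ∫⁻ t in truncRange R, potKernel α s μ y t) (𝓝 x) :=
      lintegral_liminf_le fun y => measurable_potKernel α s μ y
    _ = _ := rfl

lemma isOpen_lt_Lpot_mul_Lpot {N : ℕ} (α₁ α₂ : ℝ) {s₁ s₂ : ℝ} (hs₁ : 0 < s₁) (hs₂ : 0 < s₂)
    (R : ℝ≥0∞) (μ : Measure (Euc N)) (c : ℝ≥0∞) :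
    IsOpen {x : Euc N | c < Lpot α₁ s₁ R μ x * Lpot α₂ s₂ R μ x} := by
  have h : LowerSemicontinuous fun x : Euc N => Lpot α₁ s₁ R μ x * Lpot α₂ s₂ R μ x := fun x =>
    lowerSemicontinuousAt_iff_le_liminf.2 <|
      (mul_le_mul' (Lpot_le_liminf α₁ hs₁ R μ x) (Lpot_le_liminf α₂ hs₂ R μ x)).trans
        ENNReal.le_liminf_mul
  exact h.isOpen_preimage c

/-- Vitali's covering lemma for a family of balls with bounded radii. -/
lemma exists_countable_disjoint_balls_covering {N : ℕ} (G : Set (Euc N)) (ρ : Euc N → ℝ) (B : ℝ)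
    (hρ : ∀ x ∈ G, 0 < ρ x) (hB : ∀ x ∈ G, ρ x ≤ B) :
    ∃ u ⊆ G, u.Countable ∧ (u.PairwiseDisjoint fun x => ball x (ρ x)) ∧
      G ⊆ ⋃ x ∈ u, closedBall x (5 * ρ x) := by
  obtain ⟨u, huG, hdisj, hcov⟩ :=
    Vitali.exists_disjoint_subfamily_covering_enlargement_closedBall G id ρ B hB 5 (by norm_num)
  have hdisj' : u.PairwiseDisjoint fun x => ball x (ρ x) :=
    hdisj.mono fun x => ball_subset_closedBall
  refine ⟨u, huG, hdisj'.countable_of_isOpen (fun _ _ => isOpen_ball)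
    fun x hx => nonempty_ball.2 (hρ x (huG hx)), hdisj', fun x hx => ?_⟩
  obtain ⟨y, hy, hxy⟩ := hcov x hx
  exact mem_biUnion hy (hxy (mem_closedBall_self (hρ x hx).le))

/-- A weak type `(1, 1)` estimate for the centred maximal function of a measure. -/
lemma volume_exists_lt_measure_ball_le {N : ℕ} {μ : Measure (Euc N)} {S U : Set (Euc N)}
    {r m δ : ℝ} (hδ : 0 < δ) (hm : 0 ≤ m) (hU : μ U = ENNReal.ofReal m)
    (hS : ∀ x ∈ S, ball x r ⊆ U) :
    volume {x ∈ S | ∃ t ∈ Ioo 0 r, ENNReal.ofReal (m / δ ^ N * t ^ (N : ℝ)) < μ (ball x t)} ≤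
      ENNReal.ofReal ((5 * δ) ^ N) * volume (ball (0 : Euc N) 1) := by
  set G := {x ∈ S | ∃ t ∈ Ioo 0 r, ENNReal.ofReal (m / δ ^ N * t ^ (N : ℝ)) < μ (ball x t)}
  have hGU : ∀ x ∈ S, ∀ t ∈ Ioo 0 r, ball x t ⊆ U := fun x hx t ht =>
    (ball_subset_ball ht.2.le).trans (hS x hx)
  rcases hm.eq_or_lt with rfl | hm
  · have : G = ∅ := by
      refine eq_empty_of_forall_notMem ?_
      rintro x ⟨hx, t, ht, hlt⟩
      have := hlt.trans_le (measure_mono (hGU x hx t ht))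
      simp [hU] at this
    simp [this]
  choose! ρ hρ hlt using fun x (hx : x ∈ G) => hx.2
  obtain ⟨u, huG, hu, hdisj, hcov⟩ :=
    exists_countable_disjoint_balls_covering G ρ r (fun x hx => (hρ x hx).1)
      fun x hx => (hρ x hx).2.le
  have hball : ∀ x ∈ u, volume (closedBall x (5 * ρ x)) ≤
      (ENNReal.ofReal ((5 * δ) ^ N / m) * volume (ball (0 : Euc N) 1)) * μ (ball x (ρ x)) := by
    intro x hx
    have hpos := (hρ x (huG hx)).1
    rw [Measure.addHaar_closedBall _ _ (by positivity), finrank_euclideanSpace_fin]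
    calc
      _ = ENNReal.ofReal ((5 * δ) ^ N / m) * volume (ball (0 : Euc N) 1) *
            ENNReal.ofReal (m / δ ^ N * ρ x ^ (N : ℝ)) := by
        rw [mul_right_comm, ← ENNReal.ofReal_mul (by positivity), Real.rpow_natCast]
        congr 2
        rw [mul_pow, mul_pow]
        field_simp
      _ ≤ _ := by gcongr; exact (hlt x (huG hx)).le
  calc
    volume G ≤ volume (⋃ x ∈ u, closedBall x (5 * ρ x)) := measure_mono hcov
    _ ≤ ∑' x : u, volume (closedBall (x : Euc N) (5 * ρ x)) := measure_biUnion_le _ hu _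
    _ ≤ ∑' x : u, (ENNReal.ofReal ((5 * δ) ^ N / m) * volume (ball (0 : Euc N) 1)) *
          μ (ball (x : Euc N) (ρ x)) := ENNReal.tsum_le_tsum fun x => hball x x.2
    _ = (ENNReal.ofReal ((5 * δ) ^ N / m) * volume (ball (0 : Euc N) 1)) *
          μ (⋃ x ∈ u, ball x (ρ x)) := by
      rw [ENNReal.tsum_mul_left, measure_biUnion hu hdisj fun _ _ => measurableSet_ball]
    _ ≤ (ENNReal.ofReal ((5 * δ) ^ N / m) * volume (ball (0 : Euc N) 1)) * μ U := by
      gcongr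
      exact iUnion₂_subset fun x hx => hGU x (huG hx).1 _ (hρ x (huG hx))
    _ = _ := by
      rw [hU, mul_right_comm, ← ENNReal.ofReal_mul (by positivity), div_mul_cancel₀ _ hm.ne']

/-- A Hedberg type bound for the near part of the potential. -/
lemma lintegral_potKernel_le_of_measure_ball_le {N : ℕ} {α s : ℝ} (hα : 0 < α)
    (hαN : α < (N : ℝ)) (hs : 0 < s) {μ : Measure (Euc N)} {x : Euc N} {r m δ : ℝ} (hr : 0 < r)
    (hδ : 0 < δ) (hm : 0 ≤ m) (hmx : μ (ball x r) ≤ ENNReal.ofReal m)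
    (h : ∀ t ∈ Ioo 0 r, μ (ball x t) ≤ ENNReal.ofReal (m / δ ^ N * t ^ (N : ℝ))) :
    ∫⁻ t in Ioo 0 r, potKernel α s μ x t ≤
      ENNReal.ofReal ((1 / (α * s) + 1 / (((N : ℝ) - α) * s)) *
        (m ^ s * δ ^ (-(((N : ℝ) - α) * s)))) := by
  have hP : 0 < ((N : ℝ) - α) * s := mul_pos (by linarith) hs
  have hαs : 0 < α * s := by positivity
  have hnear : ∫⁻ t in Ioo 0 (min r δ), potKernel α s μ x t ≤
      ENNReal.ofReal (1 / (α * s) * (m ^ s * δ ^ (-(((N : ℝ) - α) * s)))) := by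
    refine (lintegral_potKernel_near_le hs (b := N) (β := α * s) (lt_min hr hδ)
      (A := m / δ ^ N) (by positivity)
      (fun t ht => h t ⟨ht.1, ht.2.trans_le (min_le_left _ _)⟩) (by ring) hαs).trans ?_
    refine ENNReal.ofReal_le_ofReal ?_
    calc
      _ ≤ (m / δ ^ N) ^ s * (δ ^ (α * s) / (α * s)) := by
        gcongr
        exact min_le_right _ _
      _ = _ := by
        rw [Real.div_rpow hm (by positivity), ← Real.rpow_natCast, ← Real.rpow_mul hδ.le,
          show -(((N : ℝ) - α) * s) = α * s - N * s by ring, Real.rpow_sub hδ]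
        ring
  have hfar : ∫⁻ t in Ioo 0 r ∩ Ici δ, potKernel α s μ x t ≤
      ENNReal.ofReal (1 / (((N : ℝ) - α) * s) * (m ^ s * δ ^ (-(((N : ℝ) - α) * s)))) := by
    refine (lintegral_potKernel_far_le hs (b := 0) (β := ((N : ℝ) - α) * s)
      (measurableSet_Ioo.inter measurableSet_Ici) inter_subset_right hδ hm (fun t ht => ?_)
      (by ring) hP).trans_eq ?_
    · rw [Real.rpow_zero, mul_one]
      exact (measure_mono (ball_subset_ball ht.1.2.le)).trans hmx
    · congr 1
      ring
  rw [add_mul, ENNReal.ofReal_add (by positivity) (by positivity)]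
  refine le_trans ((lintegral_mono_set fun t ht => ?_).trans (lintegral_union_le _ _ _))
    (add_le_add hnear hfar)
  rcases lt_or_ge t δ with hlt | hge
  · exact Or.inl ⟨ht.1, lt_min ht.2 hlt⟩
  · exact Or.inr ⟨ht, hge⟩

/-- The pointwise bound on the product of potentials outside the exceptional set. -/
lemma Lpot_mul_Lpot_le {N : ℕ} {α₁ α₂ s₁ s₂ θ c q H e lam A r m : ℝ} {R : ℝ≥0∞}
    {μ : Measure (Euc N)} {x : Euc N} (hs₁ : 0 < s₁) (hs₂ : 0 < s₂) (h₂₁ : α₂ < α₁)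
    (h₁ : α₁ < (N : ℝ)) (hθ : θ = s₁ * s₂ * (α₁ - α₂) / (s₁ + s₂)) (hc : 0 ≤ c)
    (hH : 0 < H) (hHq : 2 * (c * q / θ) ≤ H)
    (hHc : 2 * (c * 8 * 2 ^ (((N : ℝ) - α₁) * s₁ + ((N : ℝ) - α₂) * s₂)) ≤ H)
    (he : 0 < e) (he1 : e ≤ 1) (hlam : 0 < lam) (hA : 0 ≤ A)
    (hAe : A ^ s₁ * A ^ s₂ = e ^ 2 * lam) (hr : 0 < r) (hm : 0 ≤ m)
    (hrR : ENNReal.ofReal r ≤ R)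
    (hM : ∀ t, 0 < t → ENNReal.ofReal t < 2 * R → μ (ball x t) ≤
      ENNReal.ofReal (A * t ^ ((N : ℝ) - (α₁ * s₁ + α₂ * s₂) / (s₁ + s₂))))
    (hmA : m ^ s₂ ≤ q * A ^ s₂ * r ^ (((N : ℝ) - α₂) * s₂ - θ))
    (hL : ∫⁻ t in Ioo 0 r, potKernel α₂ s₂ μ x t ≤
      ENNReal.ofReal (c * (m ^ s₂ * r ^ (-(((N : ℝ) - α₂) * s₂))) / (H * e)))
    (halt : ENNReal.ofReal r = R ∨ ∃ x₀, dist x x₀ ≤ r ∧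
      Lpot α₁ s₁ (2 * R) μ x₀ * Lpot α₂ s₂ (2 * R) μ x₀ ≤ ENNReal.ofReal (e * lam) ∧
      ENNReal.ofReal m ≤ μ (ball x₀ (7 * r / 4))) :
    Lpot α₁ s₁ R μ x * Lpot α₂ s₂ R μ x ≤
      ENNReal.ofReal ((1 + 1 / θ ^ 2 +
        2 ^ (((N : ℝ) - α₁) * s₁ + ((N : ℝ) - α₂) * s₂)) * lam) := by
  have hθ0 : 0 < θ := by
    rw [hθ]
    have := sub_pos.2 h₂₁
    positivity
  have hss : s₁ + s₂ ≠ 0 := by positivity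
  have h2R : R ≤ 2 * R := le_mul_of_one_le_left' (by norm_num)
  have hsmall : ∀ t ∈ Ioo 0 r, ENNReal.ofReal t < 2 * R := fun t ht =>
    ((ENNReal.ofReal_lt_ofReal_iff hr).2 ht.2).trans_le (hrR.trans h2R)
  set P₁ := ((N : ℝ) - α₁) * s₁
  set P₂ := ((N : ℝ) - α₂) * s₂ with hP₂
  set near₁ := ∫⁻ t in Ioo 0 r, potKernel α₁ s₁ μ x t
  set near₂ := ∫⁻ t in Ioo 0 r, potKernel α₂ s₂ μ x t
  set far₁ := ∫⁻ t in truncRange R ∩ Ici r, potKernel α₁ s₁ μ x t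
  set far₂ := ∫⁻ t in truncRange R ∩ Ici r, potKernel α₂ s₂ μ x t
  have hnear₁ : near₁ ≤ ENNReal.ofReal (A ^ s₁ * (r ^ θ / θ)) :=
    lintegral_potKernel_near_le hs₁ hr hA (fun t ht => hM t ht.1 (hsmall t ht))
      (by rw [hθ]; field_simp; ring) hθ0
  have hfar₂ : far₂ ≤ ENNReal.ofReal (A ^ s₂ * (r ^ (-θ) / θ)) :=
    lintegral_potKernel_far_le hs₂ ((measurableSet_truncRange R).inter measurableSet_Ici)
      inter_subset_right hr hA (fun t ht => hM t ht.1.1 (ht.1.2.trans_le h2R))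
      (by rw [hθ]; field_simp; ring) hθ0
  have hnn : near₁ * near₂ ≤ ENNReal.ofReal (lam / 2) := by
    refine (mul_le_mul' hnear₁ hL).trans ?_
    rw [← ENNReal.ofReal_mul (by positivity)]
    refine ENNReal.ofReal_le_ofReal ?_
    calc
      _ ≤ A ^ s₁ * (r ^ θ / θ) *
          (c * (q * A ^ s₂ * r ^ (P₂ - θ) * r ^ (-P₂)) / (H * e)) := by gcongr
      _ = (A ^ s₁ * A ^ s₂) * (c * q / θ) * (r ^ θ * r ^ (P₂ - θ) * r ^ (-P₂)) / (H * e) := by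
        ring
      _ = 2 * (c * q / θ) * e * (lam / 2) / H := by
        rw [hAe, ← Real.rpow_add hr, ← Real.rpow_add hr,
          show θ + (P₂ - θ) + -P₂ = 0 by ring, Real.rpow_zero]
        field_simp
      _ ≤ H * 1 * (lam / 2) / H := by gcongr
      _ = _ := by field_simp
  have hnf : near₁ * far₂ ≤ ENNReal.ofReal (1 / θ ^ 2 * lam) := by
    refine (mul_le_mul' hnear₁ hfar₂).trans ?_
    rw [← ENNReal.ofReal_mul (by positivity)]
    refine ENNReal.ofReal_le_ofReal ?_
    calc
      _ = (A ^ s₁ * A ^ s₂) * (r ^ θ * r ^ (-θ)) / θ ^ 2 := by ring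
      _ = e ^ 2 * (1 / θ ^ 2 * lam) := by
        rw [hAe, ← Real.rpow_add hr, add_neg_cancel, Real.rpow_zero]
        ring
      _ ≤ 1 * (1 / θ ^ 2 * lam) := by
        gcongr
        exact pow_le_one₀ he.le he1
      _ = _ := one_mul _
  have hfar : far₁ * near₂ ≤ ENNReal.ofReal (lam / 2) ∧
      far₁ * far₂ ≤ ENNReal.ofReal (2 ^ (P₁ + P₂) * lam) := by
    rcases halt with hR | ⟨x₀, hx₀, hE, hmx⟩
    · have hempty : truncRange R ∩ Ici r = ∅ := by
        refine eq_empty_of_forall_notMem fun t ht => ?_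
        have h1 := ht.1.2
        rw [← hR] at h1
        exact absurd ht.2 (not_le.2 ((ENNReal.ofReal_lt_ofReal_iff hr).1 h1))
      have h0 : far₁ = 0 := by simp [far₁, hempty]
      simp [h0]
    · have hf₁ : far₁ ≤ ENNReal.ofReal (2 ^ P₁) * Lpot α₁ s₁ (2 * R) μ x₀ :=
        lintegral_potKernel_far_le_Lpot hs₁ hx₀
      have hf₂ : far₂ ≤ ENNReal.ofReal (2 ^ P₂) * Lpot α₂ s₂ (2 * R) μ x₀ :=
        lintegral_potKernel_far_le_Lpot hs₂ hx₀
      have hn₂ : near₂ ≤ ENNReal.ofReal (c * (8 * 2 ^ P₂) / (H * e)) *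
          Lpot α₂ s₂ (2 * R) μ x₀ := by
        have hlow := le_Lpot_of_le_measure_ball (h₂₁.trans h₁) hs₂ hr hm hrR hmx
        rw [← hP₂] at hlow
        refine (hL.trans_eq ?_).trans (mul_le_mul_right hlow _)
        rw [← ENNReal.ofReal_mul (by positivity)]
        congr 1
        field_simp
      constructor
      · refine (mul_le_mul' hf₁ hn₂).trans ?_
        rw [mul_mul_mul_comm, ← ENNReal.ofReal_mul (by positivity)]
        refine (mul_le_mul_right hE _).trans ?_
        rw [← ENNReal.ofReal_mul (by positivity)]
        refine ENNReal.ofReal_le_ofReal ?_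
        calc
          _ = 2 * (c * 8 * (2 ^ P₁ * 2 ^ P₂)) * (lam / 2) / H := by field_simp
          _ ≤ H * (lam / 2) / H := by
            rw [← Real.rpow_add two_pos]
            gcongr
          _ = _ := by field_simp
      · refine (mul_le_mul' hf₁ hf₂).trans ?_
        rw [mul_mul_mul_comm, ← ENNReal.ofReal_mul (by positivity)]
        refine (mul_le_mul_right hE _).trans ?_
        rw [← ENNReal.ofReal_mul (by positivity), ← Real.rpow_add two_pos]
        refine ENNReal.ofReal_le_ofReal ?_
        gcongr
        exact mul_le_of_le_one_left hlam.le he1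
  calc
    _ ≤ (near₁ + far₁) * (near₂ + far₂) :=
      mul_le_mul' (Lpot_le_near_add_far ..) (Lpot_le_near_add_far ..)
    _ = near₁ * near₂ + far₁ * near₂ + near₁ * far₂ + far₁ * far₂ := by ring
    _ ≤ ENNReal.ofReal (lam / 2) + ENNReal.ofReal (lam / 2) + ENNReal.ofReal (1 / θ ^ 2 * lam)
          + ENNReal.ofReal (2 ^ (P₁ + P₂) * lam) :=
      add_le_add (add_le_add (add_le_add hnn hfar.1) hnf) hfar.2
    _ = _ := by
      rw [← ENNReal.ofReal_add (by positivity) (by positivity),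
        ← ENNReal.ofReal_add (by positivity) (by positivity),
        ← ENNReal.ofReal_add (by positivity) (by positivity)]
      congr 1
      ring

lemma measure_ball_le_of_fracMax_rpow_le {N : ℕ} {γ σ K : ℝ} (hσ : 0 < σ) (hK : 0 ≤ K)
    {R : ℝ≥0∞} {μ : Measure (Euc N)} {x : Euc N}
    (h : fracMax γ R μ x ^ σ ≤ ENNReal.ofReal K) {t : ℝ} (ht : 0 < t)
    (htR : ENNReal.ofReal t < R) :
    μ (ball x t) ≤ ENNReal.ofReal (K ^ (1 / σ) * t ^ ((N : ℝ) - γ)) := by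
  have h1 : μ (ball x t) / ENNReal.ofReal (t ^ ((N : ℝ) - γ)) ≤ fracMax γ R μ x :=
    le_iSup_of_le t (le_iSup_of_le ht (le_iSup_of_le htR le_rfl))
  have h2 : fracMax γ R μ x ≤ ENNReal.ofReal (K ^ (1 / σ)) := by
    rw [← ENNReal.ofReal_rpow_of_nonneg hK (by positivity), one_div]
    exact (ENNReal.le_rpow_inv_iff hσ).2 h
  have h3 : ENNReal.ofReal (t ^ ((N : ℝ) - γ)) ≠ 0 := by
    simp only [ne_eq, ENNReal.ofReal_eq_zero, not_le]
    positivity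
  rw [ENNReal.ofReal_mul (by positivity)]
  exact (ENNReal.div_le_iff h3 ENNReal.ofReal_ne_top).1 (h1.trans h2)

/-- The local good-`λ` estimate, on a set of small diameter. -/
lemma exists_volume_le_of_lt_Lpot_mul_Lpot (N : ℕ) {α₁ α₂ s₁ s₂ θ : ℝ} (hs₁ : 0 < s₁)
    (hs₂ : 0 < s₂) (h₂ : 0 < α₂) (h₂₁ : α₂ < α₁) (h₁ : α₁ < (N : ℝ))
    (hθ : θ = s₁ * s₂ * (α₁ - α₂) / (s₁ + s₂)) :
    ∃ H > 0, ∀ (μ : Measure (Euc N)) (R : ℝ≥0∞) (e lam A r : ℝ) (S : Set (Euc N)),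
      0 < e → e ≤ 1 → 0 < lam → 0 ≤ A → A ^ s₁ * A ^ s₂ = e ^ 2 * lam → 0 < r →
      ENNReal.ofReal r ≤ R →
      (∀ x ∈ S, ∀ t, 0 < t → ENNReal.ofReal t < 2 * R → μ (ball x t) ≤
        ENNReal.ofReal (A * t ^ ((N : ℝ) - (α₁ * s₁ + α₂ * s₂) / (s₁ + s₂)))) →
      (∀ x ∈ S, ENNReal.ofReal ((1 + 1 / θ ^ 2 +
        2 ^ (((N : ℝ) - α₁) * s₁ + ((N : ℝ) - α₂) * s₂)) * lam) <
          Lpot α₁ s₁ R μ x * Lpot α₂ s₂ R μ x) →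
      (∀ x ∈ S, ∀ y ∈ S, dist x y ≤ r / 4) →
      (ENNReal.ofReal r = R ∨ ∃ x₀, (∀ x ∈ S, dist x x₀ ≤ r / 4) ∧
        Lpot α₁ s₁ (2 * R) μ x₀ * Lpot α₂ s₂ (2 * R) μ x₀ ≤ ENNReal.ofReal (e * lam)) →
      volume S ≤ ENNReal.ofReal ((5 * ((H * e) ^ (1 / (((N : ℝ) - α₂) * s₂)) * r)) ^ N) *
        volume (ball (0 : Euc N) 1) := by
  have hθ0 : 0 < θ := by
    rw [hθ]
    have := sub_pos.2 h₂₁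
    positivity
  have hP : 0 < ((N : ℝ) - α₂) * s₂ := mul_pos (by linarith) hs₂
  set γ := (α₁ * s₁ + α₂ * s₂) / (s₁ + s₂) with hγ
  set c := 1 / (α₂ * s₂) + 1 / (((N : ℝ) - α₂) * s₂) with hc
  set q := (3 / 2 : ℝ) ^ (((N : ℝ) - γ) * s₂)
  have hc0 : 0 < c := by positivity
  have hq0 : 0 < q := by positivity
  have hHq : 0 < 2 * (c * q / θ) := by positivity
  have hHc : 0 < 2 * (c * 8 * 2 ^ (((N : ℝ) - α₁) * s₁ + ((N : ℝ) - α₂) * s₂)) := by positivity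
  refine ⟨_, add_pos hHq hHc, ?_⟩
  set H := 2 * (c * q / θ) + 2 * (c * 8 * 2 ^ (((N : ℝ) - α₁) * s₁ + ((N : ℝ) - α₂) * s₂))
  have hH : 0 < H := add_pos hHq hHc
  intro μ R e lam A r S he he1 hlam hA hAe hr hrR hM hlt hdist halt
  rcases S.eq_empty_or_nonempty with rfl | ⟨y, hy⟩
  · simp
  set δ := (H * e) ^ (1 / (((N : ℝ) - α₂) * s₂)) * r with hδ
  have hδ0 : 0 < δ := by positivity
  have hrR2 : ENNReal.ofReal (3 * r / 2) < 2 * R := by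
    calc ENNReal.ofReal (3 * r / 2) < ENNReal.ofReal (2 * r) :=
          (ENNReal.ofReal_lt_ofReal_iff (by positivity)).2 (by linarith)
      _ = 2 * ENNReal.ofReal r := by rw [ENNReal.ofReal_mul zero_le_two, ENNReal.ofReal_ofNat]
      _ ≤ 2 * R := by gcongr
  have hMy := hM y hy (3 * r / 2) (by positivity) hrR2
  set m := (μ (ball y (3 * r / 2))).toReal
  have hm0 : 0 ≤ m := ENNReal.toReal_nonneg
  have hm : μ (ball y (3 * r / 2)) = ENNReal.ofReal m :=
    (ENNReal.ofReal_toReal (ne_top_of_le_ne_top ENNReal.ofReal_ne_top hMy)).symm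
  have hmA : m ^ s₂ ≤ q * A ^ s₂ * r ^ (((N : ℝ) - α₂) * s₂ - θ) := by
    have hle : m ≤ A * (3 * r / 2) ^ ((N : ℝ) - γ) :=
      ENNReal.toReal_le_of_le_ofReal (by positivity) hMy
    refine (Real.rpow_le_rpow hm0 hle hs₂.le).trans_eq ?_
    rw [Real.mul_rpow hA (by positivity), ← Real.rpow_mul (by positivity),
      show 3 * r / 2 = 3 / 2 * r by ring, Real.mul_rpow (by positivity) hr.le,
      show ((N : ℝ) - α₂) * s₂ - θ = ((N : ℝ) - γ) * s₂ by
        rw [hθ, hγ]; field_simp; ring]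
    ring
  have hδP : δ ^ (-(((N : ℝ) - α₂) * s₂)) = r ^ (-(((N : ℝ) - α₂) * s₂)) / (H * e) := by
    rw [hδ, Real.mul_rpow (by positivity) hr.le, ← Real.rpow_mul (by positivity),
      show 1 / (((N : ℝ) - α₂) * s₂) * -(((N : ℝ) - α₂) * s₂) = -1 by
        rw [mul_neg, one_div_mul_cancel hP.ne'],
      Real.rpow_neg_one]
    ring
  have hsub : ∀ x ∈ S, ball x r ⊆ ball y (3 * r / 2) := fun x hx =>
    ball_subset_ball' (by linarith [hdist x hx y hy])
  refine le_trans (measure_mono ?_) (volume_exists_lt_measure_ball_le hδ0 hm0 hm hsub)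
  refine fun x hx => ⟨hx, ?_⟩
  by_contra! hcon
  have hL := lintegral_potKernel_le_of_measure_ball_le h₂ (h₂₁.trans h₁) hs₂ hr hδ0 hm0
    ((measure_mono (hsub x hx)).trans_eq hm) hcon
  rw [hδP, ← hc, ← mul_div_assoc, ← mul_div_assoc] at hL
  refine (hlt x hx).not_ge (Lpot_mul_Lpot_le hs₁ hs₂ h₂₁ h₁ hθ hc0.le hH
    (le_add_of_nonneg_right hHc.le) (le_add_of_nonneg_left hHq.le) he he1 hlam hA hAe hr hm0 hrR
    (hM x hx) hmA hL (halt.imp_right ?_))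
  rintro ⟨x₀, hx₀, hE⟩
  refine ⟨x₀, by linarith [hx₀ x hx], hE, hm ▸ measure_mono (ball_subset_ball' ?_)⟩
  linarith [hx₀ y hy]

/-- A radius comparable to the distance to the complement of an open set of finite volume,
truncated at a fraction of `R`. -/
lemma exists_radius {N : ℕ} (hN : 0 < N) {E : Set (Euc N)} (hE : IsOpen E)
    (hfin : volume E < ⊤) {R : ℝ≥0∞} (hR : 0 < R) {x : Euc N} (hx : x ∈ E) :
    ∃ ρ : ℝ, 0 < ρ ∧ ball x ρ ⊆ E ∧ ENNReal.ofReal (40 * ρ) ≤ R ∧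
      (ENNReal.ofReal (40 * ρ) = R ∨ ∃ x₀, x₀ ∉ E ∧ dist x x₀ ≤ 2 * ρ) := by
  have : Nonempty (Fin N) := ⟨⟨0, hN⟩⟩
  obtain ⟨x₁, hx₁⟩ : Eᶜ.Nonempty := by
    rw [nonempty_compl]
    rintro rfl
    simp at hfin
  have hclosed : IsClosed Eᶜ := hE.isClosed_compl
  obtain ⟨x₀, hx₀, hd⟩ := hclosed.exists_infDist_eq_dist ⟨x₁, hx₁⟩ x
  have hpos : 0 < dist x x₀ := dist_pos.2 fun h => hx₀ (h ▸ hx)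
  have hball : ∀ ρ ≤ dist x x₀, ball x ρ ⊆ E := fun ρ hρ z hz => by
    by_contra hzE
    have := infDist_le_dist_of_mem (x := x) (show z ∈ Eᶜ from hzE)
    rw [mem_ball'] at hz
    linarith
  by_cases h : ENNReal.ofReal (40 * (dist x x₀ / 2)) ≤ R
  · exact ⟨dist x x₀ / 2, by positivity, hball _ (by linarith), h,
      Or.inr ⟨x₀, hx₀, by linarith⟩⟩
  · have hR' := not_le.1 h
    have htop : R ≠ ⊤ := (hR'.trans ENNReal.ofReal_lt_top).ne
    have hR0 : 0 < R.toReal := ENNReal.toReal_pos hR.ne' htop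
    have heq : ENNReal.ofReal (40 * (R.toReal / 40)) = R := by
      rw [mul_div_cancel₀ _ (by norm_num), ENNReal.ofReal_toReal htop]
    refine ⟨R.toReal / 40, by positivity, hball _ ?_, heq.le, Or.inl heq⟩
    rw [← heq, ENNReal.ofReal_lt_ofReal_iff (by positivity)] at hR'
    linarith

lemma radius_le_of_ball_subset {N : ℕ} (hN : 0 < N) {E : Set (Euc N)} (hfin : volume E < ⊤) :
    ∃ B : ℝ, ∀ (x : Euc N) (ρ : ℝ), ball x ρ ⊆ E → ρ ≤ B := by
  refine ⟨max 1 (volume E / volume (ball (0 : Euc N) 1)).toReal, fun x ρ h => ?_⟩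
  rcases le_total ρ 1 with h1 | h1
  · exact h1.trans (le_max_left _ _)
  refine le_trans ?_ (le_max_right _ _)
  have hV : volume (ball (0 : Euc N) 1) ≠ 0 := (measure_ball_pos _ _ one_pos).ne'
  refine (ENNReal.ofReal_le_iff_le_toReal (ENNReal.div_ne_top hfin.ne hV)).1 ?_
  rw [ENNReal.le_div_iff_mul_le (Or.inl hV) (Or.inl measure_ball_lt_top.ne)]
  calc
    _ ≤ ENNReal.ofReal (ρ ^ N) * volume (ball (0 : Euc N) 1) := by
      gcongr
      exact le_self_pow₀ h1 hN.ne'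
    _ = volume (ball x ρ) := by
      rw [Measure.addHaar_ball_of_pos _ x (by linarith), finrank_euclideanSpace_fin]
    _ ≤ volume E := measure_mono h

/-- Good-λ type estimate for products of `L`-potentials with
respect to the fractional maximal function. -/
theorem stmt11 (N : ℕ) (α1 α2 s1 s2 : ℝ) (hs1 : 0 < s1) (hs2 : 0 < s2)
    (h2 : 0 < α2) (h12 : α2 < α1) (h1N : α1 < (N : ℝ)) :
    ∃ C > 0, ∃ ε0 > 0, ∀ μ : Measure (Euc N), IsLocallyFiniteMeasure μ →
      ∀ R : ℝ≥0∞, 0 < R → ∀ ε : ℝ, 0 < ε → ε < ε0 → ∀ lam : ℝ, 0 < lam →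
      volume {x : Euc N |
          ENNReal.ofReal (ε ^ ((1 : ℝ) / 2) * lam) <
            Lpot α1 s1 (2 * R) μ x * Lpot α2 s2 (2 * R) μ x} < ⊤ →
      volume
          ({x : Euc N |
              ENNReal.ofReal
                  ((1 + ((s1 + s2) / (s1 * s2 * (α1 - α2))) ^ 2 +
                      (2 : ℝ) ^ (((N : ℝ) - α1) * s1 + ((N : ℝ) - α2) * s2 + 1)) * lam) <
                Lpot α1 s1 R μ x * Lpot α2 s2 R μ x} ∩
            {x : Euc N |
              (fracMax ((α1 * s1 + α2 * s2) / (s1 + s2)) (2 * R) μ x) ^ (s1 + s2) ≤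
                ENNReal.ofReal (ε * lam)}) ≤
        ENNReal.ofReal (C * ε ^ ((N : ℝ) / (2 * s2 * ((N : ℝ) - α2)))) *
          volume {x : Euc N |
            ENNReal.ofReal (ε ^ ((1 : ℝ) / 2) * lam) <
              Lpot α1 s1 (2 * R) μ x * Lpot α2 s2 (2 * R) μ x} := by
  have hN : 0 < N := by exact_mod_cast h2.trans (h12.trans h1N)
  have hss : 0 < s1 + s2 := by positivity
  have hP : 0 < ((N : ℝ) - α2) * s2 := mul_pos (by linarith) hs2
  obtain ⟨H, hH, hloc⟩ := exists_volume_le_of_lt_Lpot_mul_Lpot N hs1 hs2 h2 h12 h1N rfl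
  refine ⟨(200 * H ^ (1 / (((N : ℝ) - α2) * s2))) ^ N, by positivity, 1, one_pos, ?_⟩
  intro μ _ R hR ε hε hε1 lam hlam hfin
  set C := (200 * H ^ (1 / (((N : ℝ) - α2) * s2))) ^ N
  set e := ε ^ ((1 : ℝ) / 2) with he
  have he0 : 0 < e := by positivity
  have he1 : e ≤ 1 := Real.rpow_le_one hε.le hε1.le (by norm_num)
  have he2 : e ^ 2 = ε := by
    rw [he, ← Real.rpow_natCast, ← Real.rpow_mul hε.le]
    norm_num
  set E := {x : Euc N | ENNReal.ofReal (e * lam) <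
    Lpot α1 s1 (2 * R) μ x * Lpot α2 s2 (2 * R) μ x}
  set F := {x : Euc N | ENNReal.ofReal ((1 + ((s1 + s2) / (s1 * s2 * (α1 - α2))) ^ 2 +
      (2 : ℝ) ^ (((N : ℝ) - α1) * s1 + ((N : ℝ) - α2) * s2 + 1)) * lam) <
        Lpot α1 s1 R μ x * Lpot α2 s2 R μ x} ∩
    {x : Euc N | (fracMax ((α1 * s1 + α2 * s2) / (s1 + s2)) (2 * R) μ x) ^ (s1 + s2) ≤
      ENNReal.ofReal (ε * lam)}
  have hlt : ∀ x ∈ F, ENNReal.ofReal ((1 + 1 / (s1 * s2 * (α1 - α2) / (s1 + s2)) ^ 2 +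
      2 ^ (((N : ℝ) - α1) * s1 + ((N : ℝ) - α2) * s2)) * lam) <
        Lpot α1 s1 R μ x * Lpot α2 s2 R μ x := fun x hx => by
    refine lt_of_le_of_lt (ENNReal.ofReal_le_ofReal ?_) hx.1
    rw [one_div, ← inv_pow, inv_div]
    have := Real.rpow_le_rpow_of_exponent_le one_le_two
      (le_add_of_nonneg_right (a := ((N : ℝ) - α1) * s1 + ((N : ℝ) - α2) * s2) zero_le_one)
    gcongr
  have hFE : F ⊆ E := fun x hx => by
    have hmono : ∀ α s : ℝ, Lpot α s R μ x ≤ Lpot α s (2 * R) μ x := fun α s =>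
      lintegral_mono_set fun t ht =>
        ⟨ht.1, ht.2.trans_le (le_mul_of_one_le_left' (by norm_num))⟩
    refine lt_of_le_of_lt (ENNReal.ofReal_le_ofReal ?_)
      ((hlt x hx).trans_le (mul_le_mul' (hmono α1 s1) (hmono α2 s2)))
    gcongr
    rw [add_assoc]
    exact he1.trans (le_add_of_nonneg_right (by positivity))
  have hEo : IsOpen E := isOpen_lt_Lpot_mul_Lpot α1 α2 hs1 hs2 (2 * R) μ _
  choose! ρ hρ hρE hρR hρalt using fun x (hx : x ∈ F) => exists_radius hN hEo hfin hR (hFE hx)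
  obtain ⟨B, hB⟩ := radius_le_of_ball_subset hN hfin
  obtain ⟨u, huF, hu, hdisj, hcov⟩ :=
    exists_countable_disjoint_balls_covering F ρ B hρ fun x hx => hB x _ (hρE x hx)
  have hball : ∀ z ∈ u, volume (F ∩ closedBall z (5 * ρ z)) ≤
      ENNReal.ofReal (C * ε ^ ((N : ℝ) / (2 * s2 * ((N : ℝ) - α2)))) *
        volume (ball z (ρ z)) := by
    intro z hz
    have hzF := huF hz
    have hρz := hρ z hzF
    have hK : 0 ≤ ε * lam := by positivity
    refine (hloc μ R e lam ((ε * lam) ^ (1 / (s1 + s2))) (40 * ρ z)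
      (F ∩ closedBall z (5 * ρ z)) he0 he1 hlam (by positivity) ?_ (by positivity)
      (hρR z hzF) ?_ (fun x hx => hlt x hx.1) ?_ ?_).trans_eq ?_
    · rw [← Real.rpow_add (by positivity), ← Real.rpow_mul hK, one_div_mul_cancel hss.ne',
        Real.rpow_one, he2]
    · exact fun x hx t ht htR => measure_ball_le_of_fracMax_rpow_le hss hK hx.1.2 ht htR
    · intro x hx y hy
      have h1 := mem_closedBall.1 hx.2
      have h2 := mem_closedBall'.1 hy.2
      linarith [dist_triangle x z y]
    · refine (hρalt z hzF).imp_right ?_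
      rintro ⟨x₀, hx₀, hd⟩
      refine ⟨x₀, fun x hx => ?_, not_lt.1 hx₀⟩
      have h1 := mem_closedBall.1 hx.2
      linarith [dist_triangle x z x₀]
    · rw [Measure.addHaar_ball_of_pos _ _ hρz, finrank_euclideanSpace_fin,
        ← mul_assoc (ENNReal.ofReal _) (ENNReal.ofReal _),
        ← ENNReal.ofReal_mul (by positivity)]
      congr 2
      have hexp : ε ^ ((N : ℝ) / (2 * s2 * ((N : ℝ) - α2))) =
          (e ^ (1 / (((N : ℝ) - α2) * s2))) ^ N := by
        rw [he, ← Real.rpow_natCast, ← Real.rpow_mul hε.le, ← Real.rpow_mul hε.le]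
        congr 1
        have : (N : ℝ) - α2 ≠ 0 := by linarith
        field_simp
      rw [hexp, Real.mul_rpow hH.le he0.le, ← mul_pow, ← mul_pow]
      ring
  calc
    volume F ≤ volume (⋃ z ∈ u, F ∩ closedBall z (5 * ρ z)) := by
      rw [← inter_iUnion₂]
      exact measure_mono (subset_inter Subset.rfl hcov)
    _ ≤ ∑' z : u, volume (F ∩ closedBall (z : Euc N) (5 * ρ z)) := measure_biUnion_le _ hu _
    _ ≤ ∑' z : u, ENNReal.ofReal (C * ε ^ ((N : ℝ) / (2 * s2 * ((N : ℝ) - α2)))) *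
          volume (ball (z : Euc N) (ρ z)) := ENNReal.tsum_le_tsum fun z => hball z z.2
    _ = ENNReal.ofReal (C * ε ^ ((N : ℝ) / (2 * s2 * ((N : ℝ) - α2)))) *
          volume (⋃ z ∈ u, ball z (ρ z)) := by
      rw [ENNReal.tsum_mul_left, measure_biUnion hu hdisj fun _ _ => measurableSet_ball]
    _ ≤ _ := by
      gcongr
      exact iUnion₂_subset fun z hz => hρE z (huF hz)
end
end

section
/- Let 0<α<N and s>0. There exists a constant C=C(N,α,s)>0 such that for every nonnegative bounded Radon measure ω on ℝ^N and every λ>0, the Lebesgue measure of the set {x∈ℝ^N : L_{α,s}[ω](x) > λ} is at most C·((ω(ℝ^N))^s/λ)^{N/(s(N−α))}. -/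
open MeasureTheory Metric Set Filter Bornology
open scoped ENNReal NNReal Topology RealInnerProductSpace

noncomputable section

/-- Weak-type bound for the centred maximal function of a finite measure `ν` with respect to a
Haar measure `μ`, by the Vitali covering lemma. -/
theorem measure_exists_mul_pow_lt_measure_ball_le {E : Type*} [NormedAddCommGroup E]
    [NormedSpace ℝ E] [FiniteDimensional ℝ E] [Nontrivial E] [MeasurableSpace E] [BorelSpace E]
    (μ : Measure E) [μ.IsAddHaarMeasure] (ν : Measure E) [IsFiniteMeasure ν] {A : ℝ}
    (hA : 0 < A) :
    μ {x | ∃ t > 0, ENNReal.ofReal (A * t ^ Module.finrank ℝ E) < ν (ball x t)} ≤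
      ENNReal.ofReal (5 ^ Module.finrank ℝ E / A) * μ (ball 0 1) * ν univ := by
  set d := Module.finrank ℝ E
  have hd0 : d ≠ 0 := Module.finrank_pos.ne'
  set S := {x | ∃ t > 0, ENNReal.ofReal (A * t ^ d) < ν (ball x t)}
  choose! r hr0 hr using fun x (hx : x ∈ S) => hx
  have hbound : ∀ x ∈ S, r x ≤ max 1 (ν.real univ / A) := by
    intro x hx
    by_contra! hlt
    obtain ⟨h1, h2⟩ := max_lt_iff.1 hlt
    have h3 : ENNReal.ofReal (A * r x ^ d) < ν univ :=
      (hr x hx).trans_le (measure_mono (subset_univ _))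
    have h4 : A * r x ^ d < ν.real univ :=
      (ENNReal.ofReal_lt_iff_lt_toReal (by have := hr0 x hx; positivity) (measure_ne_top _ _)).1 h3
    have h5 : r x ≤ r x ^ d := le_self_pow₀ h1.le hd0
    have h6 : ν.real univ < r x * A := (div_lt_iff₀ hA).1 h2
    nlinarith
  obtain ⟨u, huS, hdisj, hcov⟩ :=
    Vitali.exists_disjoint_subfamily_covering_enlargement_closedBall S id r _ hbound 5 (by norm_num)
  have hcount : u.Countable := by
    refine hdisj.countable_of_nonempty_interior fun x hx => ?_
    exact ⟨x, ball_subset_interior_closedBall (mem_ball_self (hr0 x (huS hx)))⟩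
  have hsub : S ⊆ ⋃ x ∈ u, closedBall x (5 * r x) := by
    intro x hx
    obtain ⟨b, hb, hxb⟩ := hcov x hx
    exact mem_biUnion hb (hxb (mem_closedBall_self (hr0 x hx).le))
  have hball : ∀ x ∈ S, μ (closedBall x (5 * r x)) ≤
      ENNReal.ofReal (5 ^ d / A) * μ (ball 0 1) * ν (closedBall x (r x)) := by
    intro x hx
    have hx0 := hr0 x hx
    rw [Measure.addHaar_closedBall μ x (by positivity : 0 ≤ 5 * r x)]
    calc ENNReal.ofReal ((5 * r x) ^ d) * μ (ball 0 1)
        = ENNReal.ofReal (5 ^ d / A) * μ (ball 0 1) * ENNReal.ofReal (A * r x ^ d) := by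
          rw [mul_right_comm, ← ENNReal.ofReal_mul (by positivity)]
          congr 2
          rw [mul_pow]
          field_simp
      _ ≤ _ := by
          gcongr
          exact (hr x hx).le.trans (measure_mono ball_subset_closedBall)
  calc μ S ≤ μ (⋃ x ∈ u, closedBall x (5 * r x)) := measure_mono hsub
    _ ≤ ∑' x : u, μ (closedBall (x : E) (5 * r x)) := measure_biUnion_le μ hcount _
    _ ≤ ∑' x : u, ENNReal.ofReal (5 ^ d / A) * μ (ball 0 1) * ν (closedBall (x : E) (r x)) :=
        ENNReal.tsum_le_tsum fun x => hball x (huS x.2)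
    _ = ENNReal.ofReal (5 ^ d / A) * μ (ball 0 1) * ∑' x : u, ν (closedBall (x : E) (r x)) :=
        ENNReal.tsum_mul_left
    _ ≤ _ := by
        gcongr
        exact (tsum_meas_le_meas_iUnion_of_disjoint ν (fun _ => measurableSet_closedBall)
          (hdisj.subtype _ _)).trans (measure_mono (subset_univ _))

theorem lintegral_Ioc_zero_rpow_sub_one {p δ : ℝ} (hp : 0 < p) (hδ : 0 < δ) :
    ∫⁻ t in Ioc 0 δ, ENNReal.ofReal (t ^ (p - 1)) = ENNReal.ofReal (δ ^ p / p) := by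
  rw [← ofReal_integral_eq_lintegral_ofReal]
  · rw [← intervalIntegral.integral_of_le hδ.le, integral_rpow (Or.inl (by linarith))]
    simp [Real.zero_rpow hp.ne']
  · exact (intervalIntegrable_iff_integrableOn_Ioc_of_le hδ.le).1
      (intervalIntegral.intervalIntegrable_rpow' (by linarith))
  · exact (ae_restrict_iff' measurableSet_Ioc).2
      (Eventually.of_forall fun t ht => Real.rpow_nonneg ht.1.le _)

theorem lintegral_Ioi_rpow_neg_sub_one {p δ : ℝ} (hp : 0 < p) (hδ : 0 < δ) :
    ∫⁻ t in Ioi δ, ENNReal.ofReal (t ^ (-p - 1)) = ENNReal.ofReal (δ ^ (-p) / p) := by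
  rw [← ofReal_integral_eq_lintegral_ofReal]
  · rw [integral_Ioi_rpow_of_lt (by linarith) hδ]
    simp [neg_div_neg_eq]
  · exact integrableOn_Ioi_rpow_of_lt (by linarith) hδ
  · exact (ae_restrict_iff' measurableSet_Ioi).2
      (Eventually.of_forall fun t ht => Real.rpow_nonneg (hδ.trans ht).le _)

/-- Splitting the potential at radius `δ`: near the centre use the growth of `ω` on balls, away
from it the total mass. -/
theorem Lpot_top_le_of_measure_ball_le {N : ℕ} {α s : ℝ} (hα : 0 < α) (hαN : α < N) (hs : 0 < s)
    (ω : Measure (Euc N)) [IsFiniteMeasure ω] {A δ : ℝ} (hA : 0 < A) (hδ : 0 < δ) {x : Euc N}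
    (hx : ∀ t > 0, ω (ball x t) ≤ ENNReal.ofReal (A * t ^ N)) :
    Lpot α s ⊤ ω x ≤ ENNReal.ofReal (A ^ s * (δ ^ (α * s) / (α * s)) +
      ω.real univ ^ s * (δ ^ (-(s * (N - α))) / (s * (N - α)))) := by
  have hβ : 0 < (N : ℝ) - α := sub_pos.2 hαN
  have hset : {t : ℝ | 0 < t ∧ ENNReal.ofReal t < ⊤} = Ioc 0 δ ∪ Ioi δ := by
    rw [Ioc_union_Ioi_eq_Ioi hδ.le]
    ext t
    simp
  have hbound : ∀ {t M c q : ℝ}, 0 < t → 0 ≤ M → ω (ball x t) ≤ ENNReal.ofReal M →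
      (M / t ^ ((N : ℝ) - α)) ^ s / t = c * t ^ q → 0 ≤ c →
      (ω (ball x t) / ENNReal.ofReal (t ^ ((N : ℝ) - α))) ^ s / ENNReal.ofReal t ≤
        ENNReal.ofReal c * ENNReal.ofReal (t ^ q) := by
    intro t M c q ht hM hle heq hc
    rw [← ENNReal.ofReal_mul hc, ← heq, ENNReal.ofReal_div_of_pos ht,
      ← ENNReal.ofReal_rpow_of_nonneg (by positivity) hs.le,
      ENNReal.ofReal_div_of_pos (Real.rpow_pos_of_pos ht _)]
    gcongr
  rw [Lpot, hset]
  refine (lintegral_union_le _ _ _).trans ?_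
  rw [ENNReal.ofReal_add (by positivity) (by positivity)]
  gcongr
  · rw [ENNReal.ofReal_mul (by positivity), ← lintegral_Ioc_zero_rpow_sub_one (by positivity) hδ,
      ← lintegral_const_mul' _ _ ENNReal.ofReal_ne_top]
    refine setLIntegral_mono' measurableSet_Ioc fun t ht => ?_
    have ht0 : 0 < t := ht.1
    refine hbound ht0 (by positivity) (hx t ht0) ?_ (by positivity)
    rw [← Real.rpow_natCast, mul_div_assoc, ← Real.rpow_sub ht0, Real.mul_rpow hA.le (by positivity),
      ← Real.rpow_mul ht0.le, Real.rpow_sub_one ht0.ne', sub_sub_cancel, mul_div_assoc]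
  · rw [ENNReal.ofReal_mul (by positivity), ← lintegral_Ioi_rpow_neg_sub_one (by positivity) hδ,
      ← lintegral_const_mul' _ _ ENNReal.ofReal_ne_top]
    refine setLIntegral_mono' measurableSet_Ioi fun t ht => ?_
    have ht0 : 0 < t := hδ.trans ht
    refine hbound ht0 (measureReal_nonneg (μ := ω) (s := univ)) ?_ ?_ (by positivity)
    · rw [ofReal_measureReal]
      exact measure_mono (subset_univ _)
    · rw [Real.div_rpow measureReal_nonneg (by positivity), ← Real.rpow_mul ht0.le,
        Real.rpow_sub_one ht0.ne', Real.rpow_neg ht0.le, mul_comm s]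
      ring

/-- Weak-type estimate for the potential `L_{α,s}` of a bounded
measure. -/
theorem stmt12 (N : ℕ) (α s : ℝ) (hα : 0 < α) (hαN : α < (N : ℝ)) (hs : 0 < s) :
    ∃ C > 0, ∀ ω : Measure (Euc N), IsFiniteMeasure ω → ∀ lam : ℝ, 0 < lam →
      volume {x : Euc N | ENNReal.ofReal lam < Lpot α s ⊤ ω x} ≤
        ENNReal.ofReal C *
          ((ω Set.univ) ^ s / ENNReal.ofReal lam) ^ ((N : ℝ) / (s * ((N : ℝ) - α))) := by
  have hβ : 0 < (N : ℝ) - α := sub_pos.2 hαN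
  have hN : N ≠ 0 := by
    rintro rfl
    norm_num at hαN
    linarith
  have : Nonempty (Fin N) := ⟨⟨0, Nat.pos_of_ne_zero hN⟩⟩
  set β := (N : ℝ) - α with hβdef
  set k := (volume : Measure (Euc N)).real (ball 0 1) with hk
  have hk0 : 0 < k := ENNReal.toReal_pos (measure_ball_pos _ _ one_pos).ne' measure_ball_lt_top.ne
  refine ⟨5 ^ N * k * (β / α) ^ (1 / s) * (2 / (s * β)) ^ ((N : ℝ) / (s * β)), by positivity,
    fun ω _ lam hlam => ?_⟩
  rcases eq_or_ne ω 0 with rfl | hω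
  · simp [Lpot, ENNReal.zero_rpow_of_pos hs]
  set m := ω.real univ with hm
  have hm0 : 0 < m := ENNReal.toReal_pos (by simpa using hω) (measure_ne_top _ _)
  set δ := (2 * m ^ s / (s * β * lam)) ^ (1 / (s * β)) with hδdef
  have hδ : 0 < δ := by positivity
  have hδpow : δ ^ (s * β) = 2 * m ^ s / (s * β * lam) := by
    rw [hδdef, ← Real.rpow_mul (by positivity), one_div_mul_cancel (by positivity), Real.rpow_one]
  have hδN : δ ^ N = (2 / (s * β)) ^ ((N : ℝ) / (s * β)) * (m ^ s / lam) ^ ((N : ℝ) / (s * β)) := by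
    rw [← Real.mul_rpow (by positivity) (by positivity), ← Real.rpow_natCast, hδdef,
      ← Real.rpow_mul (by positivity), div_mul_div_comm, one_div_mul_eq_div]
  set A := (α / β) ^ (1 / s) * m / δ ^ N with hAdef
  have hA : 0 < A := by positivity
  have hfar : m ^ s * (δ ^ (-(s * β)) / (s * β)) = lam / 2 := by
    rw [Real.rpow_neg hδ.le, hδpow]
    field_simp
  have hnear : A ^ s * (δ ^ (α * s) / (α * s)) = lam / 2 := by
    have hsplit : (δ ^ N) ^ s = δ ^ (s * β) * δ ^ (α * s) := by
      rw [← Real.rpow_natCast, ← Real.rpow_mul hδ.le, ← Real.rpow_add hδ, hβdef]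
      ring_nf
    rw [hAdef, Real.div_rpow (by positivity) (by positivity),
      Real.mul_rpow (by positivity) hm0.le, ← Real.rpow_mul (by positivity),
      one_div_mul_cancel hs.ne', Real.rpow_one, hsplit, hδpow]
    field_simp
  have hsub : {x : Euc N | ENNReal.ofReal lam < Lpot α s ⊤ ω x} ⊆
      {x | ∃ t > 0, ENNReal.ofReal (A * t ^ Module.finrank ℝ (Euc N)) < ω (ball x t)} := by
    intro x hx
    by_contra hcon
    simp only [mem_ofPred_eq, finrank_euclideanSpace_fin, not_exists, not_and, not_lt] at hcon
    have hle := Lpot_top_le_of_measure_ball_le hα hαN hs ω hA hδ hcon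
    rw [hnear, hfar, add_halves] at hle
    exact hle.not_gt hx
  refine (measure_mono hsub).trans
    ((measure_exists_mul_pow_lt_measure_ball_le volume ω hA).trans_eq ?_)
  rw [finrank_euclideanSpace_fin, ← ofReal_measureReal (μ := ω), ← hm,
    ← ofReal_measureReal (μ := (volume : Measure (Euc N))) (h := measure_ball_lt_top.ne), ← hk,
    ENNReal.ofReal_rpow_of_nonneg hm0.le hs.le, ← ENNReal.ofReal_div_of_pos hlam,
    ENNReal.ofReal_rpow_of_nonneg (by positivity) (by positivity),
    ← ENNReal.ofReal_mul (by positivity), ← ENNReal.ofReal_mul (by positivity),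
    ← ENNReal.ofReal_mul (by positivity)]
  congr 1
  rw [mul_assoc _ ((2 / (s * β)) ^ _), ← hδN, hAdef, ← inv_div α β, Real.inv_rpow (by positivity)]
  field_simp
end
end

section
/- Let 0<ε<1, R>0 and B=B_R(x0) a ball in ℝ^N. Let E⊂F⊂B be measurable sets with |E|<ε|B| which satisfy: for all x∈B and r∈(0,R], if |E∩B_r(x)| ≥ ε|B_r(x)| then B_r(x)∩B ⊂ F. Then |E| ≤ C·ε·|F| for some constant C=C(N). -/
open MeasureTheory Metric Set Filter Bornology
open scoped ENNReal NNReal Topology RealInnerProductSpace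

noncomputable section

/-- Almost every point of a measurable set `E` is the center of a ball with radius of the form
`R / 4 ^ k` in which `E` has density at least `ε`, for any `ε < 1`. -/
lemma ae_exists_density_ball {N : ℕ} {E : Set (Euc N)} (hE : MeasurableSet E) {ε R : ℝ}
    (hε : ε < 1) (hR : 0 < R) :
    ∀ᵐ x ∂(volume : Measure (Euc N)), x ∈ E →
      ∃ k : ℕ, ENNReal.ofReal ε * volume (ball x (R / 4 ^ k)) ≤
        volume (E ∩ ball x (R / 4 ^ k)) := by
  filter_upwards [Besicovitch.ae_tendsto_measure_inter_div_of_measurableSet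
    (volume : Measure (Euc N)) hE] with x hx hxE
  have hpos (k : ℕ) : 0 < R / 4 ^ k := by positivity
  have hlim : Tendsto (fun k : ℕ => R / 4 ^ k) atTop (𝓝[>] (0 : ℝ)) := by
    refine tendsto_nhdsWithin_iff.2 ⟨?_, Eventually.of_forall hpos⟩
    exact tendsto_const_nhds.div_atTop (tendsto_pow_atTop_atTop_of_one_lt (by norm_num))
  rw [indicator_of_mem hxE] at hx
  have hlt : ENNReal.ofReal ε < (1 : Euc N → ℝ≥0∞) x := by
    simpa using hε
  obtain ⟨k, hk⟩ := ((hx.comp hlim).eventually (lt_mem_nhds hlt)).exists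
  refine ⟨k, ?_⟩
  have hball : (ball x (R / 4 ^ k) : Set (Euc N)) =ᵐ[volume] closedBall x (R / 4 ^ k) := by
    refine ae_eq_of_subset_of_measure_ge ball_subset_closedBall ?_
      measurableSet_ball.nullMeasurableSet measure_closedBall_lt_top.ne
    rw [Measure.addHaar_closedBall volume x (hpos k).le,
      Measure.addHaar_ball_of_pos volume x (hpos k)]
  rw [measure_congr hball, measure_congr ((ae_eq_refl E).inter hball)]
  have := hk.le
  rw [Function.comp_apply] at this
  exact (ENNReal.le_div_iff_mul_le
    (Or.inl (measure_closedBall_pos volume x (hpos k)).ne')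
    (Or.inl measure_closedBall_lt_top.ne)).1 this

/-- A ball centered in `ball x0 R` with radius at most `R` has a fixed proportion of its volume
inside `ball x0 R`. -/
lemma volume_ball_le_volume_ball_inter {N : ℕ} {x x0 : Euc N} {r R : ℝ} (hr : 0 < r) (hrR : r ≤ R)
    (hx : x ∈ ball x0 R) :
    volume (ball x r) ≤ ENNReal.ofReal (2 ^ N) * volume (ball x r ∩ ball x0 R) := by
  have hR : 0 < R := hr.trans_le hrR
  have hd : ‖x - x0‖ < R := by simpa [dist_eq_norm] using hx
  set s : ℝ := r / (2 * R) with hs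
  have hs0 : 0 < s := by positivity
  have hsR : s * R = r / 2 := by rw [hs]; field_simp
  have hs1 : s < 1 := by rw [hs, div_lt_one (by positivity)]; linarith
  set y : Euc N := x - s • (x - x0) with hy
  have hyx : dist y x = s * ‖x - x0‖ := by
    rw [dist_eq_norm, hy, sub_sub_cancel_left, norm_neg, norm_smul, Real.norm_of_nonneg hs0.le]
  have hyx0 : dist y x0 = (1 - s) * ‖x - x0‖ := by
    have : y - x0 = (1 - s) • (x - x0) := by rw [hy]; module
    rw [dist_eq_norm, this, norm_smul, Real.norm_of_nonneg (by linarith)]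
  have hsub : ball y (r / 2) ⊆ ball x r ∩ ball x0 R := by
    refine subset_inter (ball_subset_ball' ?_) (ball_subset_ball' ?_)
    · rw [hyx]; nlinarith
    · rw [hyx0]; nlinarith
  calc volume (ball x r) = volume (ball y (2 * (r / 2))) := by
        rw [Measure.addHaar_ball_center volume x, Measure.addHaar_ball_center volume y]
        congr 2; ring
    _ = ENNReal.ofReal (2 ^ N) * volume (ball y (r / 2)) := by
        rw [Measure.addHaar_ball_mul_of_pos volume y two_pos, Measure.addHaar_ball_center volume y]
        simp
    _ ≤ _ := by gcongr

/-- A consequence of the Vitali covering lemma. -/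
theorem stmt13 (N : ℕ) :
    ∃ C > 0, ∀ (ε R : ℝ) (x0 : Euc N) (E F : Set (Euc N)),
      0 < ε → ε < 1 → 0 < R →
      MeasurableSet E → MeasurableSet F → E ⊆ F → F ⊆ ball x0 R →
      volume E < ENNReal.ofReal ε * volume (ball x0 R) →
      (∀ x ∈ ball x0 R, ∀ r : ℝ, 0 < r → r ≤ R →
        ENNReal.ofReal ε * volume (ball x r) ≤ volume (E ∩ ball x r) →
        ball x r ∩ ball x0 R ⊆ F) →
      volume E ≤ ENNReal.ofReal (C * ε) * volume F := by
  refine ⟨4 ^ N * 2 ^ N, by positivity, ?_⟩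
  intro ε R x0 E F hε hε1 hR hE hF hEF hFB hEB hcov
  let G : Set (Euc N) := {x | x ∈ E ∧ ∃ k : ℕ,
    ENNReal.ofReal ε * volume (ball x (R / 4 ^ k)) ≤ volume (E ∩ ball x (R / 4 ^ k))}
  have hradius : ∀ x ∈ G, ∃ r : ℝ, 0 < r ∧ r ≤ R ∧
      ENNReal.ofReal ε * volume (ball x r) ≤ volume (E ∩ ball x r) ∧
      volume (E ∩ ball x (4 * r)) ≤ ENNReal.ofReal ε * volume (ball x (4 * r)) := by
    classical
    rintro x ⟨-, hk⟩
    have hspec := Nat.find_spec hk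
    have hmin := fun m => Nat.find_min (m := m) hk
    generalize Nat.find hk = k at hspec hmin
    cases k with
    | zero =>
      refine absurd (hspec.trans (measure_mono inter_subset_left)) (not_le.2 ?_)
      rw [Measure.addHaar_ball_center] at hEB ⊢
      simpa using hEB
    | succ m =>
      have h4 : 4 * (R / 4 ^ (m + 1)) = R / 4 ^ m := by field_simp; ring
      refine ⟨R / 4 ^ (m + 1), by positivity, div_le_self hR.le (one_le_pow₀ (by norm_num)),
        hspec, ?_⟩
      rw [h4]
      exact (not_le.1 (hmin m m.lt_succ_self)).le
  choose! r hr0 hrR hdense hsparse using hradius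
  obtain ⟨u, huG, hdisj, hu⟩ := Vitali.exists_disjoint_subfamily_covering_enlargement_ball
    G id r R hrR 4 (by norm_num)
  simp only [id_eq] at hdisj hu
  have hucount : u.Countable := hdisj.countable_of_isOpen (fun _ _ => isOpen_ball)
    fun x hx => nonempty_ball.2 (hr0 x (huG hx))
  have hxB : ∀ x ∈ u, x ∈ ball x0 R := fun x hx => hFB (hEF (huG hx).1)
  have hEae : E ≤ᵐ[volume] ⋃ x ∈ u, E ∩ ball x (4 * r x) := by
    filter_upwards [ae_exists_density_ball hE hε1 hR] with x hx hxE
    have hxG : x ∈ G := ⟨hxE, hx hxE⟩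
    obtain ⟨b, hb, hsub⟩ := hu x hxG
    exact mem_biUnion hb ⟨hxE, hsub (mem_ball_self (hr0 x hxG))⟩
  have hscale : ∀ x ∈ u, volume (E ∩ ball x (4 * r x)) ≤
      ENNReal.ofReal (4 ^ N * 2 ^ N * ε) * volume (ball x (r x) ∩ ball x0 R) := by
    intro x hx
    calc volume (E ∩ ball x (4 * r x))
        ≤ ENNReal.ofReal ε * volume (ball x (4 * r x)) := hsparse x (huG hx)
      _ = ENNReal.ofReal ε * (ENNReal.ofReal (4 ^ N) * volume (ball x (r x))) := by
          rw [Measure.addHaar_ball_mul_of_pos volume x (by norm_num : (0 : ℝ) < 4),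
            Measure.addHaar_ball_center volume x]
          simp
      _ ≤ ENNReal.ofReal ε * (ENNReal.ofReal (4 ^ N) *
            (ENNReal.ofReal (2 ^ N) * volume (ball x (r x) ∩ ball x0 R))) := by
          gcongr
          exact volume_ball_le_volume_ball_inter (hr0 x (huG hx)) (hrR x (huG hx)) (hxB x hx)
      _ = _ := by
          rw [ENNReal.ofReal_mul (by positivity), ENNReal.ofReal_mul (by positivity)]
          ring
  calc volume E ≤ volume (⋃ x ∈ u, E ∩ ball x (4 * r x)) := measure_mono_ae hEae
    _ ≤ ∑' x : u, volume (E ∩ ball (x : Euc N) (4 * r x)) := measure_biUnion_le _ hucount _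
    _ ≤ ∑' x : u, ENNReal.ofReal (4 ^ N * 2 ^ N * ε) *
          volume (ball (x : Euc N) (r x) ∩ ball x0 R) :=
        ENNReal.tsum_le_tsum fun x => hscale x x.2
    _ = ENNReal.ofReal (4 ^ N * 2 ^ N * ε) *
          volume (⋃ x ∈ u, ball x (r x) ∩ ball x0 R) := by
        rw [ENNReal.tsum_mul_left, measure_biUnion hucount
          (hdisj.mono_on fun x _ => inter_subset_left)
          fun _ _ => measurableSet_ball.inter measurableSet_ball]
    _ ≤ ENNReal.ofReal (4 ^ N * 2 ^ N * ε) * volume F := by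
        gcongr
        exact iUnion₂_subset fun x hx => hcov x (hxB x hx) (r x) (hr0 x (huG hx))
          (hrR x (huG hx)) (hdense x (huG hx))
end
end

section
/- Let α>0, p>1 with 0<αp<N, and 0<γ<N(p−1)/(N−αp). Then there exists a constant C=C(N,α,p,γ)>0 such that for every nonnegative Radon measure μ on ℝ^N, every x∈ℝ^N and every r>0: ∫_{B_r(x)} (W^r_{α,p}[μ](y))^γ dy ≤ C·r^N·(μ(B_{2r}(x))/r^{N−αp})^{γ/(p−1)}. -/
open MeasureTheory Metric Set Filter Bornology
open scoped ENNReal NNReal Topology RealInnerProductSpace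

noncomputable section

theorem setLIntegral_Ioo_rpow_sub_one {R a : ℝ} (hR : 0 < R) (ha : 0 < a) :
    ∫⁻ ρ in Ioo 0 R, ENNReal.ofReal (ρ ^ (a - 1)) = ENNReal.ofReal (R ^ a / a) := by
  have hint : IntegrableOn (fun ρ : ℝ => ρ ^ (a - 1)) (Ioc 0 R) := by
    have := intervalIntegral.intervalIntegrable_rpow' (a := 0) (b := R) (r := a - 1) (by linarith)
    rwa [intervalIntegrable_iff_integrableOn_Ioc_of_le hR.le] at this
  rw [setLIntegral_congr Ioo_ae_eq_Ioc, ← ofReal_integral_eq_lintegral_ofReal hint]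
  · rw [← intervalIntegral.integral_of_le hR.le, integral_rpow (Or.inl (by linarith))]
    simp [Real.zero_rpow ha.ne']
  · filter_upwards [ae_restrict_mem measurableSet_Ioc] with ρ hρ
    exact Real.rpow_nonneg hρ.1.le _

theorem measurable_measure_ball_s14 {N : ℕ} (ν : Measure (Euc N)) [SFinite ν] :
    Measurable fun q : Euc N × ℝ => ν (ball q.1 q.2) := by
  have hs : MeasurableSet {w : (Euc N × ℝ) × Euc N | dist w.2 w.1.1 < w.1.2} :=
    (isOpen_lt (by fun_prop) (by fun_prop)).measurableSet
  exact measurable_measure_prodMk_left hs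

theorem measurable_measure_ball_left {N : ℕ} (ν : Measure (Euc N)) [SFinite ν] (σ : ℝ) :
    Measurable fun y : Euc N => ν (ball y σ) := by
  have hs : MeasurableSet {w : Euc N × Euc N | dist w.2 w.1 < σ} :=
    (isOpen_lt (by fun_prop) (by fun_prop)).measurableSet
  exact measurable_measure_prodMk_left hs

theorem lintegral_measure_ball {N : ℕ} (ν : Measure (Euc N)) [SFinite ν] {σ : ℝ} (hσ : 0 < σ) :
    ∫⁻ y, ν (ball y σ) =
      ENNReal.ofReal (σ ^ N) * volume (ball (0 : Euc N) 1) * ν univ := by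
  have hs : MeasurableSet {w : Euc N × Euc N | dist w.2 w.1 < σ} :=
    (isOpen_lt (by fun_prop) (by fun_prop)).measurableSet
  have h := (Measure.prod_apply (μ := (volume : Measure (Euc N))) (ν := ν) hs).symm.trans
    (Measure.prod_apply_symm hs)
  have h1 : ∀ y : Euc N, (Prod.mk y ⁻¹' {w : Euc N × Euc N | dist w.2 w.1 < σ}) = ball y σ :=
    fun y => rfl
  have h2 : ∀ z : Euc N,
      ((fun y => (y, z)) ⁻¹' {w : Euc N × Euc N | dist w.2 w.1 < σ}) = ball z σ := by
    intro z
    ext y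
    simp [dist_comm]
  simp only [h1, h2] at h
  rw [h]
  simp [Measure.addHaar_ball_of_pos _ _ hσ]

theorem rpow_le_mul_lintegral_of_monotone {m : ℝ → ℝ≥0∞} (hm : Monotone m) {L β r ρ : ℝ}
    (hL : 0 ≤ L) (hβ : 0 < β) (hρ : 0 < ρ) (hρr : ρ < r) :
    (m ρ * ENNReal.ofReal (ρ ^ (-L))) ^ β ≤ ENNReal.ofReal (2 ^ (L * β + 1)) *
      ∫⁻ σ in Ioo 0 (2 * r), m σ ^ β * ENNReal.ofReal (σ ^ (-(L * β) - 1)) := by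
  have hlow : m ρ ^ β * ENNReal.ofReal ((2 * ρ) ^ (-(L * β) - 1)) * ENNReal.ofReal ρ ≤
      ∫⁻ σ in Ioo 0 (2 * r), m σ ^ β * ENNReal.ofReal (σ ^ (-(L * β) - 1)) := by
    calc m ρ ^ β * ENNReal.ofReal ((2 * ρ) ^ (-(L * β) - 1)) * ENNReal.ofReal ρ
        = ∫⁻ _ in Ioo ρ (2 * ρ), m ρ ^ β * ENNReal.ofReal ((2 * ρ) ^ (-(L * β) - 1)) := by
          rw [setLIntegral_const, Real.volume_Ioo]
          ring_nf
      _ ≤ ∫⁻ σ in Ioo ρ (2 * ρ), m σ ^ β * ENNReal.ofReal (σ ^ (-(L * β) - 1)) := by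
          refine setLIntegral_mono' measurableSet_Ioo fun σ hσ => ?_
          refine mul_le_mul' (ENNReal.rpow_le_rpow (hm hσ.1.le) hβ.le)
            (ENNReal.ofReal_le_ofReal ?_)
          exact Real.rpow_le_rpow_of_nonpos (hρ.trans hσ.1) hσ.2.le
            (by nlinarith [mul_nonneg hL hβ.le])
      _ ≤ _ := lintegral_mono_set (Ioo_subset_Ioo hρ.le (by linarith))
  refine le_trans (le_of_eq ?_) (mul_le_mul_right hlow _)
  rw [ENNReal.mul_rpow_of_nonneg _ _ hβ.le, ENNReal.ofReal_rpow_of_pos (by positivity),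
    ← Real.rpow_mul hρ.le, mul_assoc, mul_left_comm,
    ← ENNReal.ofReal_mul (by positivity), ← ENNReal.ofReal_mul (by positivity)]
  congr 2
  rw [Real.mul_rpow (by norm_num) hρ.le, show -(L * β) - 1 = -(L * β + 1) by ring,
    Real.rpow_neg (by norm_num), mul_assoc, mul_inv_cancel_left₀ (by positivity)]
  conv_rhs => rw [← Real.rpow_add_one hρ.ne']
  ring_nf

theorem lintegral_wolff_integrand_le {m : ℝ → ℝ≥0∞} {S : ℝ≥0∞} {K L s r : ℝ} (hs : 0 < s)
    (hKL : K < L) (hr : 0 < r)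
    (hS : ∀ ρ ∈ Ioo 0 r, m ρ * ENNReal.ofReal (ρ ^ (-L)) ≤ S) :
    ∫⁻ ρ in Ioo 0 r, (m ρ / ENNReal.ofReal (ρ ^ K)) ^ s / ENNReal.ofReal ρ ≤
      S ^ s * ENNReal.ofReal (r ^ ((L - K) * s) / ((L - K) * s)) := by
  have ha : 0 < (L - K) * s := mul_pos (sub_pos.2 hKL) hs
  rw [← setLIntegral_Ioo_rpow_sub_one hr ha, ← lintegral_const_mul _ (by fun_prop)]
  refine setLIntegral_mono' measurableSet_Ioo fun ρ hρ => ?_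
  have hρ0 : 0 < ρ := hρ.1
  refine le_trans (le_of_eq ?_) (mul_le_mul_left (ENNReal.rpow_le_rpow (hS ρ hρ) hs.le) _)
  rw [div_eq_mul_inv, div_eq_mul_inv, ← ENNReal.ofReal_inv_of_pos hρ0,
    ← ENNReal.ofReal_inv_of_pos (by positivity), ENNReal.mul_rpow_of_nonneg _ _ hs.le,
    ENNReal.mul_rpow_of_nonneg _ _ hs.le, mul_assoc, mul_assoc,
    ENNReal.ofReal_rpow_of_pos (by positivity), ENNReal.ofReal_rpow_of_pos (by positivity),
    ← ENNReal.ofReal_mul (by positivity), ← ENNReal.ofReal_mul (by positivity),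
    ← Real.rpow_neg hρ0.le, ← Real.rpow_mul hρ0.le, ← Real.rpow_mul hρ0.le,
    ← Real.rpow_neg_one, ← Real.rpow_add hρ0, ← Real.rpow_add hρ0]
  ring_nf

theorem lintegral_rpow_measure_ball_le {N : ℕ} (ν : Measure (Euc N)) [SFinite ν] {β σ : ℝ}
    (hβ : 1 ≤ β) (hσ : 0 < σ) :
    ∫⁻ y, ν (ball y σ) ^ β ≤
      ENNReal.ofReal (σ ^ N) * volume (ball (0 : Euc N) 1) * ν univ ^ β := by
  have hsplit : ∀ a : ℝ≥0∞, a ^ β = a ^ (β - 1) * a := fun a => by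
    conv_lhs => rw [← sub_add_cancel β 1]
    rw [ENNReal.rpow_add_of_nonneg _ _ (by linarith) zero_le_one, ENNReal.rpow_one]
  calc ∫⁻ y, ν (ball y σ) ^ β ≤ ∫⁻ y, ν univ ^ (β - 1) * ν (ball y σ) := by
        refine lintegral_mono fun y => ?_
        rw [hsplit]
        exact mul_le_mul_left (ENNReal.rpow_le_rpow (measure_mono (subset_univ _))
          (sub_nonneg.2 hβ)) _
    _ = _ := by
        rw [lintegral_const_mul _ (measurable_measure_ball_left ν σ),
          lintegral_measure_ball ν hσ, hsplit (ν univ)]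
        ring

theorem lintegral_lintegral_rpow_measure_ball_le {N : ℕ} (ν : Measure (Euc N)) [SFinite ν]
    {β c R : ℝ} (hβ : 1 ≤ β) (hc : c < N) (hR : 0 < R) :
    ∫⁻ y, ∫⁻ σ in Ioo 0 R, ν (ball y σ) ^ β * ENNReal.ofReal (σ ^ (-c - 1)) ≤
      ENNReal.ofReal (R ^ (N - c) / (N - c)) * volume (ball (0 : Euc N) 1) * ν univ ^ β := by
  have hmeas := measurable_measure_ball_s14 ν
  rw [lintegral_lintegral_swap (by
    exact ((hmeas.pow_const β).mul (by fun_prop)).aemeasurable)]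
  rw [← setLIntegral_Ioo_rpow_sub_one hR (sub_pos.2 hc), mul_assoc,
    ← lintegral_mul_const _ (by fun_prop)]
  refine setLIntegral_mono' measurableSet_Ioo fun σ hσ => ?_
  have hσ0 : 0 < σ := hσ.1
  rw [lintegral_mul_const _ ((measurable_measure_ball_left ν σ).pow_const β)]
  refine (mul_le_mul_left (lintegral_rpow_measure_ball_le ν hβ hσ0) _).trans (le_of_eq ?_)
  rw [mul_comm, ← mul_assoc, ← mul_assoc, ← ENNReal.ofReal_mul (by positivity), mul_assoc,
    ← Real.rpow_natCast, ← Real.rpow_add hσ0]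
  ring_nf

theorem lintegral_rpow_le_rpow_lintegral {X : Type*} [MeasurableSpace X] (μ : Measure X)
    {f : X → ℝ≥0∞}
    (hf : AEMeasurable f μ) {θ : ℝ} (hθ : 0 < θ) (hθ1 : θ ≤ 1) :
    ∫⁻ x, f x ^ θ ∂μ ≤ (∫⁻ x, f x ∂μ) ^ θ * μ univ ^ (1 - θ) := by
  have := ENNReal.lintegral_mul_norm_pow_le hf (aemeasurable_const (b := (1 : ℝ≥0∞)))
    hθ.le (sub_nonneg.2 hθ1) (by ring)
  simpa using this

/-- Local integral estimate for the truncated Wolff potential. -/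
theorem stmt14 (N : ℕ) (α p γ : ℝ) (hα : 0 < α) (hp : 1 < p) (hαp : α * p < (N : ℝ))
    (hγ0 : 0 < γ) (hγ : γ < (N : ℝ) * (p - 1) / ((N : ℝ) - α * p)) :
    ∃ C > 0, ∀ μ : Measure (Euc N), IsLocallyFiniteMeasure μ →
      ∀ (x : Euc N) (r : ℝ), 0 < r →
      (∫⁻ y in ball x r, (wolff α p (ENNReal.ofReal r) μ y) ^ γ) ≤
        ENNReal.ofReal (C * r ^ (N : ℕ)) *
          (μ (ball x (2 * r)) / ENNReal.ofReal (r ^ ((N : ℝ) - α * p))) ^ (γ / (p - 1)) := by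
  obtain ⟨K, hK⟩ : ∃ K, K = (N : ℝ) - α * p := ⟨_, rfl⟩
  obtain ⟨s, hs⟩ : ∃ s, s = 1 / (p - 1) := ⟨_, rfl⟩
  have hK0 : 0 < K := by linarith
  have hKN : K < N := by linarith [mul_pos hα (zero_lt_one.trans hp)]
  have hs0 : 0 < s := hs ▸ one_div_pos.2 (by linarith)
  have hp1 : p - 1 = s⁻¹ := by rw [hs, one_div, inv_inv]
  have ht : γ / (p - 1) = s * γ := by rw [hp1, div_inv_eq_mul, mul_comm]
  have hsγ : K * (s * γ) < N := by
    rw [← hK, hp1, lt_div_iff₀ hK0, ← div_eq_mul_inv, lt_div_iff₀ hs0] at hγ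
    linarith
  rw [← hK, ht]
  -- an exponent `β ≥ 1` and a slightly larger homogeneity `L > K` that is still integrable
  obtain ⟨β, hβ1, hβt, hβN⟩ : ∃ β : ℝ, 1 ≤ β ∧ s * γ ≤ β ∧ K * β < N := by
    refine ⟨max 1 (s * γ), le_max_left _ _, le_max_right _ _, ?_⟩
    rcases max_choice 1 (s * γ) with h | h <;> rw [h]
    · linarith
    · exact hsγ
  have hβ0 : 0 < β := by linarith
  obtain ⟨L, hKL, hL⟩ := exists_between ((lt_div_iff₀ hβ0).2 hβN)
  have hLβ : L * β < N := (lt_div_iff₀ hβ0).1 hL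
  have hL0 : 0 < L := hK0.trans hKL
  have hD : 0 < (N : ℝ) - L * β := sub_pos.2 hLβ
  have hE : 0 < (L - K) * s := mul_pos (sub_pos.2 hKL) hs0
  obtain ⟨θ, hθ⟩ : ∃ θ, θ = s * γ / β := ⟨_, rfl⟩
  have hθ0 : 0 < θ := hθ ▸ div_pos (mul_pos hs0 hγ0) hβ0
  have hθ1 : θ ≤ 1 := hθ ▸ (div_le_one hβ0).2 hβt
  have hβθ : β * θ = s * γ := by rw [hθ]; field_simp
  have hV : volume (ball (0 : Euc N) 1) ≠ ∞ := measure_ball_lt_top.ne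
  have hV0 : volume (ball (0 : Euc N) 1) ≠ 0 := (measure_ball_pos volume _ one_pos).ne'
  obtain ⟨ω, hω⟩ : ∃ ω, ω = (volume (ball (0 : Euc N) 1)).toReal := ⟨_, rfl⟩
  have hω0 : 0 < ω := hω ▸ ENNReal.toReal_pos hV0 hV
  have hωV : volume (ball (0 : Euc N) 1) = ENNReal.ofReal ω := by
    rw [hω, ENNReal.ofReal_toReal hV]
  refine ⟨(2 ^ (L * β + 1)) ^ θ * (1 / ((L - K) * s)) ^ γ *
    ((2 ^ ((N : ℝ) - L * β) / ((N : ℝ) - L * β) * ω) ^ θ * ω ^ (1 - θ)), by positivity, ?_⟩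
  intro μ hμ x r hr
  obtain ⟨ν, hν⟩ : ∃ ν, ν = μ.restrict (ball x (2 * r)) := ⟨_, rfl⟩
  have : SFinite ν := hν ▸ inferInstance
  have hνuniv : ν univ = μ (ball x (2 * r)) := by rw [hν, Measure.restrict_apply_univ]
  let G : Euc N → ℝ≥0∞ := fun y =>
    ∫⁻ σ in Ioo 0 (2 * r), ν (ball y σ) ^ β * ENNReal.ofReal (σ ^ (-(L * β) - 1))
  have hGmeas : Measurable G := by
    have : Measurable fun q : Euc N × ℝ =>
        ν (ball q.1 q.2) ^ β * ENNReal.ofReal (q.2 ^ (-(L * β) - 1)) :=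
      ((measurable_measure_ball_s14 ν).pow_const β).mul (by fun_prop)
    exact this.lintegral_prod_right'
  have hpt : ∀ y ∈ ball x r, wolff α p (ENNReal.ofReal r) μ y ^ γ ≤
      ENNReal.ofReal ((2 ^ (L * β + 1)) ^ θ * (r ^ ((L - K) * s) / ((L - K) * s)) ^ γ) *
        G y ^ θ := by
    intro y hy
    have hset : {ρ : ℝ | 0 < ρ ∧ ENNReal.ofReal ρ < ENNReal.ofReal r} = Ioo 0 r := by
      ext ρ
      simp [ENNReal.ofReal_lt_ofReal_iff hr]
    have hw : wolff α p (ENNReal.ofReal r) μ y =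
        ∫⁻ ρ in Ioo 0 r, (ν (ball y ρ) / ENNReal.ofReal (ρ ^ K)) ^ s / ENNReal.ofReal ρ := by
      rw [wolff, hset, ← hK, ← hs]
      refine setLIntegral_congr_fun measurableSet_Ioo fun ρ hρ => ?_
      have hsub : ball y ρ ⊆ ball x (2 * r) :=
        ball_subset_ball' (by linarith [hρ.2, mem_ball.1 hy])
      simp only [hν, Measure.restrict_eq_self μ hsub]
    have hbound : ∀ ρ ∈ Ioo 0 r, ν (ball y ρ) * ENNReal.ofReal (ρ ^ (-L)) ≤
        (ENNReal.ofReal (2 ^ (L * β + 1)) * G y) ^ (1 / β) := by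
      intro ρ hρ
      rw [one_div, ENNReal.le_rpow_inv_iff hβ0]
      exact rpow_le_mul_lintegral_of_monotone (m := fun ρ => ν (ball y ρ))
        (fun a b hab => measure_mono (ball_subset_ball hab)) hL0.le hβ0 hρ.1 hρ.2
    have hexp : 1 / β * (s * γ) = θ := by rw [hθ]; ring
    rw [hw]
    refine (ENNReal.rpow_le_rpow (lintegral_wolff_integrand_le hs0 hKL hr hbound)
      hγ0.le).trans (le_of_eq ?_)
    rw [ENNReal.mul_rpow_of_nonneg _ _ hγ0.le, ← ENNReal.rpow_mul, ← ENNReal.rpow_mul, hexp,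
      ENNReal.mul_rpow_of_nonneg _ _ hθ0.le, ENNReal.ofReal_rpow_of_pos (by positivity),
      ENNReal.ofReal_rpow_of_pos (by positivity), ENNReal.ofReal_mul (by positivity)]
    ring
  have hG : ∫⁻ y in ball x r, G y ≤
      ENNReal.ofReal ((2 * r) ^ ((N : ℝ) - L * β) / ((N : ℝ) - L * β) * ω) *
        ν univ ^ β := by
    refine (setLIntegral_le_lintegral _ _).trans
      ((lintegral_lintegral_rpow_measure_ball_le ν hβ1 hLβ (by positivity)).trans (le_of_eq ?_))
    rw [hωV, ENNReal.ofReal_mul (by positivity)]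
  have hball : volume (ball x r) = ENNReal.ofReal (r ^ N * ω) := by
    rw [Measure.addHaar_ball_of_pos _ _ hr, hωV, ENNReal.ofReal_mul (by positivity)]
    simp
  calc ∫⁻ y in ball x r, wolff α p (ENNReal.ofReal r) μ y ^ γ
      ≤ ∫⁻ y in ball x r, ENNReal.ofReal ((2 ^ (L * β + 1)) ^ θ *
          (r ^ ((L - K) * s) / ((L - K) * s)) ^ γ) * G y ^ θ :=
        setLIntegral_mono' measurableSet_ball hpt
    _ = ENNReal.ofReal ((2 ^ (L * β + 1)) ^ θ * (r ^ ((L - K) * s) / ((L - K) * s)) ^ γ) *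
          ∫⁻ y in ball x r, G y ^ θ := lintegral_const_mul _ (hGmeas.pow_const θ)
    _ ≤ ENNReal.ofReal ((2 ^ (L * β + 1)) ^ θ * (r ^ ((L - K) * s) / ((L - K) * s)) ^ γ) *
          ((ENNReal.ofReal ((2 * r) ^ ((N : ℝ) - L * β) / ((N : ℝ) - L * β) * ω) *
            ν univ ^ β) ^ θ * ENNReal.ofReal (r ^ N * ω) ^ (1 - θ)) := by
        refine mul_le_mul_right ((lintegral_rpow_le_rpow_lintegral _ hGmeas.aemeasurable
          hθ0 hθ1).trans ?_) _
        rw [Measure.restrict_apply_univ, hball]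
        exact mul_le_mul_left (ENNReal.rpow_le_rpow hG hθ0.le) _
    _ = _ := by
        have hst : 0 ≤ s * γ := (mul_pos hs0 hγ0).le
        rw [hνuniv, ENNReal.mul_rpow_of_nonneg _ _ hθ0.le, ← ENNReal.rpow_mul, hβθ,
          ENNReal.ofReal_rpow_of_pos (by positivity), ENNReal.ofReal_rpow_of_pos (by positivity),
          div_eq_mul_inv (μ _), ← ENNReal.ofReal_inv_of_pos (by positivity),
          ENNReal.mul_rpow_of_nonneg _ _ hst, ENNReal.ofReal_rpow_of_pos (by positivity),
          mul_right_comm (ENNReal.ofReal _) (μ _ ^ _), ← mul_assoc,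
          mul_left_comm (ENNReal.ofReal _) (μ _ ^ _), mul_comm (μ _ ^ _),
          ← ENNReal.ofReal_mul (by positivity), ← ENNReal.ofReal_mul (by positivity),
          ← ENNReal.ofReal_mul (by positivity)]
        congr 2
        have hr1 : (r ^ ((L - K) * s) / ((L - K) * s)) ^ γ =
            r ^ ((L - K) * s * γ) * (1 / ((L - K) * s)) ^ γ := by
          rw [div_eq_mul_one_div, Real.mul_rpow (by positivity) (by positivity),
            ← Real.rpow_mul hr.le]
        have hr2 : ((2 * r) ^ ((N : ℝ) - L * β) / ((N : ℝ) - L * β) * ω) ^ θ =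
            r ^ (((N : ℝ) - L * β) * θ) *
              (2 ^ ((N : ℝ) - L * β) / ((N : ℝ) - L * β) * ω) ^ θ := by
          rw [Real.rpow_mul hr.le, ← Real.mul_rpow (by positivity) (by positivity),
            Real.mul_rpow (by norm_num) hr.le]
          ring_nf
        have hr3 : (r ^ N * ω) ^ (1 - θ) = r ^ ((N : ℝ) * (1 - θ)) * ω ^ (1 - θ) := by
          rw [Real.mul_rpow (by positivity) hω0.le, Real.rpow_mul hr.le, Real.rpow_natCast]
        have hr4 : ((r ^ K)⁻¹) ^ (s * γ) = r ^ (-(K * (s * γ))) := by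
          rw [← Real.rpow_neg hr.le, ← Real.rpow_mul hr.le]
          ring_nf
        have hr5 : r ^ ((L - K) * s * γ) * r ^ (((N : ℝ) - L * β) * θ) *
            r ^ ((N : ℝ) * (1 - θ)) = r ^ N * r ^ (-(K * (s * γ))) := by
          rw [← Real.rpow_add hr, ← Real.rpow_add hr, ← Real.rpow_natCast, ← Real.rpow_add hr]
          congr 1
          linear_combination -L * hβθ
        rw [hr1, hr2, hr3, hr4]
        linear_combination (2 ^ (L * β + 1)) ^ θ * (1 / ((L - K) * s)) ^ γ *
          ((2 ^ ((N : ℝ) - L * β) / ((N : ℝ) - L * β) * ω) ^ θ * ω ^ (1 - θ)) * hr5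
end
end
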